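/- Fix an integer d ≥ 1 and a multi-index κ ∈ ℕ^d. Let P₀ be any element of the finite linear span of the canonical basis vectors Φ_{κ,α}, α ∈ ℕ^d, of the true polyanalytic Fock space H_κ(ℂ^d). Then there exists a constant M = M(d, κ, P₀) > 0 such that for every F in H_κ(ℂ^d) one has inf_{|λ|=1} ‖F − λP₀‖_{γ_d} ≤ M · ‖ |F| − |P₀| ‖_{γ_d}. -/

import Mathlib

open MeasureTheory

/-- The one-dimensional Hermite basis functions
`Φ_{k,n}(z) = (1/√(k! n!)) Σ_{j=0}^{min(k,n)} (−1)^j C(k,j) (n!/(n−j)!) z^{n−j} conj(z)^{k−j}`. -/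
noncomputable def HermitePoly (k n : ℕ) (z : ℂ) : ℂ :=
  (((Real.sqrt ((Nat.factorial k) * (Nat.factorial n)) : ℝ) : ℂ))⁻¹ *
    ∑ j ∈ Finset.range (min k n + 1),
      (-1 : ℂ) ^ j * (Nat.choose k j : ℂ) * (Nat.descFactorial n j : ℂ) *
        z ^ (n - j) * (starRingEnd ℂ z) ^ (k - j)

/-- The `d`-dimensional basis `Φ_{κ,α}(z) = Π_q Φ_{κ_q, α_q}(z_q)`. -/
noncomputable def PhiBasis {d : ℕ} (κ α : Fin d → ℕ) (z : Fin d → ℂ) : ℂ :=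
  ∏ q : Fin d, HermitePoly (κ q) (α q) (z q)

/-- A finite linear combination of the canonical basis vectors `Φ_{κ,α}`,
indexed by a finitely supported coefficient family. -/
noncomputable def trueHermitePoly {d : ℕ} (κ : Fin d → ℕ)
    (F : (Fin d → ℕ) →₀ ℂ) (z : Fin d → ℂ) : ℂ :=
  F.sum fun α c => c * PhiBasis κ α z

/-- The Gaussian norm on `ℂ^d`:
`‖F‖_{γ_d}² = (1/π^d) ∫_{ℂ^d} ‖F(z)‖² e^{−Σ_q |z_q|²} dm(z)`. -/
noncomputable def gammaNormD (d : ℕ) {E : Type*} [NormedAddCommGroup E]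
    (F : (Fin d → ℂ) → E) : ℝ :=
  Real.sqrt ((1 / Real.pi ^ d) *
    ∫ z : Fin d → ℂ, ‖F z‖ ^ 2 * Real.exp (-∑ q, ‖z q‖ ^ 2))

namespace HPR

local notation "cj" => starRingEnd ℂ

/-- Unnormalised Hermite polynomial in two independent variables. -/
noncomputable def Hu (k n : ℕ) (x y : ℂ) : ℂ :=
  ∑ j ∈ Finset.range (k + 1),
      (-1 : ℂ) ^ j * (Nat.choose k j : ℂ) * (Nat.descFactorial n j : ℂ) *
        x ^ (n - j) * y ^ (k - j)

lemma Hu_eq_min (k n : ℕ) (x y : ℂ) : Hu k n x y = ∑ j ∈ Finset.range (min k n + 1),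
      (-1 : ℂ) ^ j * (Nat.choose k j : ℂ) * (Nat.descFactorial n j : ℂ) *
        x ^ (n - j) * y ^ (k - j) := by
  unfold Hu
  symm
  apply Finset.sum_subset
  · intro j hj
    simp at hj ⊢
    omega
  · intro j hj hj'
    simp at hj hj'
    have : n < j := by omega
    simp [Nat.descFactorial_of_lt this]

/-- normalising constant -/
noncomputable def nc (k n : ℕ) : ℝ := (Real.sqrt ((Nat.factorial k) * (Nat.factorial n)))⁻¹

lemma nc_pos (k n : ℕ) : 0 < nc k n := by
  unfold nc
  have h1 : (0:ℝ) < (Nat.factorial k) := by positivity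
  have h2 : (0:ℝ) < (Nat.factorial n) := by positivity
  positivity

lemma nc_sq (k n : ℕ) : (nc k n)^2 * ((Nat.factorial k) * (Nat.factorial n)) = 1 := by
  unfold nc
  have h1 : (0:ℝ) < (Nat.factorial k) := by positivity
  have h2 : (0:ℝ) < (Nat.factorial n) := by positivity
  rw [inv_pow, Real.sq_sqrt (by positivity)]
  field_simp

lemma nc_le (k n : ℕ) : nc k n ≤ (Real.sqrt (Nat.factorial n))⁻¹ := by
  unfold nc
  apply inv_anti₀
  · have h2 : (0:ℝ) < (Nat.factorial n) := by positivity
    positivity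
  · apply Real.sqrt_le_sqrt
    have : (1:ℝ) ≤ (Nat.factorial k) := by exact_mod_cast Nat.one_le_iff_ne_zero.2 (Nat.factorial_ne_zero k)
    have h2 : (0:ℝ) < (Nat.factorial n) := by positivity
    nlinarith

/-- two-variable Hermite polynomial, normalised -/
noncomputable def H2 (k n : ℕ) (x y : ℂ) : ℂ := (nc k n : ℂ) * Hu k n x y

lemma HermitePoly_eq (k n : ℕ) (z : ℂ) : HermitePoly k n z = H2 k n z (starRingEnd ℂ z) := by
  unfold HermitePoly H2 nc
  rw [Hu_eq_min]
  push_cast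
  rfl

lemma Hu_zero (n : ℕ) (x y : ℂ) : Hu 0 n x y = x ^ n := by simp [Hu]

lemma Hu_succ (k n : ℕ) (x y : ℂ) : Hu (k+1) n x y = y * Hu k n x y - n * Hu k (n-1) x y := by
  have e1 : y * Hu k n x y = ∑ j ∈ Finset.range (k + 2),
      (-1 : ℂ) ^ j * (Nat.choose k j : ℂ) * (Nat.descFactorial n j : ℂ) *
        x ^ (n - j) * y ^ (k + 1 - j) := by
    rw [Finset.sum_range_succ _ (k+1)]
    simp only [Nat.choose_succ_self, Nat.cast_zero, mul_zero, zero_mul, add_zero]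
    unfold Hu
    rw [Finset.mul_sum]
    apply Finset.sum_congr rfl
    intro j hj
    have hj' : j ≤ k := by simpa [Nat.lt_succ_iff] using hj
    rw [Nat.sub_add_comm hj', pow_succ]
    ring
  have e2 : (n:ℂ) * Hu k (n-1) x y = - ∑ j ∈ Finset.range (k + 1),
      (-1 : ℂ) ^ (j+1) * (Nat.choose k j : ℂ) * (Nat.descFactorial n (j+1) : ℂ) *
        x ^ (n - (j+1)) * y ^ (k + 1 - (j+1)) := by
    unfold Hu
    rw [Finset.mul_sum, ← Finset.sum_neg_distrib]
    apply Finset.sum_congr rfl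
    intro j hj
    have h1 : (Nat.descFactorial n (j+1) : ℂ) = n * Nat.descFactorial (n-1) j := by
      cases n with
      | zero => simp
      | succ m => rw [Nat.succ_descFactorial_succ]; push_cast; simp
    rw [h1, show n - (j+1) = n - 1 - j by omega, show k + 1 - (j+1) = k - j by omega]
    ring
  rw [e1, e2]
  unfold Hu
  rw [Finset.sum_range_succ', Finset.sum_range_succ' _ (k+1), sub_neg_eq_add, add_right_comm,
    ← Finset.sum_add_distrib]
  congr 1
  · apply Finset.sum_congr rfl
    intro j hj
    rw [Nat.choose_succ_succ]
    push_cast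
    ring
  · simp

lemma Hu_euler (k n : ℕ) (x y : ℂ) :
    ((n:ℂ) - k) * Hu k n x y = n * x * Hu k (n-1) x y - k * y * Hu (k-1) n x y := by
  have e1 : (k:ℂ) * y * Hu (k-1) n x y = ∑ j ∈ Finset.range (k + 1),
      ((k:ℂ) - j) * ((-1 : ℂ) ^ j * (Nat.choose k j : ℂ) * (Nat.descFactorial n j : ℂ) *
        x ^ (n - j) * y ^ (k - j)) := by
    rw [Finset.sum_range_succ]
    simp only [sub_self, zero_mul, add_zero]
    cases k with
    | zero => simp
    | succ m =>
      unfold Hu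
      rw [Finset.mul_sum, Nat.add_sub_cancel]
      apply Finset.sum_congr rfl
      intro j hj
      have hj' : j ≤ m := by simpa [Nat.lt_succ_iff] using hj
      have h1 : ((m+1:ℕ):ℂ) * (Nat.choose m j : ℂ) = (((m+1:ℕ):ℂ) - j) * (Nat.choose (m+1) j) := by
        have := Nat.choose_mul_succ_eq m j
        have h2 : ((m + 1 - j : ℕ) : ℂ) = ((m+1:ℕ):ℂ) - j := by
          rw [Nat.cast_sub (by omega)]
        rw [← h2]
        exact_mod_cast (by rw [mul_comm, this, mul_comm])
      rw [show m + 1 - j = (m - j) + 1 by omega, pow_succ]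
      linear_combination ((-1 : ℂ) ^ j * (Nat.descFactorial n j : ℂ) *
        x ^ (n - j) * y ^ (m - j) * y) * h1
  have e2 : (n:ℂ) * x * Hu k (n-1) x y = ∑ j ∈ Finset.range (k + 1),
      ((n:ℂ) - j) * ((-1 : ℂ) ^ j * (Nat.choose k j : ℂ) * (Nat.descFactorial n j : ℂ) *
        x ^ (n - j) * y ^ (k - j)) := by
    unfold Hu
    rw [Finset.mul_sum]
    apply Finset.sum_congr rfl
    intro j hj
    rcases lt_trichotomy j n with h | h | h
    · have h1 : (n:ℂ) * (Nat.descFactorial (n-1) j : ℂ) = ((n:ℂ) - j) * Nat.descFactorial n j := by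
        have h2 : ((n - j : ℕ) : ℂ) = (n:ℂ) - j := by rw [Nat.cast_sub (by omega)]
        rw [← h2]
        have h3 := Nat.descFactorial_succ n j
        obtain ⟨m, rfl⟩ : ∃ m, n = m + 1 := ⟨n-1, by omega⟩
        rw [Nat.succ_descFactorial_succ] at h3
        exact_mod_cast h3
      rw [show n - j = (n - 1 - j) + 1 by omega, pow_succ]
      linear_combination ((-1 : ℂ) ^ j * (Nat.choose k j : ℂ) *
        x ^ (n - 1 - j) * y ^ (k - j) * x) * h1
    · subst h
      cases j with
      | zero => simp
      | succ m => simp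
    · simp [Nat.descFactorial_of_lt h, Nat.descFactorial_of_lt (show n - 1 < j by omega)]
  rw [e1, e2, ← Finset.sum_sub_distrib]
  unfold Hu
  rw [Finset.mul_sum]
  apply Finset.sum_congr rfl
  intro j hj
  ring

lemma Hu_three (k n : ℕ) (x y : ℂ) :
    ((n:ℂ) - k - x * y) * Hu k n x y = - x * Hu (k+1) n x y - k * y * Hu (k-1) n x y := by
  rw [Hu_succ]
  linear_combination Hu_euler k n x y

lemma nc_succ (k n : ℕ) : Real.sqrt (k+1) * nc (k+1) n = nc k n := by
  unfold nc
  have h1 : (0:ℝ) < (Nat.factorial k) := by positivity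
  have h2 : (0:ℝ) < (Nat.factorial n) := by positivity
  rw [Nat.factorial_succ]
  push_cast
  rw [mul_assoc, Real.sqrt_mul (by positivity), mul_inv, ← mul_assoc, mul_inv_cancel₀ (by positivity), one_mul]

lemma H2_three (k n : ℕ) (x y : ℂ) :
    ((n:ℂ) - k - x * y) * H2 k n x y =
      - x * ((Real.sqrt (k+1) : ℝ) : ℂ) * H2 (k+1) n x y
        - y * ((Real.sqrt k : ℝ) : ℂ) * H2 (k-1) n x y := by
  unfold H2
  have h1 : ((Real.sqrt (k+1) : ℝ) : ℂ) * (nc (k+1) n : ℂ) = nc k n := by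
    exact_mod_cast nc_succ k n
  have h2 : ((Real.sqrt k : ℝ) : ℂ) * (nc (k-1) n : ℂ) = k * nc k n := by
    cases k with
    | zero => simp
    | succ m =>
      have := nc_succ m n
      simp only [Nat.add_sub_cancel]
      rw [← this]
      have h3 : Real.sqrt ((m+1:ℕ):ℝ) * (Real.sqrt ((m:ℝ)+1) * nc (m+1) n) = (m+1:ℕ) * nc (m+1) n := by
        push_cast
        rw [← mul_assoc, Real.mul_self_sqrt (by positivity)]
      exact_mod_cast h3
  linear_combination (nc k n : ℂ) * Hu_three k n x y + x * Hu (k+1) n x y * h1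
    + y * Hu (k-1) n x y * h2

lemma H2_scale (k n : ℕ) (x y u v : ℂ) (h : u * v = 1) :
    u ^ k * H2 k n (u * x) (v * y) = u ^ n * H2 k n x y := by
  unfold H2
  rw [Hu_eq_min, Hu_eq_min, Finset.mul_sum, Finset.mul_sum, Finset.mul_sum, Finset.mul_sum]
  apply Finset.sum_congr rfl
  intro j hj
  simp at hj
  have e : u ^ k * u ^ (n - j) * v ^ (k - j) = u ^ n := by
    have : u ^ k = u ^ (k - j) * u ^ j := by rw [← pow_add]; congr 1; omega
    have h2 : u ^ n = u ^ (n - j) * u ^ j := by rw [← pow_add]; congr 1; omega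
    have h3 : u ^ (k - j) * v ^ (k-j) = 1 := by rw [← mul_pow, h, one_pow]
    rw [this, h2]
    linear_combination (u ^ (n-j) * u ^ j) * h3
  rw [mul_pow, mul_pow]
  linear_combination ((nc k n : ℂ) * ((-1 : ℂ) ^ j * (Nat.choose k j : ℂ) * (Nat.descFactorial n j : ℂ) *
        x ^ (n - j) * y ^ (k - j))) * e

lemma H2_conj (k n : ℕ) (x y : ℂ) : starRingEnd ℂ (H2 k n x y) =
    H2 k n (starRingEnd ℂ x) (starRingEnd ℂ y) := by
  simp [H2, Hu, map_sum]

lemma H2_bound (k n : ℕ) (x y : ℂ) (ρ : ℝ) (h1 : 1 ≤ ρ) (hx : ‖x‖ ≤ ρ) (hy : ‖y‖ ≤ ρ) :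
    ‖H2 k n x y‖ ≤ ρ ^ k * ((ρ * 2 ^ k) ^ n * (Real.sqrt (Nat.factorial n))⁻¹) := by
  unfold H2
  have h2 : ‖Hu k n x y‖ ≤ ρ ^ k * (ρ * 2 ^ k) ^ n := by
    calc ‖Hu k n x y‖ ≤ ∑ j ∈ Finset.range (k+1), (ρ^(n+k)) * (n^j * 1 ^(k-j) * (Nat.choose k j)) := by
          unfold Hu
          apply norm_sum_le_of_le
          intro j hj
          simp only [norm_mul, norm_pow, norm_neg, norm_one, one_pow, one_mul, Complex.norm_natCast]
          have a1 : ‖x‖^(n-j) * ‖y‖^(k-j) ≤ ρ^(n+k) := by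
            calc ‖x‖^(n-j) * ‖y‖^(k-j) ≤ ρ^(n-j) * ρ^(k-j) := by gcongr
              _ = ρ ^ ((n-j)+(k-j)) := by rw [pow_add]
              _ ≤ _ := pow_le_pow_right₀ h1 (by omega)
          have a2 : (Nat.descFactorial n j : ℝ) ≤ n^j := by exact_mod_cast Nat.descFactorial_le_pow n j
          calc (Nat.choose k j : ℝ) * (Nat.descFactorial n j) * ‖x‖^(n-j) * ‖y‖^(k-j)
              = (‖x‖^(n-j) * ‖y‖^(k-j)) * ((Nat.descFactorial n j) * (Nat.choose k j : ℝ)) := by ring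
            _ ≤ (ρ^(n+k)) * (n^j * (Nat.choose k j)) := by gcongr
            _ = _ := by ring
      _ = ρ^(n+k) * ((n:ℝ) + 1)^k := by
          rw [← Finset.mul_sum, add_pow]
      _ ≤ ρ^(n+k) * ((2:ℝ)^n)^k := by
          gcongr
          have : n + 1 ≤ 2^n := Nat.lt_two_pow_self
          exact_mod_cast this
      _ = _ := by rw [mul_pow, pow_add, ← pow_mul, ← pow_mul, mul_comm n k]; ring
  rw [norm_mul, Complex.norm_real, Real.norm_of_nonneg (nc_pos k n).le]
  calc nc k n * ‖Hu k n x y‖ ≤ (Real.sqrt (Nat.factorial n))⁻¹ * (ρ ^ k * (ρ * 2 ^ k) ^ n) := by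
        gcongr
        exact nc_le k n
    _ = _ := by ring




/-- Gaussian weight as a complex number -/
noncomputable def gw (z : ℂ) : ℂ := ((Real.exp (-‖z‖^2) : ℝ) : ℂ)

lemma mom_norm_integral (m : ℕ) :
    ∫ z : ℂ, ‖z‖^m * Real.exp (-‖z‖^2) = Real.pi * Real.Gamma ((m + 2) / 2) := by
  have h := Complex.integral_rpow_mul_exp_neg_rpow (p := 2) (q := m) (by norm_num)
    (by have : (0:ℝ) ≤ m := by positivity
        linarith)
  simp only [Real.rpow_natCast, Real.rpow_ofNat] at h
  rw [h]
  ring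

lemma mom_norm_integrable (m : ℕ) : Integrable (fun z : ℂ => ‖z‖^m * Real.exp (-‖z‖^2)) := by
  apply Integrable.of_integral_ne_zero
  rw [mom_norm_integral]
  have : 0 < Real.Gamma (((m:ℝ) + 2) / 2) := Real.Gamma_pos_of_pos (by positivity)
  have := Real.pi_pos
  positivity

lemma gw_cont : Continuous gw := by unfold gw; fun_prop

lemma mom_integrable (a b : ℕ) : Integrable (fun z : ℂ => z^a * (cj z)^b * gw z) := by
  refine (mom_norm_integrable (a+b)).mono' ?_ ?_
  · have := gw_cont
    exact (by fun_prop : Continuous _).aestronglyMeasurable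
  · filter_upwards with z
    rw [gw, norm_mul, norm_mul, norm_pow, norm_pow, RCLike.norm_conj, pow_add, Complex.norm_real, Real.norm_of_nonneg (Real.exp_pos _).le]

lemma mom_ne (a b : ℕ) (h : a ≠ b) : ∫ z : ℂ, z^a * (cj z)^b * gw z = 0 := by
  let u : Circle := Circle.exp (Real.pi / ((a:ℝ) - b))
  have hab : ((a:ℝ) - b) ≠ 0 := sub_ne_zero.2 (by exact_mod_cast h)
  have hu : (u:ℂ)^a * (cj (u:ℂ))^b = -1 := by
    have e1 : (u:ℂ) = Complex.exp ((Real.pi / ((a:ℝ) - b) : ℝ) * Complex.I) := by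
      simp [u, Circle.coe_exp]
    have e2 : cj (u:ℂ) = Complex.exp (-((Real.pi / ((a:ℝ) - b) : ℝ) * Complex.I)) := by
      rw [e1, ← Complex.exp_conj]
      simp
    rw [e2, e1, ← Complex.exp_nat_mul, ← Complex.exp_nat_mul, ← Complex.exp_add, ← Complex.exp_pi_mul_I]
    congr 1
    have hab' : ((a:ℂ) - b) ≠ 0 := sub_ne_zero.2 (by exact_mod_cast h)
    push_cast
    field_simp
    ring
  have h1 := (rotation u).measurePreserving.integral_comp
    (rotation u).toHomeomorph.measurableEmbedding (fun z : ℂ => z^a * (cj z)^b * gw z)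
  have h2 : ∀ z : ℂ, ((rotation u) z)^a * (cj ((rotation u) z))^b * gw ((rotation u) z)
      = - (z^a * (cj z)^b * gw z) := by
    intro z
    have : gw ((rotation u) z) = gw z := by rw [gw, LinearIsometryEquiv.norm_map, gw]
    rw [this, rotation_apply, map_mul, mul_pow, mul_pow]
    linear_combination (z^a * (cj z)^b * gw z) * hu
  simp_rw [h2, integral_neg] at h1
  linear_combination (-1/2 : ℂ) * h1

lemma mom_eq (a : ℕ) : ∫ z : ℂ, z^a * (cj z)^a * gw z = Real.pi * (Nat.factorial a) := by
  have h : ∀ z : ℂ, z^a * (cj z)^a * gw z = ((‖z‖^(2*a) * Real.exp (-‖z‖^2) : ℝ) : ℂ) := by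
    intro z
    rw [← mul_pow, Complex.mul_conj, Complex.normSq_eq_norm_sq, gw, pow_mul]
    push_cast
    rfl
  simp_rw [h]
  rw [integral_complex_ofReal, mom_norm_integral]
  rw [show (((2 * a : ℕ) : ℝ) + 2)/2 = (a:ℝ) + 1 by push_cast; ring, Real.Gamma_nat_eq_factorial]
  push_cast
  rfl

lemma mom (a b : ℕ) : ∫ z : ℂ, z^a * (cj z)^b * gw z =
    if a = b then (Real.pi * (Nat.factorial b) : ℂ) else 0 := by
  split_ifs with h
  · subst h; exact mom_eq a
  · exact mom_ne a b h

lemma Hu_mom_integrable (k n p q : ℕ) :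
    Integrable (fun z : ℂ => Hu k n z (cj z) * z^p * (cj z)^q * gw z) := by
  have : (fun z : ℂ => Hu k n z (cj z) * z^p * (cj z)^q * gw z) = fun z =>
      ∑ j ∈ Finset.range (k+1), ((-1 : ℂ) ^ j * (Nat.choose k j : ℂ) * (Nat.descFactorial n j : ℂ)) *
        (z^(n-j+p) * (cj z)^(k-j+q) * gw z) := by
    funext z
    unfold Hu
    rw [Finset.sum_mul, Finset.sum_mul, Finset.sum_mul]
    apply Finset.sum_congr rfl
    intro j _
    ring
  rw [this]
  apply integrable_finsetSum
  intro j _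
  exact (mom_integrable _ _).const_mul _

lemma Hu_mom (k : ℕ) : ∀ n p q : ℕ, ∫ z : ℂ, Hu k n z (cj z) * z^p * (cj z)^q * gw z =
    Real.pi * (Nat.descFactorial p k : ℂ) * (if n + p = k + q then (Nat.factorial q : ℂ) else 0) := by
  induction k with
  | zero =>
    intro n p q
    simp_rw [Hu_zero, ← pow_add]
    rw [mom]
    simp
  | succ k ih =>
    intro n p q
    have e : ∀ z : ℂ, Hu (k+1) n z (cj z) * z^p * (cj z)^q * gw z =
      Hu k n z (cj z) * z^p * (cj z)^(q+1) * gw z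
        - n * (Hu k (n-1) z (cj z) * z^p * (cj z)^q * gw z) := by
      intro z
      rw [Hu_succ]
      ring
    simp_rw [e]
    rw [integral_sub (Hu_mom_integrable _ _ _ _) ((Hu_mom_integrable _ _ _ _).const_mul _),
      integral_const_mul, ih, ih, Nat.descFactorial_succ]
    by_cases hpk : p < k
    · simp [Nat.descFactorial_of_lt hpk]
    push Not at hpk
    have hc : ((p - k : ℕ) : ℂ) = (p:ℂ) - k := by rw [Nat.cast_sub hpk]
    push_cast
    rw [hc]
    by_cases h : n + p = k + (q+1)
    · rw [if_pos h, if_pos (show n + p = k + 1 + q by omega), Nat.factorial_succ]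
      have h' : (n:ℂ) + p = k + (q+1) := by exact_mod_cast h
      cases n with
      | zero =>
        push_cast at h' ⊢
        linear_combination (-1:ℂ) * Real.pi * (Nat.descFactorial p k) * (Nat.factorial q) * h'
      | succ n =>
        rw [if_pos (by omega)]
        push_cast at h' ⊢
        linear_combination (-1:ℂ) * Real.pi * (Nat.descFactorial p k) * (Nat.factorial q) * h'
    · rw [if_neg h, if_neg (show ¬ n + p = k + 1 + q by omega)]
      cases n with
      | zero => simp
      | succ n =>
        rw [if_neg (by omega)]
        simp

lemma Hu_orth (k n m : ℕ) : ∫ z : ℂ, Hu k n z (cj z) * cj (Hu k m z (cj z)) * gw z =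
    if n = m then (Real.pi * (Nat.factorial k) * (Nat.factorial n) : ℂ) else 0 := by
  have e : ∀ z : ℂ, Hu k n z (cj z) * cj (Hu k m z (cj z)) * gw z =
      ∑ j ∈ Finset.range (k+1), ((-1 : ℂ) ^ j * (Nat.choose k j : ℂ) * (Nat.descFactorial m j : ℂ)) *
        (Hu k n z (cj z) * z^(k-j) * (cj z)^(m-j) * gw z) := by
    intro z
    have : cj (Hu k m z (cj z)) = ∑ j ∈ Finset.range (k+1), ((-1 : ℂ) ^ j * (Nat.choose k j : ℂ) *
        (Nat.descFactorial m j : ℂ)) * (z^(k-j) * (cj z)^(m-j)) := by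
      simp only [Hu, map_sum, map_mul, map_pow, map_neg, map_one, Complex.conj_conj, map_natCast]
      apply Finset.sum_congr rfl
      intro j _
      ring
    rw [this, Finset.mul_sum, Finset.sum_mul]
    apply Finset.sum_congr rfl
    intro j _
    ring
  simp_rw [e]
  rw [integral_finsetSum _ (fun j _ => (Hu_mom_integrable _ _ _ _).const_mul _)]
  rw [Finset.sum_eq_single 0]
  · rw [integral_const_mul, Hu_mom]
    by_cases h : n = m
    · subst h
      simp [Nat.descFactorial_self, add_comm]
    · rw [if_neg (by omega), if_neg h]; simp
  · intro j hj hj0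
    rw [integral_const_mul, Hu_mom]
    simp at hj
    rw [Nat.descFactorial_of_lt (show k - j < k by omega)]
    simp
  · simp

lemma H2_orth (k n m : ℕ) : ∫ z : ℂ, H2 k n z (cj z) * cj (H2 k m z (cj z)) * gw z =
    if n = m then (Real.pi : ℂ) else 0 := by
  have e : ∀ z : ℂ, H2 k n z (cj z) * cj (H2 k m z (cj z)) * gw z =
    (nc k n * nc k m : ℂ) * (Hu k n z (cj z) * cj (Hu k m z (cj z)) * gw z) := by
    intro z
    simp only [H2, map_mul, Complex.conj_ofReal]
    ring
  simp_rw [e]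
  rw [integral_const_mul, Hu_orth]
  split_ifs with h
  · subst h
    have := nc_sq k n
    have h2 : (nc k n : ℂ)^2 * ((Nat.factorial k) * (Nat.factorial n)) = 1 := by exact_mod_cast this
    linear_combination (Real.pi : ℂ) * h2
  · simp

lemma H2_integrable (k n m : ℕ) :
    Integrable (fun z : ℂ => H2 k n z (cj z) * cj (H2 k m z (cj z)) * gw z) := by
  have e : (fun z : ℂ => H2 k n z (cj z) * cj (H2 k m z (cj z)) * gw z) = fun z =>
      ∑ j ∈ Finset.range (k+1), ((nc k n : ℂ) * nc k m * ((-1 : ℂ) ^ j * (Nat.choose k j : ℂ) * (Nat.descFactorial m j : ℂ))) *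
        (Hu k n z (cj z) * z^(k-j) * (cj z)^(m-j) * gw z) := by
    funext z
    have : cj (H2 k m z (cj z)) = ∑ j ∈ Finset.range (k+1), (nc k m : ℂ) * ((-1 : ℂ) ^ j * (Nat.choose k j : ℂ) *
        (Nat.descFactorial m j : ℂ)) * (z^(k-j) * (cj z)^(m-j)) := by
      simp only [H2, Hu, map_sum, map_mul, map_pow, map_neg, map_one, Complex.conj_conj, map_natCast,
        Finset.mul_sum, Complex.conj_ofReal]
      apply Finset.sum_congr rfl
      intro j _
      ring
    rw [this, Finset.mul_sum, Finset.sum_mul]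
    apply Finset.sum_congr rfl
    intro j _
    simp only [H2]
    ring
  rw [e]
  apply integrable_finsetSum
  intro j _
  exact (Hu_mom_integrable _ _ _ _).const_mul _




/-- squared Euclidean norm -/
noncomputable def nsq {d : ℕ} (z : Fin d → ℂ) : ℝ := ∑ q, ‖z q‖ ^ 2

lemma nsq_nonneg {d : ℕ} (z : Fin d → ℂ) : 0 ≤ nsq z := by unfold nsq; positivity

lemma nsq_cont {d : ℕ} : Continuous (nsq : (Fin d → ℂ) → ℝ) := by unfold nsq; fun_prop

/-- density of the Gaussian -/
noncomputable def dens (d : ℕ) (z : Fin d → ℂ) : ℝ := (1 / Real.pi ^ d) * Real.exp (- nsq z)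

lemma dens_pos (d : ℕ) (z : Fin d → ℂ) : 0 < dens d z := by
  unfold dens
  have := Real.pi_pos
  positivity

lemma dens_cont (d : ℕ) : Continuous (dens d) := by
  unfold dens
  have := nsq_cont (d := d)
  fun_prop

/-- Gaussian measure -/
noncomputable def gam (d : ℕ) : Measure (Fin d → ℂ) :=
  volume.withDensity (fun z => ENNReal.ofReal (dens d z))

lemma gam_ac (d : ℕ) : gam d ≪ volume := withDensity_absolutelyContinuous _ _

lemma ac_gam (d : ℕ) : (volume : Measure (Fin d → ℂ)) ≪ gam d := by
  apply withDensity_absolutelyContinuous'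
  · exact (dens_cont d).measurable.ennreal_ofReal.aemeasurable
  · filter_upwards with z
    simp [dens_pos]

lemma integral_gam {E : Type*} [NormedAddCommGroup E] [NormedSpace ℝ E] (d : ℕ)
    (f : (Fin d → ℂ) → E) : ∫ z, f z ∂(gam d) = ∫ z, dens d z • f z := by
  unfold gam
  rw [integral_withDensity_eq_integral_toReal_smul (dens_cont d).measurable.ennreal_ofReal
    (by filter_upwards with z; simp)]
  simp [ENNReal.toReal_ofReal (dens_pos d _).le]

lemma integrable_gam {E : Type*} [NormedAddCommGroup E] [NormedSpace ℝ E] (d : ℕ)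
    (f : (Fin d → ℂ) → E) : Integrable f (gam d) ↔ Integrable (fun z => dens d z • f z) := by
  unfold gam
  rw [integrable_withDensity_iff_integrable_smul' (dens_cont d).measurable.ennreal_ofReal
    (by filter_upwards with z; simp)]
  simp [ENNReal.toReal_ofReal (dens_pos d _).le]

lemma gammaNormD_eq (d : ℕ) {E : Type*} [NormedAddCommGroup E]
    (F : (Fin d → ℂ) → E) : gammaNormD d F = Real.sqrt (∫ z, ‖F z‖^2 ∂(gam d)) := by
  unfold gammaNormD
  rw [integral_gam, ← integral_const_mul]
  congr 2
  funext z
  simp only [dens, nsq, smul_eq_mul]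
  ring

lemma Hu_cont (k n : ℕ) : Continuous (fun z : ℂ => Hu k n z (cj z)) := by
  unfold Hu
  fun_prop

lemma PhiBasis_eq {d : ℕ} (κ α : Fin d → ℕ) (z : Fin d → ℂ) :
    PhiBasis κ α z = ∏ q, H2 (κ q) (α q) (z q) (cj (z q)) := by
  unfold PhiBasis
  simp_rw [HermitePoly_eq]

lemma Phi_cont {d : ℕ} (κ α : Fin d → ℕ) : Continuous (PhiBasis κ α) := by
  have : PhiBasis κ α = fun z => ∏ q, H2 (κ q) (α q) (z q) (cj (z q)) := by
    funext z; exact PhiBasis_eq κ α z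
  rw [this]
  apply continuous_finsetProd
  intro q _
  unfold H2
  exact continuous_const.mul ((Hu_cont _ _).comp (continuous_apply q))

lemma Phi_prod_eq {d : ℕ} (κ α β : Fin d → ℕ) (z : Fin d → ℂ) :
    dens d z • (PhiBasis κ α z * cj (PhiBasis κ β z)) =
      (1 / Real.pi ^ d : ℂ) * ∏ q, (H2 (κ q) (α q) (z q) (cj (z q)) * cj (H2 (κ q) (β q) (z q) (cj (z q))) * gw (z q)) := by
  rw [PhiBasis_eq, PhiBasis_eq, Finset.prod_mul_distrib, Finset.prod_mul_distrib, map_prod]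
  have : ∏ q, gw (z q) = ((Real.exp (- nsq z) : ℝ) : ℂ) := by
    unfold gw nsq
    rw [← Complex.ofReal_prod, ← Real.exp_sum, Finset.sum_neg_distrib]
  rw [this, dens, Complex.real_smul]
  push_cast
  ring

lemma Phi_integrable {d : ℕ} (κ α β : Fin d → ℕ) :
    Integrable (fun z => PhiBasis κ α z * cj (PhiBasis κ β z)) (gam d) := by
  rw [integrable_gam]
  simp_rw [Phi_prod_eq]
  apply Integrable.const_mul
  exact Integrable.fintype_prod (f := fun q (z : ℂ) => H2 (κ q) (α q) z (cj z) * cj (H2 (κ q) (β q) z (cj z)) * gw z)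
    (fun q => H2_integrable _ _ _)

lemma Phi_orth {d : ℕ} (κ α β : Fin d → ℕ) :
    ∫ z, PhiBasis κ α z * cj (PhiBasis κ β z) ∂(gam d) = if α = β then 1 else 0 := by
  rw [integral_gam]
  simp_rw [Phi_prod_eq]
  rw [integral_const_mul, integral_fintype_prod_volume_eq_prod
    (f := fun q (z : ℂ) => H2 (κ q) (α q) z (cj z) * cj (H2 (κ q) (β q) z (cj z)) * gw z)]
  simp_rw [H2_orth]
  split_ifs with h
  · subst h
    simp only [if_true, Finset.prod_const, Finset.card_univ, Fintype.card_fin]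
    have : (Real.pi : ℂ) ≠ 0 := by exact_mod_cast Real.pi_ne_zero
    field_simp
  · obtain ⟨q, hq⟩ := Function.ne_iff.1 h
    rw [Finset.prod_eq_zero (Finset.mem_univ q) (by simp [hq])]
    simp

lemma gam_finite (d : ℕ) : IsFiniteMeasure (gam d) := by
  have h := Phi_integrable (d := d) 0 0 0
  have e : (fun z : Fin d → ℂ => PhiBasis 0 0 z * cj (PhiBasis 0 0 z)) = fun _ => (1:ℂ) := by
    funext z
    simp [PhiBasis_eq, H2, Hu, nc]
  rw [e, integrable_const_iff] at h
  simpa using h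

instance (d : ℕ) : IsFiniteMeasure (gam d) := gam_finite d

lemma gam_real_univ (d : ℕ) : (gam d).real Set.univ = 1 := by
  have h := Phi_orth (d := d) 0 0 0
  have e : (fun z : Fin d → ℂ => PhiBasis 0 0 z * cj (PhiBasis 0 0 z)) = fun _ => (1:ℂ) := by
    funext z
    simp [PhiBasis_eq, H2, Hu, nc]
  rw [e, integral_const] at h
  simp only [if_true, Complex.real_smul, mul_one] at h
  exact_mod_cast h

/-- squared l2 norm of coefficients -/
noncomputable def l2 {d : ℕ} (c : (Fin d → ℕ) →₀ ℂ) : ℝ := ∑ α ∈ c.support, ‖c α‖^2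

lemma T_eq {d : ℕ} (κ : Fin d → ℕ) (c : (Fin d → ℕ) →₀ ℂ) (z : Fin d → ℂ) :
    trueHermitePoly κ c z = ∑ α ∈ c.support, c α * PhiBasis κ α z := rfl

lemma T_cont {d : ℕ} (κ : Fin d → ℕ) (c : (Fin d → ℕ) →₀ ℂ) : Continuous (trueHermitePoly κ c) := by
  have : trueHermitePoly κ c = fun z => ∑ α ∈ c.support, c α * PhiBasis κ α z := by
    funext z; rfl
  rw [this]
  exact continuous_finsetSum _ (fun α _ => continuous_const.mul (Phi_cont κ α))

lemma T_sq {d : ℕ} (κ : Fin d → ℕ) (c : (Fin d → ℕ) →₀ ℂ) (z : Fin d → ℂ) :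
    ((‖trueHermitePoly κ c z‖^2 : ℝ) : ℂ) = ∑ α ∈ c.support, ∑ β ∈ c.support,
      (c α * cj (c β)) * (PhiBasis κ α z * cj (PhiBasis κ β z)) := by
  rw [← Complex.normSq_eq_norm_sq, ← Complex.mul_conj, T_eq, map_sum, Finset.sum_mul_sum]
  apply Finset.sum_congr rfl; intro α _
  apply Finset.sum_congr rfl; intro β _
  rw [map_mul]; ring

lemma T_integrable {d : ℕ} (κ : Fin d → ℕ) (c : (Fin d → ℕ) →₀ ℂ) :
    Integrable (fun z => ‖trueHermitePoly κ c z‖^2) (gam d) := by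
  have h : Integrable (fun z => ((‖trueHermitePoly κ c z‖^2 : ℝ) : ℂ)) (gam d) := by
    simp_rw [T_sq]
    refine integrable_finsetSum _ (fun α _ => integrable_finsetSum _ (fun β _ => ?_))
    exact (Phi_integrable κ α β).const_mul _
  exact h.re

lemma T_norm {d : ℕ} (κ : Fin d → ℕ) (c : (Fin d → ℕ) →₀ ℂ) :
    ∫ z, ‖trueHermitePoly κ c z‖^2 ∂(gam d) = l2 c := by
  have h : ((∫ z, ‖trueHermitePoly κ c z‖^2 ∂(gam d) : ℝ) : ℂ) = (l2 c : ℂ) := by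
    rw [← integral_complex_ofReal]
    simp_rw [T_sq]
    rw [integral_finsetSum _ (fun α _ => integrable_finsetSum _ (fun β _ => (Phi_integrable κ α β).const_mul _))]
    unfold l2
    push_cast
    apply Finset.sum_congr rfl
    intro α hα
    rw [integral_finsetSum _ (fun β _ => (Phi_integrable κ α β).const_mul _)]
    simp_rw [integral_const_mul, Phi_orth]
    simp only [mul_ite, mul_one, mul_zero]
    rw [Finset.sum_ite_eq, if_pos hα, Complex.mul_conj, Complex.normSq_eq_norm_sq]
    push_cast; rfl
  exact_mod_cast h

lemma T_memLp {d : ℕ} (κ : Fin d → ℕ) (c : (Fin d → ℕ) →₀ ℂ) :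
    MemLp (trueHermitePoly κ c) 2 (gam d) :=
  (memLp_two_iff_integrable_sq_norm (T_cont κ c).aestronglyMeasurable).2 (T_integrable κ c)

lemma T_sum_superset {d : ℕ} (κ : Fin d → ℕ) (c : (Fin d → ℕ) →₀ ℂ) (z : Fin d → ℂ)
    (s : Finset (Fin d → ℕ)) (hs : c.support ⊆ s) :
    trueHermitePoly κ c z = ∑ α ∈ s, c α * PhiBasis κ α z := by
  rw [T_eq]
  apply Finset.sum_subset hs
  intro α _ h
  simp [Finsupp.notMem_support_iff.1 h]

lemma T_add {d : ℕ} (κ : Fin d → ℕ) (a b : (Fin d → ℕ) →₀ ℂ) (z : Fin d → ℂ) :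
    trueHermitePoly κ (a + b) z = trueHermitePoly κ a z + trueHermitePoly κ b z := by
  unfold trueHermitePoly
  exact Finsupp.sum_add_index' (by simp) (by intros; ring)

lemma T_smul {d : ℕ} (κ : Fin d → ℕ) (t : ℂ) (b : (Fin d → ℕ) →₀ ℂ) (z : Fin d → ℂ) :
    trueHermitePoly κ (t • b) z = t * trueHermitePoly κ b z := by
  unfold trueHermitePoly
  rw [Finsupp.sum_smul_index (by simp), Finsupp.mul_sum]
  simp_rw [mul_assoc]

lemma T_sub {d : ℕ} (κ : Fin d → ℕ) (a b : (Fin d → ℕ) →₀ ℂ) (z : Fin d → ℂ) :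
    trueHermitePoly κ (a - b) z = trueHermitePoly κ a z - trueHermitePoly κ b z := by
  rw [sub_eq_add_neg, T_add, ← neg_one_smul ℂ b, T_smul]; ring

lemma coeff_le {d : ℕ} (c : (Fin d → ℕ) →₀ ℂ) (α : Fin d → ℕ) : ‖c α‖^2 ≤ l2 c := by
  by_cases h : α ∈ c.support
  · exact Finset.single_le_sum (f := fun α => ‖c α‖^2) (fun _ _ => by positivity) h
  · have h0 : 0 ≤ l2 c := by unfold l2; positivity
    rw [Finsupp.notMem_support_iff.1 h]
    simpa using h0

/-- total degree -/
def deg {d : ℕ} (α : Fin d → ℕ) : ℕ := ∑ q, α q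

lemma Phi_rot {d : ℕ} (κ α : Fin d → ℕ) (z : Fin d → ℂ) (u : ℂ) (hu : ‖u‖ = 1) :
    u ^ (deg κ) * PhiBasis κ α (u • z) = u ^ (deg α) * PhiBasis κ α z := by
  rw [PhiBasis_eq, PhiBasis_eq, deg, deg, ← Finset.prod_pow_eq_pow_sum, ← Finset.prod_pow_eq_pow_sum,
    ← Finset.prod_mul_distrib, ← Finset.prod_mul_distrib]
  apply Finset.prod_congr rfl
  intro q _
  simp only [Pi.smul_apply, smul_eq_mul, map_mul]
  apply H2_scale
  rw [Complex.mul_conj, Complex.normSq_eq_norm_sq, hu]; simp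

lemma Phi_three {d : ℕ} (κ α : Fin d → ℕ) (z : Fin d → ℂ) :
    ((deg α : ℂ) - deg κ - (nsq z : ℂ)) * PhiBasis κ α z =
      ∑ q, (- z q * ((Real.sqrt (κ q+1) : ℝ) : ℂ) * PhiBasis (Function.update κ q (κ q + 1)) α z
        - cj (z q) * ((Real.sqrt (κ q) : ℝ) : ℂ) * PhiBasis (Function.update κ q (κ q - 1)) α z) := by
  have e : ((deg α : ℂ) - deg κ - (nsq z : ℂ)) = ∑ q, ((α q : ℂ) - κ q - z q * cj (z q)) := by
    unfold deg nsq
    push_cast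
    rw [Finset.sum_sub_distrib, Finset.sum_sub_distrib]
    congr 1
    apply Finset.sum_congr rfl
    intro q _
    rw [Complex.mul_conj, Complex.normSq_eq_norm_sq]
    push_cast; rfl
  rw [e, Finset.sum_mul]
  apply Finset.sum_congr rfl
  intro q _
  have key : ∀ k', PhiBasis (Function.update κ q k') α z =
      H2 k' (α q) (z q) (cj (z q)) * ∏ i ∈ Finset.univ.erase q, H2 (κ i) (α i) (z i) (cj (z i)) := by
    intro k'
    rw [PhiBasis_eq, ← Finset.mul_prod_erase _ _ (Finset.mem_univ q)]
    congr 1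
    · simp
    · apply Finset.prod_congr rfl
      intro i hi
      rw [Function.update_of_ne (Finset.ne_of_mem_erase hi)]
  have k0 := key (κ q)
  rw [Function.update_eq_self] at k0
  rw [k0, key, key]
  linear_combination (∏ i ∈ Finset.univ.erase q, H2 (κ i) (α i) (z i) (cj (z i))) * H2_three (κ q) (α q) (z q) (cj (z q))

/-- defect of the rotation derivative -/
noncomputable def Sd {d : ℕ} (κ : Fin d → ℕ) (c : (Fin d → ℕ) →₀ ℂ) (z : Fin d → ℂ) : ℂ :=
  ∑ α ∈ c.support, c α * (((deg α : ℂ) - (nsq z : ℂ)) * PhiBasis κ α z)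

lemma Sd_eq {d : ℕ} (κ : Fin d → ℕ) (c : (Fin d → ℕ) →₀ ℂ) (z : Fin d → ℂ) :
    Sd κ c z = (deg κ : ℂ) * trueHermitePoly κ c z +
      ∑ q, (- z q * ((Real.sqrt (κ q+1) : ℝ) : ℂ) * trueHermitePoly (Function.update κ q (κ q + 1)) c z
        - cj (z q) * ((Real.sqrt (κ q) : ℝ) : ℂ) * trueHermitePoly (Function.update κ q (κ q - 1)) c z) := by
  have e : ∀ α, c α * (((deg α : ℂ) - (nsq z : ℂ)) * PhiBasis κ α z) =
      (deg κ : ℂ) * (c α * PhiBasis κ α z) + ∑ q, (- z q * ((Real.sqrt (κ q+1) : ℝ) : ℂ) * (c α * PhiBasis (Function.update κ q (κ q + 1)) α z)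
        - cj (z q) * ((Real.sqrt (κ q) : ℝ) : ℂ) * (c α * PhiBasis (Function.update κ q (κ q - 1)) α z)) := by
    intro α
    have h := Phi_three κ α z
    have h2 : ((deg α : ℂ) - (nsq z : ℂ)) * PhiBasis κ α z = deg κ * PhiBasis κ α z + ((deg α : ℂ) - deg κ - (nsq z : ℂ)) * PhiBasis κ α z := by ring
    rw [h2, h, mul_add, Finset.mul_sum]
    congr 1
    · ring
    · apply Finset.sum_congr rfl
      intro q _
      ring
  unfold Sd
  simp_rw [e, T_eq]
  rw [Finset.sum_add_distrib, Finset.sum_comm, Finset.mul_sum]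
  congr 1
  apply Finset.sum_congr rfl
  intro q _
  rw [Finset.sum_sub_distrib, Finset.mul_sum, Finset.mul_sum]

/-- majorant for the defect -/
noncomputable def Vd {d : ℕ} (κ : Fin d → ℕ) (c : (Fin d → ℕ) →₀ ℂ) (z : Fin d → ℂ) : ℝ :=
  2 * ((deg κ : ℝ)^2 * ‖trueHermitePoly κ c z‖^2) +
    2 * (d * ∑ q, (2 * ((κ q + 1) * ‖trueHermitePoly (Function.update κ q (κ q + 1)) c z‖^2)
      + 2 * (κ q * ‖trueHermitePoly (Function.update κ q (κ q - 1)) c z‖^2)))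

lemma Vd_integrable {d : ℕ} (κ : Fin d → ℕ) (c : (Fin d → ℕ) →₀ ℂ) : Integrable (Vd κ c) (gam d) := by
  unfold Vd
  refine Integrable.add (((T_integrable κ c).const_mul _).const_mul _) ?_
  refine Integrable.const_mul (Integrable.const_mul (integrable_finsetSum _ (fun q _ => ?_)) _) _
  exact (((T_integrable _ c).const_mul _).const_mul _).add (((T_integrable _ c).const_mul _).const_mul _)

/-- constant in the bound for the majorant -/
noncomputable def CV {d : ℕ} (κ : Fin d → ℕ) : ℝ :=
  2 * (deg κ : ℝ)^2 + 2 * (d * ∑ q, (2 * ((κ q : ℝ) + 1) + 2 * κ q))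

lemma CV_nonneg {d : ℕ} (κ : Fin d → ℕ) : 0 ≤ CV κ := by unfold CV; positivity

lemma Vd_integral {d : ℕ} (κ : Fin d → ℕ) (c : (Fin d → ℕ) →₀ ℂ) :
    ∫ z, Vd κ c z ∂(gam d) = CV κ * l2 c := by
  have i2 : ∀ q, Integrable (fun z => (2 * (((κ q : ℝ) + 1) * ‖trueHermitePoly (Function.update κ q (κ q + 1)) c z‖^2)
      + 2 * (κ q * ‖trueHermitePoly (Function.update κ q (κ q - 1)) c z‖^2))) (gam d) := fun q =>
    (((T_integrable _ c).const_mul _).const_mul _).add (((T_integrable _ c).const_mul _).const_mul _)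
  unfold Vd
  rw [integral_add (((T_integrable κ c).const_mul _).const_mul _)
    (Integrable.const_mul (Integrable.const_mul (integrable_finsetSum _ (fun q _ => i2 q)) _) _)]
  rw [integral_const_mul, integral_const_mul, integral_const_mul, integral_const_mul,
    integral_finsetSum _ (fun q _ => i2 q), T_norm]
  have : ∀ q, ∫ z, (2 * (((κ q : ℝ) + 1) * ‖trueHermitePoly (Function.update κ q (κ q + 1)) c z‖^2)
      + 2 * (κ q * ‖trueHermitePoly (Function.update κ q (κ q - 1)) c z‖^2)) ∂(gam d)
      = (2 * ((κ q : ℝ) + 1) + 2 * κ q) * l2 c := by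
    intro q
    rw [integral_add (((T_integrable _ c).const_mul _).const_mul _) (((T_integrable _ c).const_mul _).const_mul _)]
    simp_rw [integral_const_mul, T_norm]
    ring
  simp_rw [this]
  rw [← Finset.sum_mul, CV]
  ring

lemma Sd_le {d : ℕ} (κ : Fin d → ℕ) (c : (Fin d → ℕ) →₀ ℂ) (z : Fin d → ℂ) (hz : 1 ≤ nsq z) :
    ‖Sd κ c z‖^2 ≤ nsq z * Vd κ c z := by
  rw [Sd_eq]
  set A := (deg κ : ℂ) * trueHermitePoly κ c z with hA
  set X : Fin d → ℂ := fun q => - z q * ((Real.sqrt (κ q+1) : ℝ) : ℂ) * trueHermitePoly (Function.update κ q (κ q + 1)) c z with hX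
  set Y : Fin d → ℂ := fun q => cj (z q) * ((Real.sqrt (κ q) : ℝ) : ℂ) * trueHermitePoly (Function.update κ q (κ q - 1)) c z with hY
  have two : ∀ a b : ℂ, ‖a + b‖^2 ≤ 2 * ‖a‖^2 + 2 * ‖b‖^2 := by
    intro a b
    have := norm_add_le a b
    nlinarith [norm_nonneg (a+b), sq_nonneg (‖a‖-‖b‖), norm_nonneg a, norm_nonneg b]
  have hzq : ∀ q, ‖z q‖^2 ≤ nsq z := fun q =>
    Finset.single_le_sum (f := fun q => ‖z q‖^2) (fun _ _ => by positivity) (Finset.mem_univ q)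
  have hXq : ∀ q, ‖X q‖^2 ≤ nsq z * ((κ q + 1) * ‖trueHermitePoly (Function.update κ q (κ q + 1)) c z‖^2) := by
    intro q
    rw [hX]
    simp only [norm_mul, norm_neg, mul_pow, Complex.norm_real, Real.norm_eq_abs, sq_abs]
    rw [Real.sq_sqrt (by positivity), mul_assoc]
    gcongr
    exact hzq q
  have hYq : ∀ q, ‖Y q‖^2 ≤ nsq z * (κ q * ‖trueHermitePoly (Function.update κ q (κ q - 1)) c z‖^2) := by
    intro q
    rw [hY]
    simp only [norm_mul, mul_pow, Complex.norm_real, Real.norm_eq_abs, sq_abs, RCLike.norm_conj]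
    rw [Real.sq_sqrt (by positivity), mul_assoc]
    gcongr
    exact hzq q
  have hsum : ‖∑ q, (X q - Y q)‖^2 ≤ d * ∑ q, ‖X q - Y q‖^2 := by
    calc ‖∑ q, (X q - Y q)‖^2 ≤ (∑ q, ‖X q - Y q‖)^2 := by
          gcongr; exact norm_sum_le _ _
      _ ≤ _ := by
          have := sq_sum_le_card_mul_sum_sq (s := (Finset.univ : Finset (Fin d))) (f := fun q => ‖X q - Y q‖)
          simpa using this
  have hA2 : ‖A‖^2 ≤ nsq z * ((deg κ : ℝ)^2 * ‖trueHermitePoly κ c z‖^2) := by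
    rw [hA, norm_mul, mul_pow, Complex.norm_natCast]
    have : 0 ≤ ((deg κ : ℝ)^2 * ‖trueHermitePoly κ c z‖^2) := by positivity
    nlinarith
  calc ‖A + ∑ q, (X q - Y q)‖^2 ≤ 2 * ‖A‖^2 + 2 * ‖∑ q, (X q - Y q)‖^2 := two _ _
    _ ≤ 2 * ‖A‖^2 + 2 * (d * ∑ q, ‖X q - Y q‖^2) := by gcongr
    _ ≤ 2 * (nsq z * ((deg κ : ℝ)^2 * ‖trueHermitePoly κ c z‖^2)) + 2 * (d * ∑ q, (
        2 * (nsq z * ((κ q + 1) * ‖trueHermitePoly (Function.update κ q (κ q + 1)) c z‖^2)) +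
        2 * (nsq z * (κ q * ‖trueHermitePoly (Function.update κ q (κ q - 1)) c z‖^2)))) := by
        gcongr with q _
        have := two (X q) (- Y q)
        rw [norm_neg, ← sub_eq_add_neg] at this
        linarith [hXq q, hYq q]
    _ = nsq z * Vd κ c z := by
        unfold Vd
        have e : ∀ q, (2 * (nsq z * ((κ q + 1) * ‖trueHermitePoly (Function.update κ q (κ q + 1)) c z‖^2)) +
          2 * (nsq z * (κ q * ‖trueHermitePoly (Function.update κ q (κ q - 1)) c z‖^2))) =
          nsq z * (2 * ((κ q + 1) * ‖trueHermitePoly (Function.update κ q (κ q + 1)) c z‖^2)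
      + 2 * (κ q * ‖trueHermitePoly (Function.update κ q (κ q - 1)) c z‖^2)) := by intro q; ring
        simp_rw [e]
        rw [← Finset.mul_sum]
        ring



/-! ### circle lemma, pointwise part -/

/-- phase of a complex number -/
noncomputable def ph (x : ℂ) : ℂ := if x = 0 then 1 else x / ‖x‖

lemma ph_norm (x : ℂ) : ‖ph x‖ = 1 := by
  unfold ph
  split_ifs with h
  · simp
  · simp [h]

lemma ph_mul (x : ℂ) : (‖x‖ : ℂ) * ph x = x := by
  unfold ph
  split_ifs with h
  · simp [h]
  · have : (‖x‖ : ℂ) ≠ 0 := by simpa using h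
    field_simp

lemma ph_lip (x y : ℂ) (hx : x ≠ 0) : ‖ph y - ph x‖ ≤ 2 * (‖y - x‖ / ‖x‖) := by
  have hx' : 0 < ‖x‖ := norm_pos_iff.2 hx
  have e : (‖x‖ : ℂ) * (ph y - ph x) = (‖x‖ - ‖y‖ : ℂ) * ph y + (y - x) := by
    have h1 := ph_mul x
    have h2 := ph_mul y
    linear_combination h2 - h1
  have h : ‖x‖ * ‖ph y - ph x‖ ≤ 2 * ‖y - x‖ := by
    have h3 : ‖x‖ * ‖ph y - ph x‖ = ‖(‖x‖ : ℂ) * (ph y - ph x)‖ := by simp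
    rw [h3, e]
    refine (norm_add_le _ _).trans ?_
    rw [norm_mul, ph_norm, mul_one]
    have : ‖(‖x‖ - ‖y‖ : ℂ)‖ ≤ ‖y - x‖ := by
      rw [← Complex.ofReal_sub, Complex.norm_real, Real.norm_eq_abs, abs_sub_comm]
      exact abs_norm_sub_norm_le y x
    linarith
  rw [← mul_div_assoc, le_div_iff₀ hx']
  linarith

lemma ph_diff_le_two (x y : ℂ) : ‖ph y - ph x‖ ≤ 2 := by
  refine (norm_sub_le _ _).trans ?_
  rw [ph_norm, ph_norm]; norm_num

lemma min_pow_le (a : ℝ) (ha : 0 ≤ a) (b : ℝ) (h2 : b ≤ 2) (h : b ≤ 2 * a) :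
    b ≤ 2 * a ^ (3/4 : ℝ) := by
  by_cases h1 : a ≤ 1
  · have : a ≤ a ^ (3/4 : ℝ) := by
      have := Real.rpow_le_rpow_of_exponent_ge' ha h1 (by norm_num : (0:ℝ) ≤ 3/4) (by norm_num : (3/4 : ℝ) ≤ 1)
      simpa using this
    linarith
  · have := Real.one_le_rpow (le_of_lt (not_le.1 h1)) (by norm_num : (0:ℝ) ≤ 3/4)
    linarith

/-- phase of a product over the circle -/
noncomputable def psi (l : ℂ) (m : Multiset ℂ) (u : ℂ) : ℂ := ph l * (m.map (fun a => ph (u - a))).prod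

lemma psi_norm (l : ℂ) (m : Multiset ℂ) (u : ℂ) : ‖psi l m u‖ = 1 := by
  unfold psi
  induction m using Multiset.induction_on with
  | empty => simp [ph_norm]
  | cons a m ih =>
    rw [Multiset.map_cons, Multiset.prod_cons, norm_mul, norm_mul, ph_norm, ph_norm]
    rw [norm_mul, ph_norm] at ih
    simpa using ih

lemma psi_mul (l : ℂ) (m : Multiset ℂ) (u : ℂ) :
    (‖l * (m.map (fun a => u - a)).prod‖ : ℂ) * psi l m u = l * (m.map (fun a => u - a)).prod := by
  unfold psi
  have : (‖(m.map (fun a => u - a)).prod‖ : ℂ) * (m.map (fun a => ph (u - a))).prod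
      = (m.map (fun a => u - a)).prod := by
    induction m using Multiset.induction_on with
    | empty => simp
    | cons a m ih =>
      simp only [Multiset.map_cons, Multiset.prod_cons, norm_mul, Complex.ofReal_mul]
      rw [mul_mul_mul_comm, ih, ph_mul]
  rw [norm_mul, Complex.ofReal_mul, mul_mul_mul_comm, this, ph_mul]

lemma psi_diff (l : ℂ) (m : Multiset ℂ) (u v : ℂ) :
    ‖psi l m v - psi l m u‖ ≤ (m.map (fun a => ‖ph (v - a) - ph (u - a)‖)).sum := by
  unfold psi
  rw [← mul_sub, norm_mul, ph_norm, one_mul]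
  induction m using Multiset.induction_on with
  | empty => simp
  | cons a m ih =>
    simp only [Multiset.map_cons, Multiset.prod_cons, Multiset.sum_cons]
    have e : ph (v - a) * (m.map (fun a => ph (v - a))).prod - ph (u - a) * (m.map (fun a => ph (u - a))).prod
      = (ph (v-a) - ph (u-a)) * (m.map (fun a => ph (v - a))).prod + ph (u-a) *
        ((m.map (fun a => ph (v - a))).prod - (m.map (fun a => ph (u - a))).prod) := by ring
    rw [e]
    refine (norm_add_le _ _).trans ?_
    rw [norm_mul, norm_mul, ph_norm, one_mul]
    have h := psi_norm 1 m v
    unfold psi at h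
    rw [norm_mul, ph_norm, one_mul] at h
    rw [h, mul_one]
    linarith

lemma sin_le_root (θ : ℝ) (a : ℂ) : |Real.sin (θ - a.arg)| ≤ ‖Complex.exp (θ * Complex.I) - a‖ := by
  have h : (Complex.exp (θ * Complex.I) - a) * Complex.exp (-(a.arg : ℂ) * Complex.I) =
      Complex.exp (((θ - a.arg : ℝ) : ℂ) * Complex.I) - ‖a‖ := by
    have h1 := Complex.norm_mul_exp_arg_mul_I a
    have h2 : Complex.exp (-(a.arg : ℂ) * Complex.I) * Complex.exp (a.arg * Complex.I) = 1 := by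
      rw [← Complex.exp_add]; simp
    have h3 : Complex.exp (((θ - a.arg : ℝ) : ℂ) * Complex.I) =
      Complex.exp (θ * Complex.I) * Complex.exp (-(a.arg : ℂ) * Complex.I) := by
      rw [← Complex.exp_add]; congr 1; push_cast; ring
    rw [h3]
    linear_combination (Complex.exp (-(a.arg : ℂ) * Complex.I)) * h1 - ‖a‖ * h2
  have h4 : ‖Complex.exp (-(a.arg : ℂ) * Complex.I)‖ = 1 := by
    have := Complex.norm_exp_ofReal_mul_I (-a.arg)
    simpa using this
  have h5 := congrArg norm h
  rw [norm_mul, h4, mul_one] at h5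
  rw [h5]
  refine le_trans (le_of_eq ?_) (Complex.abs_im_le_norm _)
  rw [Complex.sub_im, Complex.exp_ofReal_mul_I_im]
  simp

lemma psi_shift (l : ℂ) (m : Multiset ℂ) (θ s : ℝ) (hs : 0 ≤ s)
    (hm : ∀ a ∈ m, Real.sin (θ - a.arg) ≠ 0) :
    ‖psi l m (Complex.exp ((θ + s : ℝ) * Complex.I)) - psi l m (Complex.exp (θ * Complex.I))‖ ≤
      (m.map (fun a => 2 * s ^ (3/4 : ℝ) * |Real.sin (θ - a.arg)| ^ (-(3/4) : ℝ))).sum := by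
  refine (psi_diff l m _ _).trans ?_
  apply Multiset.sum_map_le_sum_map
  intro a ha
  have h0 : 0 < |Real.sin (θ - a.arg)| := abs_pos.2 (hm a ha)
  have h1 := sin_le_root θ a
  set x := Complex.exp (θ * Complex.I) - a
  set y := Complex.exp ((θ + s : ℝ) * Complex.I) - a
  have hx : 0 < ‖x‖ := h0.trans_le h1
  have hyx : ‖y - x‖ ≤ s := by
    have : y - x = Complex.exp (θ * Complex.I) * (Complex.exp (Complex.I * s) - 1) := by
      have : Complex.exp ((θ + s : ℝ) * Complex.I) = Complex.exp (θ * Complex.I) * Complex.exp (Complex.I * s) := by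
        rw [← Complex.exp_add]; congr 1; push_cast; ring
      simp only [x, y, this]; ring
    rw [this, norm_mul, Complex.norm_exp_ofReal_mul_I, one_mul]
    refine (Real.norm_exp_I_mul_ofReal_sub_one_le).trans ?_
    rw [Real.norm_eq_abs, abs_of_nonneg hs]
  have h2 := ph_lip x y (norm_pos_iff.1 hx)
  have h3 : ‖y - x‖ / ‖x‖ ≤ s / |Real.sin (θ - a.arg)| := by gcongr
  have h4 := min_pow_le (s / |Real.sin (θ - a.arg)|) (by positivity) _ (ph_diff_le_two x y) (by linarith)
  refine h4.trans (le_of_eq ?_)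
  rw [Real.div_rpow hs h0.le, Real.rpow_neg h0.le]
  ring

lemma re_le_diff (p t ψ : ℂ) (hψ : ‖ψ‖ = 1) (hp : (‖p‖ : ℂ) * ψ = p) :
    (t * starRingEnd ℂ ψ).re ≤ ‖p + t‖ - ‖p‖ := by
  have h1 : ψ * starRingEnd ℂ ψ = 1 := by
    rw [Complex.mul_conj, Complex.normSq_eq_norm_sq, hψ]; simp
  have h2 : (p + t) * starRingEnd ℂ ψ = ‖p‖ + t * starRingEnd ℂ ψ := by
    linear_combination (‖p‖ : ℂ) * h1 - (starRingEnd ℂ ψ) * hp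
  have h3 := Complex.re_le_norm ((p + t) * starRingEnd ℂ ψ)
  rw [norm_mul, RCLike.norm_conj, hψ, mul_one, h2] at h3
  simp only [Complex.add_re, Complex.ofReal_re] at h3
  linarith

lemma pos_sq (x y g e f : ℝ) (h : |x - y| ≤ e + f) (hy : y ≤ g) :
    (max x 0)^2 ≤ 2 * g^2 + 4 * e^2 + 4 * f^2 := by
  have h1 := abs_le.1 h
  rcases le_total x 0 with hx | hx
  · rw [max_eq_right hx]; nlinarith [sq_nonneg g, sq_nonneg e, sq_nonneg f]
  · rw [max_eq_left hx]
    rcases le_total g 0 with hg | hg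
    · have : x ≤ e + f := by linarith
      nlinarith [sq_nonneg (e - f), sq_nonneg g]
    · have : x ≤ g + (e + f) := by linarith
      nlinarith [sq_nonneg (e - f), sq_nonneg (g - (e + f))]

lemma sum_four (w : ℂ) : ‖w‖^2 = ∑ j ∈ Finset.range 4, (max (Complex.I ^ j * w).re 0)^2 := by
  rw [← Complex.normSq_eq_norm_sq, Complex.normSq_apply]
  have h3 : Complex.I ^ 3 = - Complex.I := by simp [pow_succ]
  rw [Finset.sum_range_succ, Finset.sum_range_succ, Finset.sum_range_succ, Finset.sum_range_succ,
    Finset.sum_range_zero, h3, Complex.I_sq]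
  simp
  rcases le_total w.re 0 with h | h <;> rcases le_total w.im 0 with h' | h' <;>
    simp [h, h'] <;> ring

lemma circle_point (H : ℝ → ℂ) (l : ℂ) (m : Multiset ℂ) (s : ℕ → ℝ) (hs : ∀ j, 0 ≤ s j) (θ : ℝ)
    (hm : ∀ a ∈ m, Real.sin (θ - a.arg) ≠ 0) :
    ‖H θ‖^2 ≤ ∑ j ∈ Finset.range 4,
      (2 * (‖l * (m.map (fun a => Complex.exp ((θ + s j : ℝ) * Complex.I) - a)).prod + H (θ + s j)‖
        - ‖l * (m.map (fun a => Complex.exp ((θ + s j : ℝ) * Complex.I) - a)).prod‖)^2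
      + 4 * ‖H (θ + s j) - Complex.I ^ j * H θ‖^2
      + 4 * (‖H θ‖^2 * (2 * (m.map (fun a => 2 * (s j) ^ (3/4 : ℝ) * |Real.sin (θ - a.arg)| ^ (-(3/4) : ℝ))).sum))) := by
  set ψ := psi l m (Complex.exp (θ * Complex.I))
  have hψ : ‖ψ‖ = 1 := psi_norm _ _ _
  have : ‖H θ‖^2 = ‖H θ * starRingEnd ℂ ψ‖^2 := by rw [norm_mul, RCLike.norm_conj, hψ, mul_one]
  refine (this.trans (sum_four _)).le.trans ?_
  apply Finset.sum_le_sum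
  intro j _
  set ψ' := psi l m (Complex.exp ((θ + s j : ℝ) * Complex.I))
  have hψ' : ‖ψ'‖ = 1 := psi_norm _ _ _
  set p := l * (m.map (fun a => Complex.exp ((θ + s j : ℝ) * Complex.I) - a)).prod
  have h1 := re_le_diff p (H (θ + s j)) ψ' hψ' (psi_mul _ _ _)
  have h2 : |(Complex.I ^ j * (H θ * starRingEnd ℂ ψ)).re - (H (θ + s j) * starRingEnd ℂ ψ').re| ≤
      ‖H (θ + s j) - Complex.I ^ j * H θ‖ + ‖H θ‖ * ‖ψ' - ψ‖ := by
    rw [← Complex.sub_re]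
    refine (Complex.abs_re_le_norm _).trans ?_
    have e : Complex.I ^ j * (H θ * starRingEnd ℂ ψ) - H (θ + s j) * starRingEnd ℂ ψ' =
      -((H (θ + s j) - Complex.I ^ j * H θ) * starRingEnd ℂ ψ') - Complex.I ^ j * H θ * (starRingEnd ℂ (ψ' - ψ)) := by
      rw [map_sub]; ring
    rw [e]
    refine (norm_sub_le _ _).trans ?_
    rw [norm_neg, norm_mul, norm_mul, norm_mul, RCLike.norm_conj, RCLike.norm_conj, hψ', mul_one]
    simp
  have h3 := pos_sq _ _ _ _ _ h2 h1
  refine h3.trans ?_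
  have h4 : ‖ψ' - ψ‖ ≤ 2 := by
    refine (norm_sub_le _ _).trans ?_
    rw [hψ, hψ']; norm_num
  have h5 := psi_shift l m θ (s j) (hs j) hm
  have h6 : (‖H θ‖ * ‖ψ' - ψ‖)^2 ≤ ‖H θ‖^2 * (2 * (m.map (fun a => 2 * (s j) ^ (3/4 : ℝ) * |Real.sin (θ - a.arg)| ^ (-(3/4) : ℝ))).sum) := by
    rw [mul_pow]
    have := norm_nonneg (ψ' - ψ)
    gcongr
    nlinarith
  linarith



open Real in
lemma sin_int : IntervalIntegrable (fun x : ℝ => |Real.sin x| ^ (-(3/4) : ℝ)) volume 0 (2 * Real.pi) := by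
  have hpi := Real.pi_pos
  have meas : Measurable (fun x : ℝ => |Real.sin x| ^ (-(3/4) : ℝ)) :=
    ((Real.measurable_sin).norm).pow_const _
  have q : IntervalIntegrable (fun x : ℝ => |Real.sin x| ^ (-(3/4) : ℝ)) volume 0 (Real.pi / 2) := by
    have h := (intervalIntegral.intervalIntegrable_rpow' (a := 0) (b := Real.pi/2) (r := (-(3/4) : ℝ)) (by norm_num)).const_mul ((2 / Real.pi)^(-(3/4) : ℝ))
    refine h.mono_fun' meas.aestronglyMeasurable ?_
    rw [Set.uIoc_of_le (by positivity)]
    refine (ae_restrict_iff' measurableSet_Ioc).2 (Filter.Eventually.of_forall ?_)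
    intro x hx
    change ‖|Real.sin x| ^ (-(3/4) : ℝ)‖ ≤ (2 / Real.pi) ^ (-(3/4) : ℝ) * x ^ (-(3/4) : ℝ)
    have h1 := Real.mul_le_sin hx.1.le hx.2
    have hx0 : 0 < x := hx.1
    have h2 : 0 < 2 / Real.pi * x := by positivity
    rw [Real.norm_eq_abs, abs_of_nonneg (by positivity), abs_of_pos (h2.trans_le h1), ← Real.mul_rpow (by positivity) hx0.le]
    exact Real.rpow_le_rpow_of_nonpos h2 h1 (by norm_num)
  have q2 : IntervalIntegrable (fun x : ℝ => |Real.sin x| ^ (-(3/4) : ℝ)) volume (Real.pi / 2) Real.pi := by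
    have := q.comp_sub_left Real.pi
    simp only [Real.sin_pi_sub, sub_zero] at this
    have e : Real.pi - Real.pi/2 = Real.pi / 2 := by ring
    rw [e] at this
    exact this.symm
  have h := q.trans q2
  have h3 : IntervalIntegrable (fun x : ℝ => |Real.sin x| ^ (-(3/4) : ℝ)) volume Real.pi (2 * Real.pi) := by
    have := h.comp_sub_right Real.pi
    simp only [Real.sin_sub_pi, abs_neg, zero_add] at this
    rwa [← two_mul] at this
  exact h.trans h3

lemma sin_per : Function.Periodic (fun x : ℝ => |Real.sin x| ^ (-(3/4) : ℝ)) (2 * Real.pi) := by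
  intro x; simp [Real.sin_add_two_pi]

/-- integral of the singular weight -/
noncomputable def Wc : ℝ := ∫ x in (0:ℝ)..(2 * Real.pi), |Real.sin x| ^ (-(3/4) : ℝ)

lemma Wc_nonneg : 0 ≤ Wc := by
  unfold Wc
  exact intervalIntegral.integral_nonneg (by positivity) (fun x _ => by positivity)

lemma sin_int_shift (t : ℝ) : IntervalIntegrable (fun x : ℝ => |Real.sin (x - t)| ^ (-(3/4) : ℝ)) volume 0 (2 * Real.pi) := by
  have h := sin_per.intervalIntegrable (t := 0) (by positivity) (by simpa using sin_int) (0 - t) (2 * Real.pi - t)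
  have := h.comp_sub_right t
  simpa using this

lemma sin_int_val (t : ℝ) : ∫ x in (0:ℝ)..(2 * Real.pi), |Real.sin (x - t)| ^ (-(3/4) : ℝ) = Wc := by
  rw [intervalIntegral.integral_comp_sub_right (fun x => |Real.sin x| ^ (-(3/4) : ℝ))]
  have := sin_per.intervalIntegral_add_eq (0 - t) 0
  rw [zero_add] at this
  rw [Wc, ← this]
  congr 1; ring

lemma cs_interval (g : ℝ → ℝ) (hg : Continuous g) (s : ℝ) (hs : 0 ≤ s) :
    (∫ t in (0:ℝ)..s, g t)^2 ≤ s * ∫ t in (0:ℝ)..s, (g t)^2 := by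
  rcases hs.eq_or_lt with rfl | hs
  · simp
  set I := ∫ t in (0:ℝ)..s, g t
  have h : 0 ≤ ∫ t in (0:ℝ)..s, (g t - I / s)^2 := intervalIntegral.integral_nonneg hs.le (fun t _ => sq_nonneg _)
  have e : ∫ t in (0:ℝ)..s, (g t - I / s)^2 = (∫ t in (0:ℝ)..s, (g t)^2) - I^2 / s := by
    have : ∀ t, (g t - I / s)^2 = (g t)^2 - 2 * (I / s) * g t + (I/s)^2 := by intro t; ring
    simp_rw [this]
    rw [intervalIntegral.integral_add, intervalIntegral.integral_sub, intervalIntegral.integral_const_mul, intervalIntegral.integral_const]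
    · change _ - 2 * (I/s) * I + _ = _
      rw [smul_eq_mul]
      field_simp
      ring
    all_goals apply Continuous.intervalIntegrable; fun_prop
  rw [e] at h
  have : I^2 / s ≤ ∫ t in (0:ℝ)..s, (g t)^2 := by linarith
  rw [div_le_iff₀ hs] at this
  linarith

lemma shift_point (r : ℝ) (H S : ℝ → ℂ) (hS : Continuous S)
    (hd : ∀ θ, HasDerivAt H (Complex.I * (r^2 * H θ + S θ)) θ) (s θ : ℝ) (hs : 0 ≤ s) :
    ‖H (θ + s) - Complex.exp (r^2 * s * Complex.I) * H θ‖^2 ≤ s * ∫ t in (0:ℝ)..s, ‖S (θ + t)‖^2 := by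
  set k : ℝ → ℂ := fun t => H (θ + t) * Complex.exp (-(r^2 * t) * Complex.I) with hk
  set k' : ℝ → ℂ := fun t => Complex.I * S (θ + t) * Complex.exp (-(r^2 * t) * Complex.I) with hk'
  have hder : ∀ t, HasDerivAt k (k' t) t := by
    intro t
    have h1 := (hd (θ + t)).comp_const_add θ t
    have h2 : HasDerivAt (fun t : ℝ => Complex.exp (-(r^2 * t) * Complex.I)) (Complex.exp (-(r^2 * t) * Complex.I) * (-(r^2 * 1) * Complex.I)) t := by
      apply HasDerivAt.cexp
      exact ((((hasDerivAt_id t).ofReal_comp).const_mul _).neg).mul_const _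
    have h3 := h1.mul h2
    refine h3.congr_deriv ?_
    simp only [hk']
    ring
  have hc : Continuous k' := by fun_prop
  have hint : ∫ t in (0:ℝ)..s, k' t = k s - k 0 :=
    intervalIntegral.integral_eq_sub_of_hasDerivAt (fun t _ => hder t) (hc.intervalIntegrable _ _)
  have hn : ‖H (θ + s) - Complex.exp (r^2 * s * Complex.I) * H θ‖ = ‖k s - k 0‖ := by
    have : H (θ + s) - Complex.exp (r^2 * s * Complex.I) * H θ = Complex.exp (((r^2 * s : ℝ) : ℂ) * Complex.I) * (k s - k 0) := by
      have e : Complex.exp (r^2 * s * Complex.I) * Complex.exp (-(r^2 * s) * Complex.I) = 1 := by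
        rw [← Complex.exp_add]; simp
      simp only [hk]
      push_cast
      simp only [mul_zero, neg_zero, zero_mul, Complex.exp_zero, add_zero, mul_one]
      linear_combination -(H (θ+s)) * e
    rw [this, norm_mul, Complex.norm_exp_ofReal_mul_I, one_mul]
  have hk'n : ∀ t, ‖k' t‖ = ‖S (θ + t)‖ := by
    intro t
    have := Complex.norm_exp_ofReal_mul_I (-(r^2 * t))
    push_cast at this
    simp only [hk', norm_mul, this]
    simp
  rw [hn, ← hint]
  have h1 : ‖∫ t in (0:ℝ)..s, k' t‖ ≤ ∫ t in (0:ℝ)..s, ‖S (θ + t)‖ := by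
    refine (intervalIntegral.norm_integral_le_integral_norm hs).trans (le_of_eq ?_)
    simp_rw [hk'n]
  refine le_trans ?_ (cs_interval (fun t => ‖S (θ + t)‖) (by fun_prop) s hs)
  gcongr

lemma shift_int (r : ℝ) (H S : ℝ → ℂ) (hS : Continuous S)
    (pS : Function.Periodic S (2 * Real.pi))
    (hd : ∀ θ, HasDerivAt H (Complex.I * (r^2 * H θ + S θ)) θ) (s : ℝ) (hs : 0 ≤ s) :
    ∫ θ in (0:ℝ)..(2*Real.pi), ‖H (θ + s) - Complex.exp (r^2 * s * Complex.I) * H θ‖^2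
      ≤ s^2 * ∫ θ in (0:ℝ)..(2*Real.pi), ‖S θ‖^2 := by
  have hH : Continuous H := continuous_iff_continuousAt.2 (fun θ => (hd θ).continuousAt)
  have c2 : Continuous (Function.uncurry (fun θ t : ℝ => ‖S (θ + t)‖^2)) := by
    unfold Function.uncurry; fun_prop
  have h1 : ∫ θ in (0:ℝ)..(2*Real.pi), ‖H (θ + s) - Complex.exp (r^2 * s * Complex.I) * H θ‖^2
      ≤ ∫ θ in (0:ℝ)..(2*Real.pi), s * ∫ t in (0:ℝ)..s, ‖S (θ + t)‖^2 := by
    apply intervalIntegral.integral_mono_on (by positivity)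
    · apply Continuous.intervalIntegrable; fun_prop
    · apply Continuous.intervalIntegrable
      apply continuous_const.mul
      exact intervalIntegral.continuous_parametric_intervalIntegral_of_continuous' c2 _ _
    · intro θ _
      exact shift_point r H S hS hd s θ hs
  refine h1.trans (le_of_eq ?_)
  rw [intervalIntegral.integral_const_mul, intervalIntegral_intervalIntegral_swap]
  · have : ∀ t, ∫ θ in (0:ℝ)..(2*Real.pi), ‖S (θ + t)‖^2 = ∫ θ in (0:ℝ)..(2*Real.pi), ‖S θ‖^2 := by
      intro t
      have pp : Function.Periodic (fun θ => ‖S θ‖^2) (2*Real.pi) := by intro x; simp [pS x]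
      rw [intervalIntegral.integral_comp_add_right (fun θ => ‖S θ‖^2)]
      have := pp.intervalIntegral_add_eq (0 + t) 0
      rw [zero_add (2 * Real.pi)] at this
      rw [← this]; congr 1; ring
    simp_rw [this]
    rw [intervalIntegral.integral_const, smul_eq_mul]
    ring
  · apply (c2.continuousOn.integrableOn_compact (isCompact_uIcc.prod isCompact_uIcc)).mono_set
    exact Set.prod_mono Set.uIoc_subset_uIcc Set.uIoc_subset_uIcc

lemma sup_bound (r : ℝ) (H S : ℝ → ℂ) (hS : Continuous S)
    (hd : ∀ θ, HasDerivAt H (Complex.I * (r^2 * H θ + S θ)) θ) (hr : 1 ≤ r) (θ : ℝ) (hθ : θ ∈ Set.Icc 0 (2 * Real.pi)) :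
    ‖H θ‖^2 ≤ 2 * r * ∫ θ in (0:ℝ)..(2*Real.pi), (‖H θ‖^2 + ‖S θ‖^2 / r^2) := by
  have hH : Continuous H := continuous_iff_continuousAt.2 (fun θ => (hd θ).continuousAt)
  have hpi := Real.pi_gt_three
  set E := ∫ θ in (0:ℝ)..(2*Real.pi), (‖H θ‖^2 + ‖S θ‖^2 / r^2) with hE
  set D : ℝ → ℝ := fun t => 2 * (inner ℝ (H t) (Complex.I * (r^2 * H t + S t))) with hD
  have hder : ∀ t, HasDerivAt (fun t => ‖H t‖^2) (D t) t := fun t => (hd t).norm_sq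
  have hDc : Continuous D := by
    have : ∀ t, D t = 2 * ((Complex.I * (r^2 * H t + S t)) * starRingEnd ℂ (H t)).re := by
      intro t; simp only [hD]; rw [Complex.inner]
    rw [funext this]
    fun_prop
  have hDb : ∀ t, |D t| ≤ r * (‖H t‖^2 + ‖S t‖^2 / r^2) := by
    intro t
    have e : D t = 2 * (inner ℝ (H t) (Complex.I * S t)) := by
      simp only [hD]
      rw [Complex.inner, Complex.inner]
      have : (Complex.I * (r^2 * H t + S t)) * starRingEnd ℂ (H t) = Complex.I * ((r^2 * Complex.normSq (H t) : ℝ) : ℂ) + Complex.I * S t * starRingEnd ℂ (H t) := by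
        push_cast
        rw [Complex.normSq_eq_conj_mul_self]; ring
      rw [this, Complex.add_re]
      congr 1
      rw [Complex.I_mul_re, Complex.ofReal_im]
      simp
    rw [e, abs_mul]
    have h1 := abs_real_inner_le_norm (H t) (Complex.I * S t)
    rw [norm_mul, Complex.norm_I, one_mul] at h1
    have h2 : 2 * (‖H t‖ * ‖S t‖) ≤ r * (‖H t‖^2 + ‖S t‖^2 / r^2) := by
      have : r * (‖H t‖^2 + ‖S t‖^2 / r^2) - 2 * (‖H t‖ * ‖S t‖) = r * (‖H t‖ - ‖S t‖ / r)^2 := by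
        field_simp; ring
      have h3 : 0 ≤ r * (‖H t‖ - ‖S t‖ / r)^2 := by positivity
      linarith
    rw [abs_of_pos (by norm_num : (0:ℝ) < 2)]
    linarith
  have hEc : Continuous (fun θ => ‖H θ‖^2 + ‖S θ‖^2 / r^2) := by fun_prop
  have hdiff : ∀ t ∈ Set.Icc 0 (2 * Real.pi), ‖H θ‖^2 - ‖H t‖^2 ≤ r * E := by
    intro t ht
    have h1 : ∫ x in t..θ, D x = ‖H θ‖^2 - ‖H t‖^2 :=
      intervalIntegral.integral_eq_sub_of_hasDerivAt (fun x _ => hder x) (hDc.intervalIntegrable _ _)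
    rw [← h1]
    refine (le_abs_self _).trans ?_
    refine (intervalIntegral.norm_integral_le_integral_norm_uIoc (f := D)).trans ?_
    have hsub : Set.uIoc t θ ⊆ Set.Ioc 0 (2 * Real.pi) := by
      intro x hx
      rw [Set.mem_uIoc] at hx
      rcases hx with hx | hx
      · exact ⟨ht.1.trans_lt hx.1, hx.2.trans hθ.2⟩
      · exact ⟨hθ.1.trans_lt hx.1, hx.2.trans ht.2⟩
    have hci : IntegrableOn (fun x => r * (‖H x‖^2 + ‖S x‖^2 / r^2)) (Set.Ioc 0 (2 * Real.pi)) :=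
      ((hEc.const_mul r).integrableOn_Icc).mono_set Set.Ioc_subset_Icc_self
    have h5 : ∫ x in Set.uIoc t θ, ‖D x‖ ≤ ∫ x in Set.uIoc t θ, r * (‖H x‖^2 + ‖S x‖^2 / r^2) := by
      apply setIntegral_mono
      · exact ((hDc.norm.integrableOn_Icc).mono_set Set.Ioc_subset_Icc_self).mono_set hsub
      · exact hci.mono_set hsub
      · exact hDb
    refine h5.trans ?_
    rw [hE, ← intervalIntegral.integral_const_mul, intervalIntegral.integral_of_le (by positivity)]
    apply setIntegral_mono_set hci
    · exact Filter.Eventually.of_forall (fun x => by simp only [Pi.zero_apply]; positivity)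
    · exact hsub.eventuallyLE
  have h2 : ∫ t in (0:ℝ)..(2*Real.pi), (‖H θ‖^2 - ‖H t‖^2) ≤ ∫ t in (0:ℝ)..(2*Real.pi), r * E := by
    apply intervalIntegral.integral_mono_on (by positivity)
    · apply Continuous.intervalIntegrable; fun_prop
    · apply Continuous.intervalIntegrable; fun_prop
    · exact hdiff
  have h3 : ∫ t in (0:ℝ)..(2*Real.pi), ‖H t‖^2 ≤ E := by
    apply intervalIntegral.integral_mono_on (by positivity)
    · apply Continuous.intervalIntegrable; fun_prop
    · apply Continuous.intervalIntegrable; fun_prop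
    · intro t _
      have : 0 ≤ ‖S t‖^2 / r^2 := by positivity
      linarith
  have hE0 : 0 ≤ E := intervalIntegral.integral_nonneg (by positivity) (fun t _ => by positivity)
  rw [intervalIntegral.integral_sub (by apply Continuous.intervalIntegrable; fun_prop) (by apply Continuous.intervalIntegrable; fun_prop),
    intervalIntegral.integral_const, intervalIntegral.integral_const, smul_eq_mul, smul_eq_mul] at h2
  have h4 : (2 * Real.pi) * (‖H θ‖^2 - r * E) ≤ E := by linarith
  by_contra hcon
  push Not at hcon
  have : r * E < ‖H θ‖^2 - r * E := by linarith
  have h5 : E ≤ r * E := by nlinarith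
  nlinarith


lemma sin_ae (m : Multiset ℂ) : ∀ᵐ θ : ℝ, ∀ a ∈ m, Real.sin (θ - a.arg) ≠ 0 := by
  have hc : (⋃ a ∈ m.toFinset, Set.range (fun n : ℤ => (n : ℝ) * Real.pi + a.arg)).Countable :=
    Set.Countable.biUnion (Finset.countable_toSet _) (fun a _ => Set.countable_range _)
  filter_upwards [hc.ae_notMem volume] with θ hθ a ha h0
  apply hθ
  obtain ⟨n, hn⟩ := Real.sin_eq_zero_iff.1 h0
  simp only [Set.mem_iUnion]
  exact ⟨a, Multiset.mem_toFinset.2 ha, n, by simp only [hn]; ring⟩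

lemma msum_int (c : ℝ) (m : Multiset ℂ) :
    IntervalIntegrable (fun θ : ℝ => (m.map (fun a => c * |Real.sin (θ - a.arg)| ^ (-(3/4) : ℝ))).sum) volume 0 (2 * Real.pi) ∧
    ∫ θ in (0:ℝ)..(2 * Real.pi), (m.map (fun a => c * |Real.sin (θ - a.arg)| ^ (-(3/4) : ℝ))).sum = m.card * (c * Wc) := by
  induction m using Multiset.induction_on with
  | empty => simp
  | cons a m ih =>
    simp only [Multiset.map_cons, Multiset.sum_cons]
    have h := (sin_int_shift a.arg).const_mul c
    refine ⟨h.add ih.1, ?_⟩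
    rw [intervalIntegral.integral_add h ih.1, ih.2, intervalIntegral.integral_const_mul, sin_int_val]
    simp only [Multiset.card_cons]; push_cast; ring

lemma circle_ms (r : ℝ) (hr : 1 ≤ r) (H S : ℝ → ℂ) (hS : Continuous S)
    (pH : Function.Periodic H (2 * Real.pi))
    (pS : Function.Periodic S (2 * Real.pi))
    (hd : ∀ θ, HasDerivAt H (Complex.I * (r^2 * H θ + S θ)) θ) (l : ℂ) (m : Multiset ℂ) :
    ∫ θ in (0:ℝ)..(2*Real.pi), ‖H θ‖^2 ≤
      8 * (∫ θ in (0:ℝ)..(2*Real.pi), (‖l * (m.map (fun a => Complex.exp ((θ : ℂ) * Complex.I) - a)).prod + H θ‖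
        - ‖l * (m.map (fun a => Complex.exp ((θ : ℂ) * Complex.I) - a)).prod‖)^2)
      + (400 + 640 * m.card * Wc) * (Real.sqrt r)⁻¹ * ∫ θ in (0:ℝ)..(2*Real.pi), (‖H θ‖^2 + ‖S θ‖^2 / r^2) := by
  have hpi := Real.pi_pos
  have hr0 : 0 < r := by linarith
  have hH : Continuous H := continuous_iff_continuousAt.2 (fun θ => (hd θ).continuousAt)
  set E := ∫ θ in (0:ℝ)..(2*Real.pi), (‖H θ‖^2 + ‖S θ‖^2 / r^2) with hE
  set p : ℝ → ℂ := fun θ => l * (m.map (fun a => Complex.exp ((θ : ℂ) * Complex.I) - a)).prod with hp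
  have hpc : Continuous p := by
    apply continuous_const.mul
    apply continuous_multiset_prod
    intro a _; fun_prop
  set G : ℝ → ℝ := fun θ => (‖p θ + H θ‖ - ‖p θ‖)^2 with hG
  have hGc : Continuous G := by fun_prop
  have pG : Function.Periodic G (2 * Real.pi) := by
    intro θ
    have : Complex.exp (((θ + 2 * Real.pi : ℝ) : ℂ) * Complex.I) = Complex.exp ((θ : ℂ) * Complex.I) := by
      rw [← Complex.exp_periodic ((θ : ℂ) * Complex.I)]; congr 1; push_cast; ring
    simp only [hG, hp, this, pH θ]
  set s : ℕ → ℝ := fun j => j * Real.pi / (2 * r^2) with hsdef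
  have hs : ∀ j, 0 ≤ s j := fun j => by positivity
  have hexp : ∀ j : ℕ, Complex.exp (r^2 * s j * Complex.I) = Complex.I ^ j := by
    intro j
    have hrc : (r : ℂ) ≠ 0 := by exact_mod_cast hr0.ne'
    have : (r : ℂ)^2 * s j * Complex.I = j * (Real.pi / 2 * Complex.I) := by
      simp only [hsdef]; push_cast; field_simp
    rw [this, Complex.exp_nat_mul, Complex.exp_pi_div_two_mul_I]
  have hE0 : 0 ≤ E := intervalIntegral.integral_nonneg (by positivity) (fun t _ => by positivity)
  have key : ∀ j, IntervalIntegrable (fun θ => 2 * G (θ + s j) + 4 * ‖H (θ + s j) - Complex.I ^ j * H θ‖^2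
      + 4 * (2 * r * E * (2 * (m.map (fun a => 2 * (s j) ^ (3/4 : ℝ) * |Real.sin (θ - a.arg)| ^ (-(3/4) : ℝ))).sum))) volume 0 (2 * Real.pi) := by
    intro j
    apply IntervalIntegrable.add
    · apply Continuous.intervalIntegrable; fun_prop
    · exact (((msum_int _ m).1.const_mul _).const_mul _).const_mul _
  have h1 : ∫ θ in (0:ℝ)..(2*Real.pi), ‖H θ‖^2 ≤ ∫ θ in (0:ℝ)..(2*Real.pi), ∑ j ∈ Finset.range 4,
      (2 * G (θ + s j) + 4 * ‖H (θ + s j) - Complex.I ^ j * H θ‖^2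
      + 4 * (2 * r * E * (2 * (m.map (fun a => 2 * (s j) ^ (3/4 : ℝ) * |Real.sin (θ - a.arg)| ^ (-(3/4) : ℝ))).sum))) := by
    apply intervalIntegral.integral_mono_ae_restrict (by positivity)
    · apply Continuous.intervalIntegrable; fun_prop
    · have := IntervalIntegrable.sum (Finset.range 4) (fun j _ => key j)
      simpa only [Finset.sum_fn] using this
    · filter_upwards [ae_restrict_of_ae (sin_ae m), ae_restrict_mem measurableSet_Icc] with θ h1 h2
      refine (circle_point H l m s hs θ h1).trans ?_
      apply Finset.sum_le_sum
      intro j _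
      have hb := sup_bound r H S hS hd hr θ h2
      have hpos : 0 ≤ (m.map (fun a => 2 * (s j) ^ (3/4 : ℝ) * |Real.sin (θ - a.arg)| ^ (-(3/4) : ℝ))).sum := by
        apply Multiset.sum_nonneg
        intro x hx
        obtain ⟨a, _, rfl⟩ := Multiset.mem_map.1 hx
        have := hs j
        positivity
      simp only [hG, hp]
      gcongr
  rw [intervalIntegral.integral_finsetSum (fun j _ => key j)] at h1
  have hr4 : Real.sqrt r ^ 2 = r := Real.sq_sqrt hr0.le
  have ht1 : 1 ≤ Real.sqrt r := Real.one_le_sqrt.2 hr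
  set t := Real.sqrt r with ht
  have hsle : ∀ j ∈ Finset.range 4, s j ≤ 5 / r^2 := by
    intro j hj
    have hj3 : (j : ℝ) ≤ 3 := by exact_mod_cast Nat.le_of_lt_succ (Finset.mem_range.1 hj)
    have := Real.pi_lt_d2
    simp only [hsdef]
    rw [div_le_div_iff₀ (by positivity) (by positivity)]
    have : (j : ℝ) * Real.pi ≤ 10 := by nlinarith
    have : 0 < r^2 := by positivity
    nlinarith
  have hpow : ∀ j ∈ Finset.range 4, (s j) ^ (3/4 : ℝ) ≤ 5 * (t⁻¹)^3 := by
    intro j hj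
    have h2 : (s j) ^ (3/4 : ℝ) ≤ (5 / r^2) ^ (3/4 : ℝ) := Real.rpow_le_rpow (hs j) (hsle j hj) (by norm_num)
    refine h2.trans ?_
    have h3 : 5 / r^2 = 5 * (t⁻¹)^4 := by
      rw [← hr4]; field_simp
    rw [h3, Real.mul_rpow (by norm_num) (by positivity)]
    have h4 : ((t⁻¹)^4) ^ (3/4 : ℝ) = (t⁻¹)^3 := by
      rw [← Real.rpow_natCast, ← Real.rpow_mul (by positivity), ← Real.rpow_natCast]
      norm_num
    rw [h4]
    gcongr
    have := Real.rpow_le_rpow_of_exponent_le (by norm_num : (1:ℝ) ≤ 5) (by norm_num : (3/4 : ℝ) ≤ 1)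
    simpa using this
  have hSE : ∫ θ in (0:ℝ)..(2*Real.pi), ‖S θ‖^2 ≤ r^2 * E := by
    rw [hE, ← intervalIntegral.integral_const_mul]
    apply intervalIntegral.integral_mono_on (by positivity)
    · apply Continuous.intervalIntegrable; fun_prop
    · apply Continuous.intervalIntegrable; fun_prop
    · intro θ _
      have : r^2 * (‖H θ‖^2 + ‖S θ‖^2 / r^2) = r^2 * ‖H θ‖^2 + ‖S θ‖^2 := by field_simp
      rw [this]
      have : 0 ≤ r^2 * ‖H θ‖^2 := by positivity
      linarith
  have h2 : ∀ j ∈ Finset.range 4, ∫ θ in (0:ℝ)..(2*Real.pi), (2 * G (θ + s j) + 4 * ‖H (θ + s j) - Complex.I ^ j * H θ‖^2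
      + 4 * (2 * r * E * (2 * (m.map (fun a => 2 * (s j) ^ (3/4 : ℝ) * |Real.sin (θ - a.arg)| ^ (-(3/4) : ℝ))).sum)))
      ≤ 2 * (∫ θ in (0:ℝ)..(2*Real.pi), G θ) + (100 + 160 * m.card * Wc) * t⁻¹ * E := by
    intro j hj
    rw [intervalIntegral.integral_add (by apply Continuous.intervalIntegrable; fun_prop) ((((msum_int _ m).1.const_mul _).const_mul _).const_mul _),
      intervalIntegral.integral_add (by apply Continuous.intervalIntegrable; fun_prop) (by apply Continuous.intervalIntegrable; fun_prop),
      intervalIntegral.integral_const_mul, intervalIntegral.integral_const_mul, intervalIntegral.integral_const_mul,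
      intervalIntegral.integral_const_mul, intervalIntegral.integral_const_mul, (msum_int _ m).2]
    have e1 : ∫ θ in (0:ℝ)..(2*Real.pi), G (θ + s j) = ∫ θ in (0:ℝ)..(2*Real.pi), G θ := by
      rw [intervalIntegral.integral_comp_add_right G]
      have := pG.intervalIntegral_add_eq (0 + s j) 0
      rw [zero_add (2 * Real.pi)] at this
      rw [← this]; congr 1; ring
    have e2 := shift_int r H S hS pS hd (s j) (hs j)
    rw [hexp j] at e2
    have e3 : (s j)^2 * ∫ θ in (0:ℝ)..(2*Real.pi), ‖S θ‖^2 ≤ 25 * t⁻¹ * E := by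
      calc (s j)^2 * ∫ θ in (0:ℝ)..(2*Real.pi), ‖S θ‖^2 ≤ (5 / r^2)^2 * (r^2 * E) := by
            have := hs j
            have := hsle j hj
            have : 0 ≤ ∫ θ in (0:ℝ)..(2*Real.pi), ‖S θ‖^2 := intervalIntegral.integral_nonneg (by positivity) (fun t _ => by positivity)
            gcongr
        _ = 25 * (r^2)⁻¹ * E := by field_simp; ring
        _ ≤ 25 * t⁻¹ * E := by
            gcongr
            rw [← hr4]
            rw [← pow_mul]
            exact le_self_pow₀ ht1 (by norm_num)
    have e4 : 4 * (2 * r * E * (2 * (m.card * (2 * (s j) ^ (3/4 : ℝ) * Wc)))) ≤ 160 * m.card * Wc * t⁻¹ * E := by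
      have hw := Wc_nonneg
      calc 4 * (2 * r * E * (2 * (m.card * (2 * (s j) ^ (3/4 : ℝ) * Wc))))
          ≤ 4 * (2 * r * E * (2 * (m.card * (2 * (5 * (t⁻¹)^3) * Wc)))) := by
            have := hpow j hj
            gcongr
        _ = 160 * m.card * Wc * t⁻¹ * E := by
            rw [← hr4]; field_simp; ring
    rw [e1]
    linarith
  refine h1.trans ((Finset.sum_le_sum h2).trans (le_of_eq ?_))
  simp only [Finset.sum_const, Finset.card_range, nsmul_eq_mul, hG, hp]
  push_cast
  ring

lemma circle (N : ℕ) : ∃ C : ℝ, 0 ≤ C ∧ ∀ (r : ℝ) (_ : 1 ≤ r) (H S : ℝ → ℂ) (_ : Continuous S)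
    (_ : Function.Periodic H (2 * Real.pi)) (_ : Function.Periodic S (2 * Real.pi))
    (_ : ∀ θ, HasDerivAt H (Complex.I * (r^2 * H θ + S θ)) θ) (Q : Polynomial ℂ) (_ : Q.natDegree ≤ N),
    ∫ θ in (0:ℝ)..(2*Real.pi), ‖H θ‖^2 ≤
      8 * (∫ θ in (0:ℝ)..(2*Real.pi), (‖Q.eval (Complex.exp ((θ : ℂ) * Complex.I)) + H θ‖
        - ‖Q.eval (Complex.exp ((θ : ℂ) * Complex.I))‖)^2)
      + C * (Real.sqrt r)⁻¹ * ∫ θ in (0:ℝ)..(2*Real.pi), (‖H θ‖^2 + ‖S θ‖^2 / r^2) := by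
  have hw := Wc_nonneg
  refine ⟨400 + 640 * N * Wc, by positivity, ?_⟩
  intro r hr H S hS pH pS hd Q hQ
  have h := circle_ms r hr H S hS pH pS hd Q.leadingCoeff Q.roots
  simp_rw [(IsAlgClosed.splits Q).eval_eq_prod_roots]
  refine h.trans ?_
  have hc : (Q.roots.card : ℝ) ≤ N := by exact_mod_cast (Polynomial.card_roots' Q).trans hQ
  have : 0 ≤ ∫ θ in (0:ℝ)..(2*Real.pi), (‖H θ‖^2 + ‖S θ‖^2 / r^2) :=
    intervalIntegral.integral_nonneg (by positivity) (fun t _ => by positivity)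
  gcongr



lemma rot_vol {d : ℕ} (u : ℂ) (hu : ‖u‖ = 1) :
    MeasurePreserving (fun z : Fin d → ℂ => u • z) volume volume := by
  have h1 : MeasurePreserving (fun z : ℂ => u * z) volume volume := by
    have := (rotation (⟨u, mem_sphere_zero_iff_norm.2 hu⟩ : Circle)).measurePreserving
    exact this
  have := volume_preserving_pi (fun _ : Fin d => h1)
  exact this

lemma nsq_rot {d : ℕ} (u : ℂ) (hu : ‖u‖ = 1) (z : Fin d → ℂ) : nsq (u • z) = nsq z := by
  simp [nsq, hu]

lemma rot_emb {d : ℕ} (u : ℂ) (hu : ‖u‖ = 1) :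
    MeasurableEmbedding (fun z : Fin d → ℂ => u • z) := by
  have : u ≠ 0 := by rintro rfl; simp at hu
  exact (Homeomorph.smulOfNeZero u this).measurableEmbedding

lemma rot_integral {d : ℕ} (u : ℂ) (hu : ‖u‖ = 1) (f : (Fin d → ℂ) → ℝ) :
    ∫ z, f (u • z) ∂(gam d) = ∫ z, f z ∂(gam d) := by
  rw [integral_gam, integral_gam]
  rw [← (rot_vol u hu).integral_comp (rot_emb u hu) (fun z => dens d z • f z)]
  simp [dens, nsq_rot u hu]

lemma rot_integrable {d : ℕ} (u : ℂ) (hu : ‖u‖ = 1) (f : (Fin d → ℂ) → ℝ) (hf : Integrable f (gam d)) :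
    Integrable (fun z => f (u • z)) (gam d) := by
  rw [integrable_gam] at hf ⊢
  have := ((rot_vol u hu).integrable_comp_emb (rot_emb u hu)).2 hf
  refine this.congr (Filter.Eventually.of_forall ?_)
  intro z
  simp [dens, nsq_rot u hu]

lemma rot_fubini {d : ℕ} (f : (Fin d → ℂ) → ℝ) (hf : Integrable f (gam d)) (hm : Measurable f) :
    ∫ z, (∫ θ in (0:ℝ)..(2*Real.pi), f (Complex.exp ((θ:ℂ) * Complex.I) • z)) ∂(gam d)
      = 2 * Real.pi * ∫ z, f z ∂(gam d) := by
  rw [← intervalIntegral_integral_swap]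
  · simp_rw [fun θ : ℝ => rot_integral _ (Complex.norm_exp_ofReal_mul_I θ) f]
    rw [intervalIntegral.integral_const, smul_eq_mul]; ring
  · have hmeas : Measurable (Function.uncurry (fun (θ : ℝ) (z : Fin d → ℂ) => f (Complex.exp ((θ:ℂ) * Complex.I) • z))) := by
      unfold Function.uncurry
      apply hm.comp
      fun_prop
    rw [integrable_prod_iff hmeas.aestronglyMeasurable]
    constructor
    · exact Filter.Eventually.of_forall (fun θ => rot_integrable _ (Complex.norm_exp_ofReal_mul_I θ) f hf)
    · simp only [Function.uncurry]
      simp_rw [fun θ : ℝ => rot_integral _ (Complex.norm_exp_ofReal_mul_I θ) (fun z => ‖f z‖)]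
      rw [Set.uIoc_of_le (by positivity)]
      exact integrable_const _

lemma rot_nonneg {d : ℕ} (f : (Fin d → ℂ) → ℝ) (hf : Integrable f (gam d)) (hm : Measurable f)
    (h : ∀ z, 0 ≤ ∫ θ in (0:ℝ)..(2*Real.pi), f (Complex.exp ((θ:ℂ) * Complex.I) • z)) :
    0 ≤ ∫ z, f z ∂(gam d) := by
  have h1 := rot_fubini f hf hm
  have h2 : 0 ≤ ∫ z, (∫ θ in (0:ℝ)..(2*Real.pi), f (Complex.exp ((θ:ℂ) * Complex.I) • z)) ∂(gam d) :=
    integral_nonneg h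
  rw [h1] at h2
  exact nonneg_of_mul_nonneg_right h2 (by positivity)

/-- maximal degree in the support -/
def mdeg {d : ℕ} (p : (Fin d → ℕ) →₀ ℂ) : ℕ := p.support.sup deg

lemma T_rot {d : ℕ} (κ : Fin d → ℕ) (c : (Fin d → ℕ) →₀ ℂ) (z : Fin d → ℂ) (u : ℂ) (hu : ‖u‖ = 1) :
    u ^ (deg κ) * trueHermitePoly κ c (u • z) = ∑ α ∈ c.support, c α * (u ^ (deg α) * PhiBasis κ α z) := by
  rw [T_eq, Finset.mul_sum]
  apply Finset.sum_congr rfl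
  intro α _
  rw [← Phi_rot κ α z u hu]; ring

lemma Sd_rot {d : ℕ} (κ : Fin d → ℕ) (c : (Fin d → ℕ) →₀ ℂ) (z : Fin d → ℂ) (u : ℂ) (hu : ‖u‖ = 1) :
    u ^ (deg κ) * Sd κ c (u • z) = ∑ α ∈ c.support, c α * (((deg α : ℂ) - (nsq z : ℂ)) * (u ^ (deg α) * PhiBasis κ α z)) := by
  rw [Sd, Finset.mul_sum, nsq_rot u hu]
  apply Finset.sum_congr rfl
  intro α _
  rw [← Phi_rot κ α z u hu]; ring

/-- radial polynomial along a circle -/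
noncomputable def Qz {d : ℕ} (κ : Fin d → ℕ) (p : (Fin d → ℕ) →₀ ℂ) (z : Fin d → ℂ) : Polynomial ℂ :=
  ∑ α ∈ p.support, Polynomial.C (p α * PhiBasis κ α z) * Polynomial.X ^ (deg α)

lemma Qz_deg {d : ℕ} (κ : Fin d → ℕ) (p : (Fin d → ℕ) →₀ ℂ) (z : Fin d → ℂ) : (Qz κ p z).natDegree ≤ mdeg p := by
  apply Polynomial.natDegree_sum_le_of_forall_le
  intro α hα
  refine (Polynomial.natDegree_C_mul_X_pow_le _ _).trans ?_
  exact Finset.le_sup (f := deg) hα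

lemma Qz_eval {d : ℕ} (κ : Fin d → ℕ) (p : (Fin d → ℕ) →₀ ℂ) (z : Fin d → ℂ) (u : ℂ) (hu : ‖u‖ = 1) :
    (Qz κ p z).eval u = u ^ (deg κ) * trueHermitePoly κ p (u • z) := by
  rw [T_rot κ p z u hu, Qz, Polynomial.eval_finsetSum]
  apply Finset.sum_congr rfl
  intro α _
  simp; ring

lemma exp_per (n : ℕ) (x : ℝ) : Complex.exp (((x + 2 * Real.pi : ℝ) : ℂ) * Complex.I) ^ n = Complex.exp ((x:ℂ) * Complex.I) ^ n := by
  congr 1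
  rw [← Complex.exp_periodic ((x : ℂ) * Complex.I)]; congr 1; push_cast; ring

lemma Vd_cont {d : ℕ} (κ : Fin d → ℕ) (h : (Fin d → ℕ) →₀ ℂ) : Continuous (Vd κ h) := by
  unfold Vd
  have h2 : ∀ κ' : Fin d → ℕ, Continuous (fun z => ‖trueHermitePoly κ' h z‖^2) := fun κ' => (T_cont κ' h).norm.pow 2
  refine ((continuous_const.mul (continuous_const.mul (h2 _)))).add (continuous_const.mul (continuous_const.mul ?_))
  refine continuous_finsetSum _ (fun q _ => ?_)
  exact (continuous_const.mul (continuous_const.mul (h2 _))).add (continuous_const.mul (continuous_const.mul (h2 _)))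

set_option maxHeartbeats 1000000 in
lemma circle_z {d : ℕ} (κ : Fin d → ℕ) (p : (Fin d → ℕ) →₀ ℂ) : ∃ C : ℝ, 0 ≤ C ∧
    ∀ (h : (Fin d → ℕ) →₀ ℂ) (R : ℝ) (z : Fin d → ℂ), 1 ≤ R → R^2 ≤ nsq z →
    ∫ θ in (0:ℝ)..(2*Real.pi), ‖trueHermitePoly κ h (Complex.exp ((θ:ℂ) * Complex.I) • z)‖^2 ≤
     8 * (∫ θ in (0:ℝ)..(2*Real.pi), (‖trueHermitePoly κ p (Complex.exp ((θ:ℂ) * Complex.I) • z) + trueHermitePoly κ h (Complex.exp ((θ:ℂ) * Complex.I) • z)‖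
        - ‖trueHermitePoly κ p (Complex.exp ((θ:ℂ) * Complex.I) • z)‖)^2)
     + C * (Real.sqrt R)⁻¹ * (∫ θ in (0:ℝ)..(2*Real.pi), (‖trueHermitePoly κ h (Complex.exp ((θ:ℂ) * Complex.I) • z)‖^2 + Vd κ h (Complex.exp ((θ:ℂ) * Complex.I) • z))) := by
  obtain ⟨C, hC0, hC⟩ := circle (mdeg p)
  refine ⟨C, hC0, ?_⟩
  intro h R z hR hz
  have hn : ∀ θ : ℝ, ‖Complex.exp ((θ:ℂ) * Complex.I)‖ = 1 := Complex.norm_exp_ofReal_mul_I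
  set r := Real.sqrt (nsq z) with hr
  have hr2 : r^2 = nsq z := Real.sq_sqrt (nsq_nonneg z)
  have hRr : R ≤ r := Real.le_sqrt_of_sq_le hz
  have hr1 : 1 ≤ r := hR.trans hRr
  set H : ℝ → ℂ := fun θ => Complex.exp ((θ:ℂ) * Complex.I) ^ (deg κ) * trueHermitePoly κ h (Complex.exp ((θ:ℂ) * Complex.I) • z) with hH
  set S : ℝ → ℂ := fun θ => Complex.exp ((θ:ℂ) * Complex.I) ^ (deg κ) * Sd κ h (Complex.exp ((θ:ℂ) * Complex.I) • z) with hS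
  have eH : H = fun θ : ℝ => ∑ α ∈ h.support, h α * (Complex.exp ((θ:ℂ) * Complex.I) ^ (deg α) * PhiBasis κ α z) := by
    funext θ; exact T_rot κ h z _ (hn θ)
  have eS : S = fun θ : ℝ => ∑ α ∈ h.support, h α * (((deg α : ℂ) - (nsq z : ℂ)) * (Complex.exp ((θ:ℂ) * Complex.I) ^ (deg α) * PhiBasis κ α z)) := by
    funext θ; exact Sd_rot κ h z _ (hn θ)
  have hSc : Continuous S := by rw [eS]; fun_prop
  have hVc := Vd_cont κ h
  have hTc := T_cont κ h
  have pH : Function.Periodic H (2 * Real.pi) := by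
    intro x; simp only [eH, exp_per]
  have pS : Function.Periodic S (2 * Real.pi) := by
    intro x; simp only [eS, exp_per]
  have hder : ∀ θ, HasDerivAt H (Complex.I * (r^2 * H θ + S θ)) θ := by
    intro θ
    have hexp : HasDerivAt (fun θ : ℝ => Complex.exp ((θ:ℂ) * Complex.I)) (Complex.exp ((θ:ℂ) * Complex.I) * (1 * Complex.I)) θ :=
      (((hasDerivAt_id θ).ofReal_comp).mul_const Complex.I).cexp
    have h1 : HasDerivAt H (∑ α ∈ h.support, h α * ((deg α * Complex.exp ((θ:ℂ) * Complex.I) ^ (deg α - 1) * (Complex.exp ((θ:ℂ) * Complex.I) * (1 * Complex.I))) * PhiBasis κ α z)) θ := by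
      rw [eH]
      apply HasDerivAt.fun_sum
      intro α _
      exact ((hexp.pow (deg α)).mul_const _).const_mul _
    refine h1.congr_deriv ?_
    have hr2' : (r : ℂ)^2 = nsq z := by exact_mod_cast hr2
    rw [hr2', eH, eS]
    simp only [Finset.mul_sum, ← Finset.sum_add_distrib]
    apply Finset.sum_congr rfl
    intro α _
    rcases Nat.eq_zero_or_pos (deg α) with h0 | h0
    · rw [h0]; simp; ring
    · obtain ⟨m, hm⟩ := Nat.exists_eq_succ_of_ne_zero h0.ne'
      rw [hm]; simp only [Nat.succ_sub_one, Nat.succ_eq_add_one]; push_cast; ring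
  have key := hC r hr1 H S hSc pH pS hder (Qz κ p z) (Qz_deg κ p z)
  have nH : ∀ θ, ‖H θ‖ = ‖trueHermitePoly κ h (Complex.exp ((θ:ℂ) * Complex.I) • z)‖ := by
    intro θ; simp only [hH, norm_mul, norm_pow, hn]; simp
  have nS : ∀ θ, ‖S θ‖ = ‖Sd κ h (Complex.exp ((θ:ℂ) * Complex.I) • z)‖ := by
    intro θ; simp only [hS, norm_mul, norm_pow, hn]; simp
  have nQ : ∀ θ : ℝ, ‖(Qz κ p z).eval (Complex.exp ((θ:ℂ) * Complex.I))‖ = ‖trueHermitePoly κ p (Complex.exp ((θ:ℂ) * Complex.I) • z)‖ := by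
    intro θ; rw [Qz_eval κ p z _ (hn θ), norm_mul, norm_pow, hn]; simp
  have nQH : ∀ θ : ℝ, ‖(Qz κ p z).eval (Complex.exp ((θ:ℂ) * Complex.I)) + H θ‖ = ‖trueHermitePoly κ p (Complex.exp ((θ:ℂ) * Complex.I) • z) + trueHermitePoly κ h (Complex.exp ((θ:ℂ) * Complex.I) • z)‖ := by
    intro θ; rw [Qz_eval κ p z _ (hn θ), hH, ← mul_add, norm_mul, norm_pow, hn]; simp
  simp_rw [nQ, nQH, nH, nS] at key
  refine key.trans ?_
  have hle : ∫ θ in (0:ℝ)..(2*Real.pi), (‖trueHermitePoly κ h (Complex.exp ((θ:ℂ) * Complex.I) • z)‖^2 + ‖Sd κ h (Complex.exp ((θ:ℂ) * Complex.I) • z)‖^2 / r^2)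
      ≤ ∫ θ in (0:ℝ)..(2*Real.pi), (‖trueHermitePoly κ h (Complex.exp ((θ:ℂ) * Complex.I) • z)‖^2 + Vd κ h (Complex.exp ((θ:ℂ) * Complex.I) • z)) := by
    apply intervalIntegral.integral_mono_on (by positivity)
    · simp_rw [← nS]
      apply Continuous.intervalIntegrable; fun_prop
    · apply Continuous.intervalIntegrable; fun_prop
    · intro θ _
      have h1 := Sd_le κ h (Complex.exp ((θ:ℂ) * Complex.I) • z) (by rw [nsq_rot _ (hn θ)]; nlinarith)
      rw [nsq_rot _ (hn θ), ← hr2] at h1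
      have : ‖Sd κ h (Complex.exp ((θ:ℂ) * Complex.I) • z)‖^2 / r^2 ≤ Vd κ h (Complex.exp ((θ:ℂ) * Complex.I) • z) := by
        rw [div_le_iff₀ (by positivity)]; linarith
      linarith
  have hpos : 0 ≤ ∫ θ in (0:ℝ)..(2*Real.pi), (‖trueHermitePoly κ h (Complex.exp ((θ:ℂ) * Complex.I) • z)‖^2 + ‖Sd κ h (Complex.exp ((θ:ℂ) * Complex.I) • z)‖^2 / r^2) :=
    intervalIntegral.integral_nonneg (by positivity) (fun t _ => by positivity)
  have hsq : (Real.sqrt r)⁻¹ ≤ (Real.sqrt R)⁻¹ := by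
    have : 0 < Real.sqrt R := Real.sqrt_pos.2 (by linarith)
    gcongr
  gcongr



lemma far_bound {d : ℕ} (κ : Fin d → ℕ) (p : (Fin d → ℕ) →₀ ℂ) : ∃ C : ℝ, 0 ≤ C ∧
    ∀ (h : (Fin d → ℕ) →₀ ℂ) (R : ℝ), 1 ≤ R →
    ∫ z in {z | R^2 ≤ nsq z}, ‖trueHermitePoly κ h z‖^2 ∂(gam d) ≤
     8 * (∫ z, (‖trueHermitePoly κ p z + trueHermitePoly κ h z‖ - ‖trueHermitePoly κ p z‖)^2 ∂(gam d))
      + C * (Real.sqrt R)⁻¹ * l2 h := by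
  obtain ⟨C, hC0, hC⟩ := circle_z κ p
  have hcv := CV_nonneg κ
  refine ⟨C * (1 + CV κ), by positivity, ?_⟩
  intro h R hR
  set A : Set (Fin d → ℂ) := {z | R^2 ≤ nsq z} with hA
  have hAm : MeasurableSet A := (isClosed_le continuous_const nsq_cont).measurableSet
  set C' := C * (Real.sqrt R)⁻¹ with hC'
  have hC'0 : 0 ≤ C' := by positivity
  set g : (Fin d → ℂ) → ℝ := fun z => (‖trueHermitePoly κ p z + trueHermitePoly κ h z‖ - ‖trueHermitePoly κ p z‖)^2 with hg
  have cT := T_cont κ h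
  have cP := T_cont κ p
  have cV := Vd_cont κ h
  have hgc : Continuous g := by fun_prop
  have hgi : Integrable g (gam d) := by
    refine (T_integrable κ h).mono' hgc.aestronglyMeasurable (Filter.Eventually.of_forall ?_)
    intro z
    rw [Real.norm_eq_abs, abs_of_nonneg (by positivity)]
    have := abs_norm_sub_norm_le (trueHermitePoly κ p z + trueHermitePoly κ h z) (trueHermitePoly κ p z)
    rw [add_sub_cancel_left] at this
    exact sq_le_sq' (by linarith [abs_le.1 this]) (abs_le.1 this).2
  have hV0 : ∀ z, 0 ≤ Vd κ h z := by intro z; unfold Vd; positivity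
  set f : (Fin d → ℂ) → ℝ := A.indicator (fun z => 8 * g z + C' * (‖trueHermitePoly κ h z‖^2 + Vd κ h z) - ‖trueHermitePoly κ h z‖^2) with hf
  have hbig : Integrable (fun z => 8 * g z + C' * (‖trueHermitePoly κ h z‖^2 + Vd κ h z)) (gam d) :=
    (hgi.const_mul _).add (((T_integrable κ h).add (Vd_integrable κ h)).const_mul _)
  have hfi : Integrable f (gam d) := (hbig.sub (T_integrable κ h)).indicator hAm
  have hfm : Measurable f := by
    apply Measurable.indicator _ hAm
    apply Continuous.measurable
    fun_prop
  have hpos := rot_nonneg f hfi hfm ?_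
  · rw [hf, integral_indicator hAm, integral_sub hbig.integrableOn (T_integrable κ h).integrableOn] at hpos
    have h1 : ∫ z in A, (8 * g z + C' * (‖trueHermitePoly κ h z‖^2 + Vd κ h z)) ∂(gam d) ≤
        ∫ z, (8 * g z + C' * (‖trueHermitePoly κ h z‖^2 + Vd κ h z)) ∂(gam d) := by
      apply setIntegral_le_integral hbig
      refine Filter.Eventually.of_forall (fun z => ?_)
      have := hV0 z
      simp only [Pi.zero_apply, hg]
      positivity
    have hTV : Integrable (fun z => ‖trueHermitePoly κ h z‖^2 + Vd κ h z) (gam d) :=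
      (T_integrable κ h).add (Vd_integrable κ h)
    rw [integral_add (hgi.const_mul _) (hTV.const_mul _),
      integral_const_mul, integral_const_mul, integral_add (T_integrable κ h) (Vd_integrable κ h), T_norm, Vd_integral] at h1
    have : C * (1 + CV κ) * (Real.sqrt R)⁻¹ * l2 h = C' * (l2 h + CV κ * l2 h) := by rw [hC']; ring
    rw [this]
    linarith
  · intro z
    by_cases hz : z ∈ A
    · have key := hC h R z hR hz
      have e : ∀ θ : ℝ, f (Complex.exp ((θ:ℂ) * Complex.I) • z) = 8 * g (Complex.exp ((θ:ℂ) * Complex.I) • z) + C' * (‖trueHermitePoly κ h (Complex.exp ((θ:ℂ) * Complex.I) • z)‖^2 + Vd κ h (Complex.exp ((θ:ℂ) * Complex.I) • z)) - ‖trueHermitePoly κ h (Complex.exp ((θ:ℂ) * Complex.I) • z)‖^2 := by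
        intro θ
        rw [hf, Set.indicator_of_mem]
        rw [hA, Set.mem_setOf_eq, nsq_rot _ (Complex.norm_exp_ofReal_mul_I θ)]
        exact hz
      simp_rw [e]
      rw [intervalIntegral.integral_sub, intervalIntegral.integral_add, intervalIntegral.integral_const_mul, intervalIntegral.integral_const_mul]
      · linarith
      all_goals apply Continuous.intervalIntegrable; fun_prop
    · have e : ∀ θ : ℝ, f (Complex.exp ((θ:ℂ) * Complex.I) • z) = 0 := by
        intro θ
        rw [hf, Set.indicator_of_notMem]
        rw [hA, Set.mem_setOf_eq, nsq_rot _ (Complex.norm_exp_ofReal_mul_I θ)]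
        exact hz
      simp [e]

/-- bounds of basis functions on polydiscs -/
noncomputable def Bb {d : ℕ} (κ : Fin d → ℕ) (ρ : ℝ) (α : Fin d → ℕ) : ℝ :=
  ∏ q, (ρ ^ (κ q) * ((ρ * 2 ^ (κ q)) ^ (α q) * (Real.sqrt (Nat.factorial (α q)))⁻¹))

lemma Bb_nonneg {d : ℕ} (κ : Fin d → ℕ) (ρ : ℝ) (h1 : 1 ≤ ρ) (α : Fin d → ℕ) : 0 ≤ Bb κ ρ α := by
  unfold Bb; positivity

/-- two-variable basis functions -/
noncomputable def Phi2 {d : ℕ} (κ α : Fin d → ℕ) (z w : Fin d → ℂ) : ℂ := ∏ q, H2 (κ q) (α q) (z q) (w q)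

lemma Phi2_bound {d : ℕ} (κ α : Fin d → ℕ) (z w : Fin d → ℂ) (ρ : ℝ) (h1 : 1 ≤ ρ)
    (hz : ∀ q, ‖z q‖ ≤ ρ) (hw : ∀ q, ‖w q‖ ≤ ρ) : ‖Phi2 κ α z w‖ ≤ Bb κ ρ α := by
  unfold Phi2 Bb
  rw [norm_prod]
  exact Finset.prod_le_prod (fun _ _ => norm_nonneg _) (fun q _ => H2_bound _ _ _ _ _ h1 (hz q) (hw q))

lemma Phi_bound {d : ℕ} (κ α : Fin d → ℕ) (z : Fin d → ℂ) (ρ : ℝ) (h1 : 1 ≤ ρ)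
    (hz : ∀ q, ‖z q‖ ≤ ρ) : ‖PhiBasis κ α z‖ ≤ Bb κ ρ α := by
  rw [PhiBasis_eq]
  exact Phi2_bound κ α z (fun q => cj (z q)) ρ h1 hz (fun q => by simpa using hz q)

lemma summable_pi_prod {d : ℕ} (b : Fin d → ℕ → ℝ) (h0 : ∀ q n, 0 ≤ b q n) (hb : ∀ q, Summable (b q)) :
    Summable (fun α : Fin d → ℕ => ∏ q, b q (α q)) := by
  refine summable_of_sum_le (c := ∏ q, ∑' n, b q n) (fun α => Finset.prod_nonneg (fun q _ => h0 q _)) ?_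
  intro s
  have hsub : s ⊆ Fintype.piFinset (fun q => s.image (fun α => α q)) := by
    intro α hα
    rw [Fintype.mem_piFinset]
    intro q
    exact Finset.mem_image_of_mem _ hα
  calc ∑ α ∈ s, ∏ q, b q (α q) ≤ ∑ α ∈ Fintype.piFinset (fun q => s.image (fun α => α q)), ∏ q, b q (α q) :=
        Finset.sum_le_sum_of_subset_of_nonneg hsub (fun α _ _ => Finset.prod_nonneg (fun q _ => h0 q _))
    _ = ∏ q, ∑ n ∈ s.image (fun α => α q), b q n := (Finset.prod_univ_sum _ _).symm
    _ ≤ ∏ q, ∑' n, b q n := Finset.prod_le_prod (fun q _ => Finset.sum_nonneg (fun n _ => h0 q n))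
        (fun q _ => (hb q).sum_le_tsum _ (fun n _ => h0 q n))

lemma summable_sqrt_fact (x : ℝ) (hx : 0 ≤ x) : Summable (fun n : ℕ => x ^ n * (Real.sqrt (Nat.factorial n))⁻¹) := by
  have hg : Summable (fun n : ℕ => Real.sqrt (Real.exp ((2*x)^2)) * (1/2 : ℝ)^n) :=
    (summable_geometric_of_lt_one (by norm_num) (by norm_num)).mul_left _
  refine Summable.of_nonneg_of_le (fun n => by positivity) (fun n => ?_) hg
  have h1 : ((2*x)^n * (Real.sqrt (Nat.factorial n))⁻¹) ≤ Real.sqrt (Real.exp ((2*x)^2)) := by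
    apply Real.le_sqrt_of_sq_le
    rw [mul_pow, inv_pow, Real.sq_sqrt (by positivity), ← pow_mul, mul_comm n 2, pow_mul, ← div_eq_mul_inv]
    exact Real.pow_div_factorial_le_exp _ (by positivity) n
  have h2 : x ^ n * (Real.sqrt (Nat.factorial n))⁻¹ = ((2*x)^n * (Real.sqrt (Nat.factorial n))⁻¹) * (1/2 : ℝ)^n := by
    have : x^n = (2*x)^n * (1/2 : ℝ)^n := by rw [← mul_pow]; congr 1; ring
    rw [this]; ring
  rw [h2]
  gcongr

lemma Bb_summable {d : ℕ} (κ : Fin d → ℕ) (ρ : ℝ) (h1 : 1 ≤ ρ) (t : ℝ) (ht : 0 ≤ t) :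
    Summable (fun α => t ^ (deg α) * Bb κ ρ α) := by
  have h := summable_pi_prod (d := d) (fun q n => ρ ^ (κ q) * ((t * (ρ * 2 ^ (κ q))) ^ n * (Real.sqrt (Nat.factorial n))⁻¹))
    (fun q n => by positivity) (fun q => (summable_sqrt_fact _ (by positivity)).mul_left _)
  refine h.congr (fun α => ?_)
  rw [Bb, deg, ← Finset.prod_pow_eq_pow_sum, ← Finset.prod_mul_distrib]
  apply Finset.prod_congr rfl
  intro q _
  rw [mul_pow]; ring

lemma Bb_summable1 {d : ℕ} (κ : Fin d → ℕ) (ρ : ℝ) (h1 : 1 ≤ ρ) : Summable (fun α => Bb κ ρ α) := by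
  simpa using Bb_summable κ ρ h1 1 zero_le_one

lemma l2_nonneg {d : ℕ} (c : (Fin d → ℕ) →₀ ℂ) : 0 ≤ l2 c := by unfold l2; positivity

lemma near_bound {d : ℕ} (κ : Fin d → ℕ) (R : ℝ) (hR : 1 ≤ R) : ∃ (C : ℝ) (A : Finset (Fin d → ℕ)), 0 ≤ C ∧
    ∀ (h : (Fin d → ℕ) →₀ ℂ),
    ∫ z in {z | R^2 ≤ nsq z}ᶜ, ‖trueHermitePoly κ h z‖^2 ∂(gam d) ≤ C * ∑ α ∈ A, ‖h α‖^2 + 1/4 * l2 h := by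
  have hs := Bb_summable1 κ R hR
  have hev := (tendsto_tsum_compl_atTop_zero (fun α => Bb κ R α)).eventually (gt_mem_nhds (by norm_num : (0:ℝ) < 1/4))
  obtain ⟨A, hA⟩ := hev.exists
  refine ⟨2 * ∑ α ∈ A, (Bb κ R α)^2, A, by positivity, ?_⟩
  intro h
  set M := 2 * (∑ α ∈ A, (Bb κ R α)^2) * ∑ α ∈ A, ‖h α‖^2 + 1/4 * l2 h with hM
  have hM0 : 0 ≤ M := by have := l2_nonneg h; positivity
  have hB0 := Bb_nonneg κ R hR
  have pt : ∀ z ∈ {z : Fin d → ℂ | R^2 ≤ nsq z}ᶜ, ‖trueHermitePoly κ h z‖^2 ≤ M := by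
    intro z hz
    have hz' : nsq z < R^2 := by simpa using hz
    have hzq : ∀ q, ‖z q‖ ≤ R := by
      intro q
      have h1 : ‖z q‖^2 ≤ nsq z := Finset.single_le_sum (f := fun q => ‖z q‖^2) (fun _ _ => by positivity) (Finset.mem_univ q)
      exact le_of_sq_le_sq (by linarith) (by linarith)
    have hl : ∀ α, ‖h α‖ ≤ Real.sqrt (l2 h) := fun α => Real.le_sqrt_of_sq_le (coeff_le h α)
    have h1 : ‖trueHermitePoly κ h z‖ ≤ ∑ α ∈ A, ‖h α‖ * Bb κ R α + Real.sqrt (l2 h) * (1/4) := by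
      rw [T_sum_superset κ h z (h.support ∪ A) Finset.subset_union_left]
      refine (norm_sum_le _ _).trans ?_
      have h2 : ∑ α ∈ h.support ∪ A, ‖h α * PhiBasis κ α z‖ ≤ ∑ α ∈ h.support ∪ A, ‖h α‖ * Bb κ R α := by
        apply Finset.sum_le_sum
        intro α _
        rw [norm_mul]
        gcongr
        exact Phi_bound κ α z R hR hzq
      refine h2.trans ?_
      rw [← Finset.sum_sdiff (Finset.subset_union_right : A ⊆ h.support ∪ A), add_comm]
      gcongr
      calc ∑ α ∈ (h.support ∪ A) \ A, ‖h α‖ * Bb κ R α ≤ ∑ α ∈ (h.support ∪ A) \ A, Real.sqrt (l2 h) * Bb κ R α := by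
            apply Finset.sum_le_sum
            intro α _
            have := hB0 α
            gcongr
            exact hl α
        _ = Real.sqrt (l2 h) * ∑ α ∈ (h.support ∪ A) \ A, Bb κ R α := by rw [Finset.mul_sum]
        _ ≤ Real.sqrt (l2 h) * (1/4) := by
            gcongr
            refine le_trans ?_ hA.le
            have hsub := hs.subtype (fun α => α ∉ A)
            have hh := hsub.sum_le_tsum (((h.support ∪ A) \ A).subtype (fun α => α ∉ A)) (fun α _ => hB0 α)
            refine le_trans (le_of_eq ?_) hh
            rw [Finset.sum_subtype_of_mem]
            · intro α hα
              exact (Finset.mem_sdiff.1 hα).2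
    have h3 : (∑ α ∈ A, ‖h α‖ * Bb κ R α)^2 ≤ (∑ α ∈ A, ‖h α‖^2) * ∑ α ∈ A, (Bb κ R α)^2 :=
      Finset.sum_mul_sq_le_sq_mul_sq _ _ _
    have h4 := Real.sq_sqrt (l2_nonneg h)
    have h5 : 0 ≤ ∑ α ∈ A, ‖h α‖ * Bb κ R α := Finset.sum_nonneg (fun α _ => mul_nonneg (norm_nonneg _) (hB0 α))
    rw [hM]
    set X := ∑ α ∈ A, ‖h α‖ * Bb κ R α
    have h6 : ‖trueHermitePoly κ h z‖^2 ≤ (X + Real.sqrt (l2 h) * (1/4))^2 := by gcongr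
    nlinarith [sq_nonneg (X - Real.sqrt (l2 h) * (1/4)), l2_nonneg h]
  have hAm : MeasurableSet {z : Fin d → ℂ | R^2 ≤ nsq z}ᶜ := (isClosed_le continuous_const nsq_cont).measurableSet.compl
  calc ∫ z in {z | R^2 ≤ nsq z}ᶜ, ‖trueHermitePoly κ h z‖^2 ∂(gam d) ≤ ∫ z in {z | R^2 ≤ nsq z}ᶜ, M ∂(gam d) := by
        apply setIntegral_mono_on (T_integrable κ h).integrableOn (integrable_const M).integrableOn hAm pt
    _ ≤ M := by
        rw [setIntegral_const, smul_eq_mul]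
        have : (gam d).real ({z : Fin d → ℂ | R^2 ≤ nsq z}ᶜ) ≤ 1 := by
          rw [← gam_real_univ d]; exact measureReal_mono (Set.subset_univ _)
        nlinarith
    _ = _ := by rw [hM]

lemma partD {d : ℕ} (κ : Fin d → ℕ) (p : (Fin d → ℕ) →₀ ℂ) : ∃ (C : ℝ) (A : Finset (Fin d → ℕ)), 0 ≤ C ∧
    ∀ (h : (Fin d → ℕ) →₀ ℂ),
    l2 h ≤ C * (∫ z, (‖trueHermitePoly κ p z + trueHermitePoly κ h z‖ - ‖trueHermitePoly κ p z‖)^2 ∂(gam d))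
      + C * ∑ α ∈ A, ‖h α‖^2 := by
  obtain ⟨C, hC0, hC⟩ := far_bound κ p
  obtain ⟨R, hR1, hR⟩ : ∃ R : ℝ, 1 ≤ R ∧ C * (Real.sqrt R)⁻¹ ≤ 1/4 := by
    refine ⟨(4 * C + 1)^2, by nlinarith, ?_⟩
    rw [Real.sqrt_sq (by positivity), ← div_eq_mul_inv, div_le_iff₀ (by positivity)]
    linarith
  obtain ⟨C', A, hC'0, hC'⟩ := near_bound κ R hR1
  refine ⟨16 + 2 * C', A, by positivity, ?_⟩
  intro h
  have h1 := hC h R hR1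
  have h2 := hC' h
  have h3 := integral_add_compl (s := {z : Fin d → ℂ | R^2 ≤ nsq z}) (isClosed_le continuous_const nsq_cont).measurableSet (T_integrable κ h)
  rw [T_norm] at h3
  have h4 : C * (Real.sqrt R)⁻¹ * l2 h ≤ 1/4 * l2 h := by
    have := l2_nonneg h
    gcongr
  have h5 : 0 ≤ ∫ z, (‖trueHermitePoly κ p z + trueHermitePoly κ h z‖ - ‖trueHermitePoly κ p z‖)^2 ∂(gam d) :=
    integral_nonneg (fun z => sq_nonneg _)
  have h6 : 0 ≤ ∑ α ∈ A, ‖h α‖^2 := by positivity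
  nlinarith [mul_nonneg hC'0 h5]



lemma T_zero_ae {d : ℕ} (κ : Fin d → ℕ) (a : (Fin d → ℕ) →₀ ℂ)
    (h : ∀ᵐ z ∂(volume : Measure (Fin d → ℂ)), trueHermitePoly κ a z = 0) : a = 0 := by
  have h1 : l2 a = 0 := by
    rw [← T_norm κ a]
    have : ∀ᵐ z ∂(gam d), ‖trueHermitePoly κ a z‖^2 = 0 := by
      filter_upwards [(gam_ac d).ae_le h] with z hz
      simp [hz]
    rw [integral_congr_ae this]; simp
  ext α
  have := coeff_le a α
  rw [h1] at this
  have h2 : ‖a α‖ = 0 := by nlinarith [norm_nonneg (a α)]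
  simpa using h2

lemma T_zero {d : ℕ} (κ : Fin d → ℕ) (a : (Fin d → ℕ) →₀ ℂ)
    (h : ∀ z, trueHermitePoly κ a z = 0) : a = 0 :=
  T_zero_ae κ a (Filter.Eventually.of_forall h)

lemma T_line_analytic {d : ℕ} (κ : Fin d → ℕ) (a : (Fin d → ℕ) →₀ ℂ) (v w : Fin d → ℂ) :
    AnalyticOnNhd ℝ (fun s : ℝ => trueHermitePoly κ a (v + s • w)) Set.univ := by
  intro s _
  have hs : AnalyticAt ℝ (fun s : ℝ => (s : ℂ)) s := Complex.ofRealCLM.analyticAt s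
  have e : (fun s : ℝ => trueHermitePoly κ a (v + s • w)) = fun s : ℝ => ∑ α ∈ a.support, a α *
      ∏ q, (nc (κ q) (α q) : ℂ) * ∑ j ∈ Finset.range (κ q + 1),
      (-1 : ℂ) ^ j * (Nat.choose (κ q) j : ℂ) * (Nat.descFactorial (α q) j : ℂ) *
        (v q + (s:ℂ) * w q) ^ (α q - j) * (cj (v q) + (s:ℂ) * cj (w q)) ^ (κ q - j) := by
    funext s
    rw [T_eq]
    apply Finset.sum_congr rfl
    intro α _
    rw [PhiBasis_eq]
    simp [H2, Hu]
  rw [e]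
  apply Finset.analyticAt_fun_sum
  intro α _
  apply AnalyticAt.mul analyticAt_const
  apply Finset.analyticAt_fun_prod
  intro q _
  apply AnalyticAt.mul analyticAt_const
  apply Finset.analyticAt_fun_sum
  intro j _
  fun_prop

lemma T_ne_ae {d : ℕ} (κ : Fin d → ℕ) (a : (Fin d → ℕ) →₀ ℂ) (ha : a ≠ 0) :
    ∀ᵐ z ∂(volume : Measure (Fin d → ℂ)), trueHermitePoly κ a z ≠ 0 := by
  obtain ⟨v, hv⟩ : ∃ v, trueHermitePoly κ a v ≠ 0 := by
    by_contra! hcon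
    exact ha (T_zero κ a hcon)
  have hc := T_cont κ a
  have h1 : ∀ᵐ z ∂(volume : Measure (Fin d → ℂ)), ∀ᵐ s ∂(volume : Measure ℝ), trueHermitePoly κ a (v + s • (z - v)) ≠ 0 := by
    refine Filter.Eventually.of_forall (fun z => ?_)
    have h2 := (T_line_analytic κ a v (z - v)).preimage_zero_mem_codiscrete (x := 0) (by simpa using hv)
    have h3 := ae_restrict_le_codiscreteWithin (μ := (volume : Measure ℝ)) MeasurableSet.univ h2
    rw [Measure.restrict_univ] at h3
    exact h3
  rw [Measure.ae_ae_comm] at h1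
  · have h4 : ∀ᵐ s ∂(volume : Measure ℝ), s ≠ 0 := by
      rw [ae_iff]; simp
    obtain ⟨s, hs, hs0⟩ := (h1.and h4).exists
    rw [ae_iff] at hs ⊢
    simp only [not_not] at hs ⊢
    have e : {z | trueHermitePoly κ a (v + s • (z - v)) = 0} =
        (fun z => s • z) ⁻¹' ((fun z => z + (v - s • v)) ⁻¹' {z | trueHermitePoly κ a z = 0}) := by
      ext z
      simp only [Set.mem_ofPred_eq, Set.mem_preimage]
      rw [show v + s • (z - v) = s • z + (v - s • v) by rw [smul_sub]; abel]
    rw [e, Measure.addHaar_preimage_smul _ hs0, measure_preimage_add_right] at hs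
    simpa [hs0] using hs
  · apply IsOpen.measurableSet
    apply isOpen_ne_fun _ continuous_const
    exact hc.comp (by fun_prop)




/-- one-variable series graded by `deg` -/
noncomputable def Es {d : ℕ} (x : (Fin d → ℕ) → ℂ) (u : ℂ) : ℂ := ∑' α, x α * u ^ deg α

def Sm {d : ℕ} (x : (Fin d → ℕ) → ℂ) : Prop := ∀ t : ℝ, 0 ≤ t → Summable (fun α => ‖x α‖ * t ^ deg α)

lemma Sm_conj {d : ℕ} (x : (Fin d → ℕ) → ℂ) (h : Sm x) : Sm (fun α => cj (x α)) := by
  intro t ht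
  simpa using h t ht

lemma Sm_summable {d : ℕ} (x : (Fin d → ℕ) → ℂ) (h : Sm x) (u : ℂ) : Summable (fun α => x α * u ^ deg α) := by
  apply Summable.of_norm
  simpa using h ‖u‖ (norm_nonneg u)

lemma Es_bound {d : ℕ} (x : (Fin d → ℕ) → ℂ) (h : Sm x) (u : ℂ) (t : ℝ) (ht : ‖u‖ ≤ t) :
    ‖Es x u‖ ≤ ∑' α, ‖x α‖ * t ^ deg α := by
  have h0 : 0 ≤ t := (norm_nonneg u).trans ht
  unfold Es
  refine tsum_of_norm_bounded (h t h0).hasSum (fun α => ?_)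
  rw [norm_mul, norm_pow]
  gcongr

lemma Es_diff {d : ℕ} (x : (Fin d → ℕ) → ℂ) (h : Sm x) : Differentiable ℂ (Es x) := by
  intro u
  have h1 : DifferentiableOn ℂ (Es x) (Metric.ball 0 (‖u‖ + 1)) := by
    apply Complex.differentiableOn_tsum_of_summable_norm (h (‖u‖+1) (by positivity))
    · intro α
      fun_prop
    · exact Metric.isOpen_ball
    · intro α w hw
      rw [norm_mul, norm_pow]
      have : ‖w‖ ≤ ‖u‖ + 1 := by simpa using (mem_ball_zero_iff.1 hw).le
      gcongr
  exact h1.differentiableAt (Metric.isOpen_ball.mem_nhds (by simp))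

lemma Es_conj {d : ℕ} (x : (Fin d → ℕ) → ℂ) (u : ℂ) : cj (Es x u) = Es (fun α => cj (x α)) (cj u) := by
  unfold Es
  rw [Complex.conj_tsum]
  simp

lemma entire_zero (D : ℂ → ℂ) (hD : Differentiable ℂ D) (h : ∀ s : ℝ, D s = 0) (t : ℂ) : D t = 0 := by
  have hA : AnalyticOnNhd ℂ D Set.univ := fun z _ => hD.analyticAt z
  have h0 : AnalyticOnNhd ℂ (fun _ : ℂ => (0:ℂ)) Set.univ := analyticOnNhd_const
  have := hA.eq_of_frequently_eq h0 (z₀ := 0) ?_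
  · rw [this]
  · have ht : Filter.Tendsto (fun n : ℕ => (((1 / ((n:ℝ) + 1) : ℝ)) : ℂ)) Filter.atTop (nhdsWithin 0 {0}ᶜ) := by
      apply tendsto_nhdsWithin_iff.2
      constructor
      · have := (Complex.continuous_ofReal.tendsto 0).comp tendsto_one_div_add_atTop_nhds_zero_nat
        rw [Complex.ofReal_zero] at this
        exact this
      · refine Filter.Eventually.of_forall (fun n => ?_)
        have : (0:ℝ) < 1 / ((n:ℝ)+1) := by positivity
        simp only [Set.mem_compl_iff, Set.mem_singleton_iff, Complex.ofReal_eq_zero]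
        exact this.ne'
    refine ht.frequently (Filter.Eventually.frequently (Filter.Eventually.of_forall (fun n => h _)))

/-- multi-indices of degree `m` -/
def dset (d m : ℕ) : Finset (Fin d → ℕ) := Finset.piAntidiag Finset.univ m

lemma mem_dset {d m : ℕ} (α : Fin d → ℕ) : α ∈ dset d m ↔ deg α = m := by
  simp [dset, deg]

lemma exp_int (a m : ℕ) : ∫ θ in (0:ℝ)..(2 * Real.pi), Complex.exp ((θ:ℂ) * Complex.I) ^ a * Complex.exp (-((θ:ℂ) * Complex.I)) ^ m
    = if a = m then (2 * Real.pi : ℂ) else 0 := by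
  split_ifs with h
  · subst h
    have : ∀ θ : ℝ, Complex.exp ((θ:ℂ) * Complex.I) ^ a * Complex.exp (-((θ:ℂ) * Complex.I)) ^ a = 1 := by
      intro θ
      rw [← mul_pow, ← Complex.exp_add]; simp
    simp [this]
  · have hc : (((a:ℂ) - m) * Complex.I) ≠ 0 := by
      apply mul_ne_zero _ Complex.I_ne_zero
      rw [sub_ne_zero]; exact_mod_cast h
    have : ∀ θ : ℝ, Complex.exp ((θ:ℂ) * Complex.I) ^ a * Complex.exp (-((θ:ℂ) * Complex.I)) ^ m = Complex.exp ((((a:ℂ) - m) * Complex.I) * θ) := by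
      intro θ
      rw [← Complex.exp_nat_mul, ← Complex.exp_nat_mul, ← Complex.exp_add]; congr 1; ring
    simp_rw [this]
    rw [integral_exp_mul_complex hc]
    have e : Complex.exp (((a:ℂ) - m) * Complex.I * ((2 * Real.pi : ℝ) : ℂ)) = 1 := by
      have := Complex.exp_int_mul_two_pi_mul_I ((a:ℤ) - m)
      rw [← this]; congr 1; push_cast; ring
    rw [e]; simp

lemma Es_coeff {d : ℕ} (x : (Fin d → ℕ) → ℂ) (h : Sm x) (R : ℝ) (hR : 0 ≤ R) (m : ℕ) :
    ∫ θ in (0:ℝ)..(2 * Real.pi), Es x (R * Complex.exp ((θ:ℂ) * Complex.I)) * Complex.exp (-((θ:ℂ) * Complex.I)) ^ m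
     = 2 * Real.pi * R ^ m * ∑ α ∈ dset d m, x α := by
  have key := intervalIntegral.hasSum_integral_of_dominated_convergence (a := 0) (b := 2 * Real.pi) (μ := volume)
    (f := fun θ : ℝ => Es x (R * Complex.exp ((θ:ℂ) * Complex.I)) * Complex.exp (-((θ:ℂ) * Complex.I)) ^ m)
    (F := fun α (θ : ℝ) => (x α * (R * Complex.exp ((θ:ℂ) * Complex.I)) ^ deg α) * Complex.exp (-((θ:ℂ) * Complex.I)) ^ m)
    (fun α _ => ‖x α‖ * R ^ deg α) ?_ ?_ ?_ ?_ ?_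
  · rw [← key.tsum_eq, tsum_eq_sum (s := dset d m), Finset.mul_sum]
    · apply Finset.sum_congr rfl
      intro α hα
      rw [mem_dset] at hα
      have : ∀ θ : ℝ, (x α * (R * Complex.exp ((θ:ℂ) * Complex.I)) ^ deg α) * Complex.exp (-((θ:ℂ) * Complex.I)) ^ m
        = (x α * R ^ deg α) * (Complex.exp ((θ:ℂ) * Complex.I) ^ deg α * Complex.exp (-((θ:ℂ) * Complex.I)) ^ m) := by
        intro θ; rw [mul_pow]; ring
      simp_rw [this]
      rw [intervalIntegral.integral_const_mul, exp_int, if_pos hα, hα]; ring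
    · intro α hα
      rw [mem_dset] at hα
      have : ∀ θ : ℝ, (x α * (R * Complex.exp ((θ:ℂ) * Complex.I)) ^ deg α) * Complex.exp (-((θ:ℂ) * Complex.I)) ^ m
        = (x α * R ^ deg α) * (Complex.exp ((θ:ℂ) * Complex.I) ^ deg α * Complex.exp (-((θ:ℂ) * Complex.I)) ^ m) := by
        intro θ; rw [mul_pow]; ring
      simp_rw [this]
      rw [intervalIntegral.integral_const_mul, exp_int, if_neg hα, mul_zero]
  · intro α
    exact (by fun_prop : Continuous _).aestronglyMeasurable
  · intro α
    refine Filter.Eventually.of_forall (fun θ _ => ?_)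
    have e : ‖Complex.exp (-((θ:ℂ) * Complex.I))‖ = 1 := by
      have := Complex.norm_exp_ofReal_mul_I (-θ)
      rw [← this]; congr 2; push_cast; ring
    rw [norm_mul, norm_mul, norm_pow, norm_pow, norm_mul, Complex.norm_exp_ofReal_mul_I, e]
    simp [abs_of_nonneg hR]
  · exact Filter.Eventually.of_forall (fun θ _ => h R hR)
  · exact intervalIntegrable_const
  · refine Filter.Eventually.of_forall (fun θ _ => ?_)
    exact ((Sm_summable x h _).hasSum).mul_right _

/-- Cauchy estimates -/
lemma Es_liouville {d : ℕ} (x : (Fin d → ℕ) → ℂ) (h : Sm x) (C R0 : ℝ) (N : ℕ)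
    (hb : ∀ t : ℂ, R0 ≤ ‖t‖ → ‖Es x t‖ ≤ C * ‖t‖ ^ N) (m : ℕ) (hm : N < m) : ∑ α ∈ dset d m, x α = 0 := by
  have key : ∀ R : ℝ, max R0 1 ≤ R → ‖∑ α ∈ dset d m, x α‖ * R ≤ C := by
    intro R hR
    have hR1 : 1 ≤ R := (le_max_right _ _).trans hR
    have hR0 : R0 ≤ R := (le_max_left _ _).trans hR
    have h1 := Es_coeff x h R (by linarith) m
    have h2 : ‖∫ θ in (0:ℝ)..(2 * Real.pi), Es x (R * Complex.exp ((θ:ℂ) * Complex.I)) * Complex.exp (-((θ:ℂ) * Complex.I)) ^ m‖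
        ≤ (C * R ^ N) * |2 * Real.pi - 0| := by
      apply intervalIntegral.norm_integral_le_of_norm_le_const
      intro θ _
      have e : ‖Complex.exp (-((θ:ℂ) * Complex.I))‖ = 1 := by
        have := Complex.norm_exp_ofReal_mul_I (-θ)
        rw [← this]; congr 2; push_cast; ring
      have e2 : ‖(R:ℂ) * Complex.exp ((θ:ℂ) * Complex.I)‖ = R := by
        rw [norm_mul, Complex.norm_exp_ofReal_mul_I, Complex.norm_real, Real.norm_eq_abs, abs_of_nonneg (by linarith), mul_one]
      have := hb ((R:ℂ) * Complex.exp ((θ:ℂ) * Complex.I)) (by rw [e2]; exact hR0)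
      rw [e2] at this
      rw [norm_mul, norm_pow, e]
      simpa using this
    have hpi := Real.pi_pos
    rw [h1, sub_zero, abs_of_pos (by positivity), norm_mul, norm_mul, norm_pow] at h2
    simp only [norm_mul, Complex.norm_real, Complex.norm_ofNat, Real.norm_eq_abs, abs_of_pos hpi, abs_of_nonneg (by linarith : (0:ℝ) ≤ R)] at h2
    set X := ‖∑ α ∈ dset d m, x α‖
    have hX : 0 ≤ X := norm_nonneg _
    have h3 : R ^ m * X ≤ C * R ^ N := by
      have : (2 * Real.pi) * (R ^ m * X) ≤ (2 * Real.pi) * (C * R ^ N) := by linarith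
      exact le_of_mul_le_mul_left this (by positivity)
    have h4 : R ^ (N+1) ≤ R ^ m := pow_le_pow_right₀ hR1 hm
    have hRN : 0 < R ^ N := by positivity
    have h5 : R ^ N * (X * R) ≤ R ^ N * C := by
      calc R ^ N * (X * R) = R ^ (N+1) * X := by ring
        _ ≤ R ^ m * X := by gcongr
        _ ≤ R ^ N * C := by linarith
    exact le_of_mul_le_mul_left h5 hRN
  by_contra hne
  have hX : 0 < ‖∑ α ∈ dset d m, x α‖ := norm_pos_iff.2 hne
  have h1 := key (max (max R0 1) ((C + 1) / ‖∑ α ∈ dset d m, x α‖)) (le_max_left _ _)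
  have h2 : C + 1 ≤ ‖∑ α ∈ dset d m, x α‖ * (max (max R0 1) ((C + 1) / ‖∑ α ∈ dset d m, x α‖)) := by
    calc C + 1 = ‖∑ α ∈ dset d m, x α‖ * ((C + 1) / ‖∑ α ∈ dset d m, x α‖) := by field_simp
      _ ≤ _ := by gcongr; exact le_max_right _ _
  linarith




lemma Es_low {d : ℕ} (w : (Fin d → ℕ) → ℂ) (h : Sm w) (l : ℕ) (hl : ∀ α, deg α < l → w α = 0)
    (hne : ∑ α ∈ dset d l, w α ≠ 0) : ∃ r > 0, ∃ c > 0, ∀ u : ℂ, ‖u‖ ≤ r → c * ‖u‖ ^ l ≤ ‖Es w u‖ := by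
  set Q : ℂ → ℂ := fun u => ∑' α, w α * u ^ (deg α - l) with hQ
  have e : ∀ u, Es w u = u ^ l * Q u := by
    intro u
    rw [hQ, Es]
    simp only
    rw [← tsum_mul_left]
    apply tsum_congr
    intro α
    rcases lt_or_ge (deg α) l with h1 | h1
    · rw [hl α h1]; simp
    · rw [mul_left_comm, ← pow_add, Nat.add_sub_cancel' h1]
  have hc : ContinuousOn Q (Metric.closedBall 0 1) := by
    apply continuousOn_tsum (u := fun α => ‖w α‖ * 1 ^ deg α) _ (h 1 zero_le_one)
    · intro α u hu
      rw [norm_mul, norm_pow]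
      have : ‖u‖ ≤ 1 := by simpa using hu
      gcongr
      rw [one_pow]
      exact pow_le_one₀ (norm_nonneg _) this
    · intro α; fun_prop
  have hQ0 : Q 0 = ∑ α ∈ dset d l, w α := by
    rw [hQ]
    simp only
    rw [tsum_eq_sum (s := dset d l)]
    · apply Finset.sum_congr rfl
      intro α hα
      rw [mem_dset] at hα
      simp [hα]
    · intro α hα
      rw [mem_dset] at hα
      rcases lt_or_ge (deg α) l with h1 | h1
      · rw [hl α h1]; simp
      · rw [zero_pow (by omega), mul_zero]
  have hca : ContinuousAt Q 0 := hc.continuousAt (Metric.closedBall_mem_nhds _ one_pos)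
  have hpos : 0 < ‖Q 0‖ := by rw [hQ0]; exact norm_pos_iff.2 hne
  have hev := hca.norm.eventually (lt_mem_nhds (half_lt_self hpos))
  obtain ⟨r, hr, hball⟩ := Metric.eventually_nhds_iff.1 hev
  refine ⟨r/2, by positivity, ‖Q 0‖/2, by positivity, ?_⟩
  intro u hu
  have := hball (y := u) (by rw [dist_zero_right]; linarith)
  rw [e, norm_mul, norm_pow, mul_comm]
  gcongr

lemma F1_abs {d : ℕ} (x y : (Fin d → ℕ) → ℂ) (hx : Sm x) (hy : Sm y) (n l : ℕ) (ε : ℝ)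
    (hyn : ∀ α, n < deg α → y α = 0)
    (hl : ∀ α, deg α < l → y α + ε * x α = 0)
    (hne : ∑ α ∈ dset d l, (y α + ε * x α) ≠ 0)
    (hid : ∀ u : ℂ, ‖u‖ = 1 → Es x u * cj (Es y u) + cj (Es x u) * (Es y u + ε * Es x u) = 0)
    (m : ℕ) (hm : n + l < m) : ∑ α ∈ dset d m, x α = 0 := by
  set w : (Fin d → ℕ) → ℂ := fun α => y α + ε * x α with hw
  have hwS : Sm w := by
    intro t ht
    refine Summable.of_nonneg_of_le (fun α => by positivity) (fun α => ?_) ((hy t ht).add ((hx t ht).mul_left |ε|))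
    have : ‖w α‖ ≤ ‖y α‖ + |ε| * ‖x α‖ := by
      refine (norm_add_le _ _).trans ?_
      rw [norm_mul, Complex.norm_real, Real.norm_eq_abs]
    calc ‖w α‖ * t ^ deg α ≤ (‖y α‖ + |ε| * ‖x α‖) * t ^ deg α := by gcongr
      _ = _ := by ring
  have hEw : ∀ u, Es w u = Es y u + ε * Es x u := by
    intro u
    unfold Es
    rw [← tsum_mul_left, ← ((Sm_summable y hy u).tsum_add ((Sm_summable x hx u).mul_left _))]
    apply tsum_congr
    intro α; rw [hw]; ring
  set x' : (Fin d → ℕ) → ℂ := fun α => cj (x α) with hx'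
  set y' : (Fin d → ℕ) → ℂ := fun α => cj (y α) with hy'
  have hx'S : Sm x' := Sm_conj x hx
  have hy'S : Sm y' := Sm_conj y hy
  have hcirc : ∀ θ : ℂ, Es x (Complex.exp (θ * Complex.I)) * Es y' (Complex.exp (-(θ * Complex.I)))
      + Es x' (Complex.exp (-(θ * Complex.I))) * Es w (Complex.exp (θ * Complex.I)) = 0 := by
    apply entire_zero
    · have := Es_diff x hx
      have := Es_diff x' hx'S
      have := Es_diff y' hy'S
      have := Es_diff w hwS
      fun_prop
    · intro s
      have h1 := hid (Complex.exp ((s:ℂ) * Complex.I)) (Complex.norm_exp_ofReal_mul_I s)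
      rw [Es_conj, Es_conj, ← hEw] at h1
      have e : cj (Complex.exp ((s:ℂ) * Complex.I)) = Complex.exp (-((s:ℂ) * Complex.I)) := by
        rw [← Complex.exp_conj]; simp
      rw [e] at h1
      exact h1
  have hid2 : ∀ t : ℂ, t ≠ 0 → Es x t⁻¹ * Es y' t + Es x' t * Es w t⁻¹ = 0 := by
    intro t ht
    have h1 := hcirc (Complex.log t * Complex.I)
    have e1 : Complex.exp (-(Complex.log t * Complex.I * Complex.I)) = t := by
      rw [mul_assoc, Complex.I_mul_I]; simp [Complex.exp_log ht]
    have e2 : Complex.exp (Complex.log t * Complex.I * Complex.I) = t⁻¹ := by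
      rw [← neg_neg (Complex.log t * Complex.I * Complex.I), Complex.exp_neg, e1]
    rw [e1, e2] at h1
    exact h1
  obtain ⟨r, hr, c, hc, hlow⟩ := Es_low w hwS l hl hne
  set Cx := ∑' α, ‖x α‖ * (1:ℝ) ^ deg α with hCx
  set Cy := ∑' α, ‖y α‖ * (1:ℝ) ^ deg α with hCy
  have hCx0 : 0 ≤ Cx := tsum_nonneg (fun α => by positivity)
  have hyb : ∀ t : ℂ, 1 ≤ ‖t‖ → ‖Es y' t‖ ≤ Cy * ‖t‖ ^ n := by
    intro t ht
    rw [hCy, ← tsum_mul_right]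
    refine tsum_of_norm_bounded ((hy 1 zero_le_one).mul_right _).hasSum (fun α => ?_)
    rcases lt_or_ge n (deg α) with h1 | h1
    · rw [hy']; simp [hyn α h1]
    · rw [norm_mul, norm_pow, hy', one_pow, mul_one, RCLike.norm_conj]
      gcongr
  have hfin := Es_liouville x' hx'S (Cx * Cy / c) (max 1 r⁻¹) (n + l) ?_ m hm
  · have := congrArg cj hfin
    rw [map_sum] at this
    simpa [hx'] using this
  · intro t ht
    have ht1 : 1 ≤ ‖t‖ := (le_max_left _ _).trans ht
    have htr : r⁻¹ ≤ ‖t‖ := (le_max_right _ _).trans ht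
    have ht0 : t ≠ 0 := by rw [← norm_pos_iff]; linarith
    have htp : 0 < ‖t‖ := by linarith
    have h1 := hid2 t ht0
    have h2 : ‖Es x' t‖ * ‖Es w t⁻¹‖ = ‖Es x t⁻¹‖ * ‖Es y' t‖ := by
      rw [← norm_mul, ← norm_mul, ← norm_neg (Es x t⁻¹ * Es y' t)]
      congr 1
      linear_combination h1
    have h3 : c * ‖t⁻¹‖ ^ l ≤ ‖Es w t⁻¹‖ := by
      apply hlow
      rw [norm_inv]
      exact inv_le_of_inv_le₀ hr htr
    have h4 : ‖Es x t⁻¹‖ ≤ Cx := by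
      apply Es_bound x hx
      rw [norm_inv]
      exact inv_le_one_of_one_le₀ ht1
    have h5 := hyb t ht1
    have h6 : ‖Es x' t‖ * (c * ‖t⁻¹‖ ^ l) ≤ Cx * (Cy * ‖t‖ ^ n) := by
      calc _ ≤ ‖Es x' t‖ * ‖Es w t⁻¹‖ := by gcongr
        _ = _ := h2
        _ ≤ _ := by gcongr
    rw [norm_inv, inv_pow] at h6
    rw [pow_add]
    have h7 : 0 < ‖t‖ ^ l := by positivity
    have : ‖Es x' t‖ = (‖Es x' t‖ * (c * (‖t‖ ^ l)⁻¹)) * (‖t‖ ^ l / c) := by field_simp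
    rw [this]
    calc _ ≤ (Cx * (Cy * ‖t‖ ^ n)) * (‖t‖ ^ l / c) := by gcongr
      _ = _ := by ring




/-- infinite Hermite series -/
noncomputable def Ser {d : ℕ} (κ : Fin d → ℕ) (c : (Fin d → ℕ) → ℂ) (z : Fin d → ℂ) : ℂ :=
  ∑' α, c α * PhiBasis κ α z

noncomputable def restr {d : ℕ} (c : (Fin d → ℕ) → ℂ) (s : Finset (Fin d → ℕ)) : (Fin d → ℕ) →₀ ℂ :=
  Finsupp.onFinset s (fun α => if α ∈ s then c α else 0) (by intro α h; by_contra hc; simp [hc] at h)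

lemma restr_apply {d : ℕ} (c : (Fin d → ℕ) → ℂ) (s : Finset (Fin d → ℕ)) (α : Fin d → ℕ) :
    restr c s α = if α ∈ s then c α else 0 := rfl

lemma T_restr {d : ℕ} (κ : Fin d → ℕ) (c : (Fin d → ℕ) → ℂ) (s : Finset (Fin d → ℕ)) (z : Fin d → ℂ) :
    trueHermitePoly κ (restr c s) z = ∑ α ∈ s, c α * PhiBasis κ α z := by
  rw [T_sum_superset κ _ z s]
  · apply Finset.sum_congr rfl
    intro α hα
    rw [restr_apply, if_pos hα]
  · intro α hα
    rw [Finsupp.mem_support_iff, restr_apply] at hα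
    by_contra hc
    simp [hc] at hα

lemma Ser_Sm {d : ℕ} (κ : Fin d → ℕ) (c : (Fin d → ℕ) → ℂ) (B : ℝ) (hB : ∀ α, ‖c α‖ ≤ B) (z : Fin d → ℂ) :
    Sm (fun α => c α * PhiBasis κ α z) := by
  intro t ht
  have hρ : 1 ≤ 1 + ‖z‖ := by linarith [norm_nonneg z]
  have hB0 : 0 ≤ B := (norm_nonneg _).trans (hB 0)
  refine Summable.of_nonneg_of_le (fun α => by positivity) (fun α => ?_) ((Bb_summable κ (1 + ‖z‖) hρ t ht).mul_left B)
  have h1 := Phi_bound κ α z (1 + ‖z‖) hρ (fun q => by linarith [norm_le_pi_norm z q])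
  have h2 := Bb_nonneg κ _ hρ α
  rw [norm_mul]
  calc ‖c α‖ * ‖PhiBasis κ α z‖ * t ^ deg α ≤ B * Bb κ (1 + ‖z‖) α * t ^ deg α := by
        gcongr
        exact hB α
    _ = _ := by ring

lemma Ser_Es {d : ℕ} (κ : Fin d → ℕ) (c : (Fin d → ℕ) → ℂ) (z : Fin d → ℂ) (u : ℂ) (hu : ‖u‖ = 1) :
    Es (fun α => c α * PhiBasis κ α z) u = u ^ deg κ * Ser κ c (u • z) := by
  unfold Es Ser
  rw [← tsum_mul_left]
  apply tsum_congr
  intro α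
  linear_combination - c α * Phi_rot κ α z u hu

lemma Ser_T {d : ℕ} (κ : Fin d → ℕ) (p : (Fin d → ℕ) →₀ ℂ) (z : Fin d → ℂ) :
    Ser κ p z = trueHermitePoly κ p z := by
  unfold Ser
  rw [tsum_eq_sum (s := p.support), T_eq]
  intro α hα
  simp [Finsupp.notMem_support_iff.1 hα]

lemma p_bdd {d : ℕ} (p : (Fin d → ℕ) →₀ ℂ) (α : Fin d → ℕ) : ‖p α‖ ≤ Real.sqrt (l2 p) :=
  Real.le_sqrt_of_sq_le (coeff_le p α)

lemma fin_supp {d : ℕ} (κ : Fin d → ℕ) (p : (Fin d → ℕ) →₀ ℂ) (hp : p ≠ 0) (c : (Fin d → ℕ) → ℂ)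
    (hc : ∀ α, ‖c α‖ ≤ 1) (ε : ℝ)
    (hid : ∀ z, Ser κ c z * cj (trueHermitePoly κ p z) +
      cj (Ser κ c z) * (trueHermitePoly κ p z + ε * Ser κ c z) = 0) :
    ∃ c' : (Fin d → ℕ) →₀ ℂ, ∀ α, c α = c' α := by
  by_cases hall : ∀ α, p α + ε * c α = 0
  · have hε : (ε:ℂ) ≠ 0 := by
      intro h0
      apply hp
      ext α
      have := hall α
      simpa [h0] using this
    refine ⟨(-(ε:ℂ)⁻¹) • p, fun α => ?_⟩
    rw [Finsupp.smul_apply, smul_eq_mul]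
    have := hall α
    field_simp
    linear_combination this
  · push Not at hall
    have hex : ∃ l, ∃ α, deg α = l ∧ p α + ε * c α ≠ 0 := by
      obtain ⟨α, hα⟩ := hall
      exact ⟨deg α, α, rfl, hα⟩
    classical
    obtain ⟨α0, hα0, hα0'⟩ := Nat.find_spec hex
    set l := Nat.find hex with hl
    have hmin : ∀ α, deg α < l → p α + ε * c α = 0 := by
      intro α hα
      by_contra hne
      exact Nat.find_min hex hα ⟨α, rfl, hne⟩
    set a := restr (fun α => p α + ε * c α) (dset d l) with ha
    have ha0 : a ≠ 0 := by
      intro h0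
      have : a α0 = 0 := by rw [h0]; rfl
      rw [ha, restr_apply, if_pos ((mem_dset _).2 hα0)] at this
      exact hα0' this
    have hae := T_ne_ae κ a ha0
    have hvan : ∀ m, mdeg p + l < m → ∀ α, deg α = m → c α = 0 := by
      intro m hm
      have hz : restr c (dset d m) = 0 := by
        apply T_zero_ae κ
        filter_upwards [hae] with z hz
        rw [T_restr]
        apply F1_abs (fun α => c α * PhiBasis κ α z) (fun α => p α * PhiBasis κ α z) (Ser_Sm κ c 1 hc z)
          (Ser_Sm κ p _ (p_bdd p) z) (mdeg p) l ε _ _ _ _ m hm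
        · intro α hα
          have : α ∉ p.support := by
            intro hmem
            have : deg α ≤ mdeg p := Finset.le_sup (f := deg) hmem
            omega
          simp [Finsupp.notMem_support_iff.1 this]
        · intro α hα
          linear_combination PhiBasis κ α z * hmin α hα
        · rw [ha, T_restr] at hz
          convert hz using 2
          ring
        · intro u hu
          rw [Ser_Es κ c z u hu, Ser_Es κ p z u hu, Ser_T]
          have h1 := hid (u • z)
          have h2 : u ^ deg κ * cj (u ^ deg κ) = 1 := by
            rw [Complex.mul_conj, Complex.normSq_eq_norm_sq, norm_pow, hu]; simp
          rw [map_mul, map_mul]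
          linear_combination (u ^ deg κ * cj (u ^ deg κ)) * h1
      intro α hα
      have : restr c (dset d m) α = 0 := by rw [hz]; rfl
      rwa [restr_apply, if_pos ((mem_dset _).2 hα)] at this
    refine ⟨restr c ((Finset.range (mdeg p + l + 1)).biUnion (dset d)), fun α => ?_⟩
    rw [restr_apply]
    split_ifs with h
    · rfl
    · apply hvan (deg α) _ α rfl
      by_contra hle
      apply h
      rw [Finset.mem_biUnion]
      exact ⟨deg α, Finset.mem_range.2 (by omega), (mem_dset _).2 rfl⟩




/-- homogenized Hermite polynomial -/
noncomputable def Hs (k n : ℕ) (x y s : ℂ) : ℂ := (nc k n : ℂ) * ∑ j ∈ Finset.range (k + 1),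
      (-1 : ℂ) ^ j * (Nat.choose k j : ℂ) * (Nat.descFactorial n j : ℂ) *
        x ^ (n - j) * y ^ (k - j) * s ^ j

lemma Hs_zero (k n : ℕ) (x y : ℂ) : Hs k n x y 0 = nc k n * x ^ n * y ^ k := by
  unfold Hs
  rw [Finset.sum_range_succ', Finset.sum_eq_zero]
  · simp; ring
  · intro j _; simp

lemma Hs_right (k n : ℕ) (x y s : ℂ) (hs : s ≠ 0) : s ^ k * H2 k n x (s⁻¹ * y) = Hs k n x y s := by
  unfold Hs H2 Hu
  rw [mul_left_comm, Finset.mul_sum]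
  congr 1
  apply Finset.sum_congr rfl
  intro j hj
  have hjk : j ≤ k := by have := Finset.mem_range.1 hj; omega
  have : s ^ k = s ^ (k - j) * s ^ j := by rw [← pow_add]; congr 1; omega
  rw [this, mul_pow, inv_pow]
  field_simp

lemma Hs_left (k n : ℕ) (x y s : ℂ) (hs : s ≠ 0) : s ^ n * H2 k n (s⁻¹ * x) y = Hs k n x y s := by
  unfold Hs H2 Hu
  rw [mul_left_comm, Finset.mul_sum]
  congr 1
  apply Finset.sum_congr rfl
  intro j hj
  rcases lt_or_ge n j with h | h
  · rw [Nat.descFactorial_of_lt h]; simp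
  · have : s ^ n = s ^ (n - j) * s ^ j := by rw [← pow_add]; congr 1; omega
    rw [this, mul_pow, inv_pow]
    field_simp

noncomputable def Xf {d : ℕ} (κ : Fin d → ℕ) (S : Finset (Fin d → ℕ)) (b : (Fin d → ℕ) → ℂ) (z w : Fin d → ℂ) : ℂ :=
  ∑ α ∈ S, b α * Phi2 κ α z w

lemma Xf_diff {d : ℕ} (κ : Fin d → ℕ) (S : Finset (Fin d → ℕ)) (b : (Fin d → ℕ) → ℂ) (z z' w w' : Fin d → ℂ) :
    Differentiable ℂ (fun t : ℂ => Xf κ S b (z + t • z') (w + t • w')) := by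
  unfold Xf Phi2 H2 Hu
  simp only [Pi.add_apply, Pi.smul_apply, smul_eq_mul]
  fun_prop

lemma Xf_T {d : ℕ} (κ : Fin d → ℕ) (S : Finset (Fin d → ℕ)) (b : (Fin d → ℕ) →₀ ℂ) (hS : b.support ⊆ S) (z : Fin d → ℂ) :
    trueHermitePoly κ b z = Xf κ S b z (fun q => cj (z q)) := by
  rw [T_sum_superset κ b z S hS]
  unfold Xf Phi2
  simp_rw [PhiBasis_eq]

lemma Xf_conj {d : ℕ} (κ : Fin d → ℕ) (S : Finset (Fin d → ℕ)) (b : (Fin d → ℕ) → ℂ) (z w : Fin d → ℂ) :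
    cj (Xf κ S b z w) = Xf κ S (fun α => cj (b α)) (fun q => cj (z q)) (fun q => cj (w q)) := by
  unfold Xf Phi2
  simp [map_sum, map_prod, H2_conj]

lemma ext_id {d : ℕ} (κ : Fin d → ℕ) (S : Finset (Fin d → ℕ)) (p c : (Fin d → ℕ) →₀ ℂ) (ε : ℝ)
    (hc : c.support ⊆ S) (hp : p.support ⊆ S)
    (hid : ∀ z, trueHermitePoly κ c z * cj (trueHermitePoly κ p z) +
      cj (trueHermitePoly κ c z) * (trueHermitePoly κ p z + ε * trueHermitePoly κ c z) = 0) (z w : Fin d → ℂ) :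
    Xf κ S c z w * Xf κ S (fun α => cj (p α)) w z +
      Xf κ S (fun α => cj (c α)) w z * (Xf κ S p z w + ε * Xf κ S c z w) = 0 := by
  set ζ1 : Fin d → ℂ := fun q => (z q + cj (w q)) / 2 with h1
  set ζ2 : Fin d → ℂ := fun q => - Complex.I * (z q - cj (w q)) / 2 with h2
  set η1 : Fin d → ℂ := fun q => cj (ζ1 q) with h3
  set η2 : Fin d → ℂ := fun q => cj (ζ2 q) with h4
  have key := entire_zero (fun t : ℂ => Xf κ S c (ζ1 + t • ζ2) (η1 + t • η2) * Xf κ S (fun α => cj (p α)) (η1 + t • η2) (ζ1 + t • ζ2) +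
      Xf κ S (fun α => cj (c α)) (η1 + t • η2) (ζ1 + t • ζ2) * (Xf κ S p (ζ1 + t • ζ2) (η1 + t • η2) + ε * Xf κ S c (ζ1 + t • ζ2) (η1 + t • η2)))
    ?_ ?_ Complex.I
  · have e1 : ζ1 + Complex.I • ζ2 = z := by
      funext q
      simp only [h1, h2, Pi.add_apply, Pi.smul_apply, smul_eq_mul]
      linear_combination -((z q - cj (w q)) / 2) * Complex.I_mul_I
    have e2 : η1 + Complex.I • η2 = w := by
      funext q
      simp only [h1, h2, h3, h4, Pi.add_apply, Pi.smul_apply, smul_eq_mul]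
      simp only [map_div₀, map_add, map_mul, map_sub, map_neg, Complex.conj_conj, Complex.conj_I, map_ofNat]
      linear_combination ((cj (z q) - (w q)) / 2) * Complex.I_mul_I
    simp only [e1, e2] at key
    exact key
  · have := Xf_diff κ S c ζ1 ζ2 η1 η2
    have := Xf_diff κ S p ζ1 ζ2 η1 η2
    have := Xf_diff κ S (fun α => cj (c α)) η1 η2 ζ1 ζ2
    have := Xf_diff κ S (fun α => cj (p α)) η1 η2 ζ1 ζ2
    fun_prop
  · intro s
    have h := hid (ζ1 + (s:ℂ) • ζ2)
    have e : (fun q => cj ((ζ1 + (s:ℂ) • ζ2) q)) = η1 + (s:ℂ) • η2 := by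
      funext q; simp [h3, h4]
    have e' : (fun q => cj (cj ((ζ1 + (s:ℂ) • ζ2) q))) = ζ1 + (s:ℂ) • ζ2 := by
      funext q; simp
    rw [Xf_T κ S c hc, Xf_T κ S p hp, Xf_conj, Xf_conj, e, e'] at h
    exact h

/-- leading monomial sums -/
noncomputable def Mo {d : ℕ} (κ : Fin d → ℕ) (S : Finset (Fin d → ℕ)) (b : (Fin d → ℕ) → ℂ) (z : Fin d → ℂ) : ℂ :=
  ∑ α ∈ S, b α * ∏ q, ((nc (κ q) (α q) : ℂ) * z q ^ α q)

lemma lead_id {d : ℕ} (κ : Fin d → ℕ) (S : Finset (Fin d → ℕ)) (p c : (Fin d → ℕ) → ℂ) (ε : ℂ) (n : ℕ)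
    (hn : ∀ α ∈ S, deg α ≤ n)
    (hid : ∀ z w, Xf κ S c z w * Xf κ S (fun α => cj (p α)) w z +
      Xf κ S (fun α => cj (c α)) w z * (Xf κ S p z w + ε * Xf κ S c z w) = 0) (z w : Fin d → ℂ)
     (hz : ∏ q, z q ^ κ q ≠ 0) (hw : ∏ q, w q ^ κ q ≠ 0) :
    Mo κ S c z * Mo κ (S.filter (fun α => deg α = n)) (fun α => cj (p α)) w +
      Mo κ (S.filter (fun α => deg α = n)) (fun α => cj (c α)) w * (Mo κ S p z + ε * Mo κ S c z) = 0 := by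
  set U : ((Fin d → ℕ) → ℂ) → ℂ → ℂ := fun b s => ∑ α ∈ S, b α * ∏ q, Hs (κ q) (α q) (z q) (w q) s with hU
  set V : ((Fin d → ℕ) → ℂ) → ℂ → ℂ := fun b s => ∑ α ∈ S, b α * (s ^ (n - deg α) * ∏ q, Hs (κ q) (α q) (w q) (z q) s) with hV
  have hUc : ∀ b, Continuous (U b) := by
    intro b; simp only [hU, Hs]; fun_prop
  have hVc : ∀ b, Continuous (V b) := by
    intro b; simp only [hV, Hs]; fun_prop
  have hUs : ∀ b (s : ℂ), s ≠ 0 → U b s = s ^ deg κ * Xf κ S b z (s⁻¹ • w) := by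
    intro b s hs
    simp only [hU, Xf, Phi2, Finset.mul_sum]
    apply Finset.sum_congr rfl
    intro α _
    rw [mul_left_comm, deg, ← Finset.prod_pow_eq_pow_sum, ← Finset.prod_mul_distrib]
    congr 1
    apply Finset.prod_congr rfl
    intro q _
    rw [← Hs_right _ _ _ _ _ hs]; rfl
  have hVs : ∀ b (s : ℂ), s ≠ 0 → V b s = s ^ n * Xf κ S b (s⁻¹ • w) z := by
    intro b s hs
    simp only [hV, Xf, Phi2, Finset.mul_sum]
    apply Finset.sum_congr rfl
    intro α hα
    have : s ^ n = s ^ (n - deg α) * s ^ deg α := by rw [← pow_add]; congr 1; have := hn α hα; omega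
    have h5 : ∏ q, Hs (κ q) (α q) (w q) (z q) s = s ^ deg α * ∏ q, H2 (κ q) (α q) ((s⁻¹ • w) q) (z q) := by
      rw [deg, ← Finset.prod_pow_eq_pow_sum, ← Finset.prod_mul_distrib]
      apply Finset.prod_congr rfl
      intro q _
      rw [← Hs_left _ _ _ _ _ hs]; rfl
    rw [h5, this]; ring
  have hU0 : ∀ b, U b 0 = (∏ q, w q ^ κ q) * Mo κ S b z := by
    intro b
    simp only [hU, Mo, Finset.mul_sum]
    apply Finset.sum_congr rfl
    intro α _
    rw [mul_left_comm, ← Finset.prod_mul_distrib]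
    congr 1
    apply Finset.prod_congr rfl
    intro q _
    rw [Hs_zero]; ring
  have hV0 : ∀ b, V b 0 = (∏ q, z q ^ κ q) * Mo κ (S.filter (fun α => deg α = n)) b w := by
    intro b
    simp only [hV, Mo, Finset.mul_sum]
    rw [Finset.sum_filter]
    apply Finset.sum_congr rfl
    intro α hα
    split_ifs with h
    · rw [h, Nat.sub_self, pow_zero, one_mul, mul_left_comm, ← Finset.prod_mul_distrib]
      congr 1
      apply Finset.prod_congr rfl
      intro q _
      rw [Hs_zero]; ring
    · have := hn α hα
      rw [zero_pow (by omega)]; ring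
  have hfin : ∀ s : ℂ, U c s * V (fun α => cj (p α)) s + V (fun α => cj (c α)) s * (U p s + ε * U c s) = 0 := by
    have h1 : Set.EqOn (fun s => U c s * V (fun α => cj (p α)) s + V (fun α => cj (c α)) s * (U p s + ε * U c s)) (fun _ => 0) {0}ᶜ := by
      intro s hs
      have hs0 : s ≠ 0 := hs
      have := hid z (s⁻¹ • w)
      simp only [hUs _ s hs0, hVs _ s hs0]
      linear_combination (s ^ deg κ * s ^ n) * this
    have h2 := Continuous.ext_on (dense_compl_singleton (0:ℂ)) ?_ continuous_const h1
    · intro s; exact congrFun h2 s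
    · have := hUc c
      have := hUc p
      have := hVc (fun α => cj (p α))
      have := hVc (fun α => cj (c α))
      fun_prop
  have h0 := hfin 0
  rw [hU0, hU0, hV0, hV0] at h0
  have h3 : (∏ q, z q ^ κ q) * (∏ q, w q ^ κ q) ≠ 0 := mul_ne_zero hz hw
  apply mul_left_cancel₀ h3
  linear_combination h0

lemma mono_exists {d : ℕ} (κ : Fin d → ℕ) (S : Finset (Fin d → ℕ)) (b : (Fin d → ℕ) → ℂ)
    (hb : ∃ α ∈ S, b α ≠ 0) : ∃ z : Fin d → ℂ, Mo κ S b z ≠ 0 ∧ ∏ q, z q ^ κ q ≠ 0 := by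
  have hnc : ∀ κ α : Fin d → ℕ, (∏ q, (nc (κ q) (α q) : ℂ)) ≠ 0 := by
    intro κ α
    rw [Finset.prod_ne_zero_iff]
    intro q _
    exact_mod_cast (nc_pos _ _).ne'
  have hP : ∀ (α : Fin d → ℕ) z, PhiBasis (0 : Fin d → ℕ) α z = (∏ q, (nc 0 (α q) : ℂ)) * ∏ q, z q ^ α q := by
    intro α z
    rw [PhiBasis_eq, ← Finset.prod_mul_distrib]
    simp [H2, Hu_zero]
  set b' : (Fin d → ℕ) → ℂ := fun α => b α * (∏ q, (nc (κ q) (α q) : ℂ)) / (∏ q, (nc 0 (α q) : ℂ)) with hb'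
  have hM : ∀ z, Mo κ S b z = trueHermitePoly 0 (restr b' S) z := by
    intro z
    rw [T_restr, Mo]
    apply Finset.sum_congr rfl
    intro α _
    rw [hP, hb', Finset.prod_mul_distrib]
    have := hnc 0 α
    simp only [Pi.zero_apply] at this
    field_simp
  have h1 : restr b' S ≠ 0 := by
    intro h0
    obtain ⟨α, hα, hbα⟩ := hb
    have : restr b' S α = 0 := by rw [h0]; rfl
    rw [restr_apply, if_pos hα, hb'] at this
    have h2 := hnc 0 α
    simp only [Pi.zero_apply] at h2
    exact (div_ne_zero (mul_ne_zero hbα (hnc κ α)) h2) this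
  have h2 : (Finsupp.single κ (1:ℂ)) ≠ 0 := by simp
  obtain ⟨z, hz1, hz2⟩ := ((T_ne_ae 0 _ h1).and (T_ne_ae 0 _ h2)).exists
  refine ⟨z, by rw [hM]; exact hz1, ?_⟩
  intro h0
  apply hz2
  unfold trueHermitePoly
  rw [Finsupp.sum_single_index (by simp), hP, h0]; simp




lemma Mo_lin {d : ℕ} (κ : Fin d → ℕ) (S : Finset (Fin d → ℕ)) (a b : (Fin d → ℕ) → ℂ) (x y : ℂ) (z : Fin d → ℂ) :
    Mo κ S (fun α => x * a α + y * b α) z = x * Mo κ S a z + y * Mo κ S b z := by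
  simp only [Mo, Finset.mul_sum, ← Finset.sum_add_distrib]
  apply Finset.sum_congr rfl
  intro α _; ring

lemma prop_of_id {d : ℕ} (κ : Fin d → ℕ) (p c : (Fin d → ℕ) →₀ ℂ) (hp0 : p ≠ 0) (ε : ℝ)
    (hid : ∀ z, trueHermitePoly κ c z * cj (trueHermitePoly κ p z) +
      cj (trueHermitePoly κ c z) * (trueHermitePoly κ p z + ε * trueHermitePoly κ c z) = 0) :
    ∃ ν : ℂ, c = ν • p := by
  classical
  set S := c.support ∪ p.support with hS
  have hX := ext_id κ S p c ε Finset.subset_union_left Finset.subset_union_right hid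
  set n := S.sup deg with hn
  have hL := lead_id κ S p c ε n (fun α hα => Finset.le_sup (f := deg) hα) hX
  have hSne : S.Nonempty := by
    obtain ⟨α, hα⟩ := Finsupp.support_nonempty_iff.2 hp0
    exact ⟨α, Finset.mem_union_right _ hα⟩
  obtain ⟨β, hβS, hβ⟩ := Finset.exists_mem_eq_sup S hSne deg
  set S' := S.filter (fun α => deg α = n) with hS'
  have hβS' : β ∈ S' := Finset.mem_filter.2 ⟨hβS, hβ.symm⟩
  by_cases hA : ∃ α ∈ S', cj (c α) ≠ 0
  · obtain ⟨w, hw1, hw2⟩ := mono_exists κ S' (fun α => cj (c α)) hA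
    set τ := Mo κ S' (fun α => cj (c α)) w with hτ
    set σ := Mo κ S' (fun α => cj (p α)) w with hσ
    have hrel : ∀ α ∈ S, (σ + τ * ε) * c α + τ * p α = 0 := by
      by_contra! hne
      obtain ⟨z, hz1, hz2⟩ := mono_exists κ S (fun α => (σ + τ * ε) * c α + τ * p α) hne
      apply hz1
      rw [Mo_lin]
      have := hL z w hz2 hw2
      linear_combination this
    have hrel' : ∀ α, (σ + τ * ε) * c α + τ * p α = 0 := by
      intro α
      by_cases h : α ∈ S
      · exact hrel α h
      · rw [hS, Finset.mem_union, not_or] at h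
        rw [Finsupp.notMem_support_iff.1 h.1, Finsupp.notMem_support_iff.1 h.2]; simp
    have hne : σ + τ * ε ≠ 0 := by
      intro h0
      apply hp0
      ext α
      have := hrel' α
      rw [h0, zero_mul, zero_add] at this
      simpa [hw1] using this
    refine ⟨-τ / (σ + τ * ε), ?_⟩
    ext α
    rw [Finsupp.smul_apply, smul_eq_mul]
    field_simp
    linear_combination hrel' α
  · push Not at hA
    have hcβ : c β = 0 := by simpa using hA β hβS'
    have hpβ : p β ≠ 0 := by
      rw [hS, Finset.mem_union, Finsupp.mem_support_iff, Finsupp.mem_support_iff] at hβS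
      tauto
    obtain ⟨w, hw1, hw2⟩ := mono_exists κ S' (fun α => cj (p α)) ⟨β, hβS', by simpa using hpβ⟩
    have hτ : Mo κ S' (fun α => cj (c α)) w = 0 := by
      unfold Mo
      apply Finset.sum_eq_zero
      intro α hα
      simp only [hA α hα, zero_mul]
    refine ⟨0, ?_⟩
    rw [zero_smul]
    by_contra hc
    obtain ⟨α, hα⟩ := Finsupp.support_nonempty_iff.2 hc
    obtain ⟨z, hz1, hz2⟩ := mono_exists κ S c ⟨α, Finset.mem_union_left _ hα, Finsupp.mem_support_iff.1 hα⟩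
    have := hL z w hz2 hw2
    rw [hτ, zero_mul, add_zero] at this
    exact (mul_ne_zero hz1 hw1) this

lemma partF {d : ℕ} (κ : Fin d → ℕ) (p : (Fin d → ℕ) →₀ ℂ) (hp0 : p ≠ 0) (c : (Fin d → ℕ) → ℂ)
    (hc : ∀ α, ‖c α‖ ≤ 1) (ε : ℝ)
    (hid : ∀ z, 2 * (Ser κ c z * cj (trueHermitePoly κ p z)).re + ε * ‖Ser κ c z‖ ^ 2 = 0)
    (him : (∑ α ∈ p.support, c α * cj (p α)).im = 0)
    (hpos : 0 ≤ l2 p + ε * (∑ α ∈ p.support, c α * cj (p α)).re) : ∀ α, c α = 0 := by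
  have hid2 : ∀ z, Ser κ c z * cj (trueHermitePoly κ p z) +
      cj (Ser κ c z) * (trueHermitePoly κ p z + ε * Ser κ c z) = 0 := by
    intro z
    have h := congrArg (fun r : ℝ => (r : ℂ)) (hid z)
    push_cast at h
    have e1 := Complex.add_conj (Ser κ c z * cj (trueHermitePoly κ p z))
    have e2 : ((‖Ser κ c z‖ : ℂ)) ^ 2 = Ser κ c z * cj (Ser κ c z) := (Complex.mul_conj' _).symm
    rw [e2] at h
    push_cast at e1
    rw [map_mul, Complex.conj_conj] at e1
    linear_combination h + e1
  obtain ⟨c', hc'⟩ := fin_supp κ p hp0 c hc ε hid2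
  have hcc : c = c' := funext hc'
  subst hcc
  simp_rw [Ser_T] at hid2
  obtain ⟨ν, hν⟩ := prop_of_id κ p c' hp0 ε hid2
  have hsum : ∑ α ∈ p.support, c' α * cj (p α) = ν * (l2 p : ℝ) := by
    rw [l2, Complex.ofReal_sum, Finset.mul_sum]
    apply Finset.sum_congr rfl
    intro α _
    rw [hν, Finsupp.smul_apply, smul_eq_mul, mul_assoc, Complex.mul_conj']
    push_cast; ring
  have hl2 : 0 < l2 p := by
    obtain ⟨α, hα⟩ := Finsupp.support_nonempty_iff.2 hp0
    have h1 := coeff_le p α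
    have h2 : 0 < ‖p α‖ := norm_pos_iff.2 (Finsupp.mem_support_iff.1 hα)
    have h3 : 0 < ‖p α‖ ^ 2 := by positivity
    linarith
  rw [hsum] at him hpos
  rw [Complex.im_mul_ofReal] at him
  rw [Complex.re_mul_ofReal] at hpos
  have him0 : ν.im = 0 := by
    rcases mul_eq_zero.1 him with h | h
    · exact h
    · exact absurd h hl2.ne'
  obtain ⟨v, hv⟩ : ∃ v, trueHermitePoly κ p v ≠ 0 := by
    by_contra! hcon
    exact hp0 (T_zero κ p hcon)
  have h1 := hid v
  rw [Ser_T, hν, T_smul] at h1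
  set P := trueHermitePoly κ p v
  have hP : 0 < ‖P‖ ^ 2 := by have := norm_pos_iff.2 hv; positivity
  have e3 : (ν * P * cj P).re = ν.re * ‖P‖ ^ 2 := by
    rw [mul_assoc, Complex.mul_conj', ← Complex.ofReal_pow, Complex.re_mul_ofReal]
  have e4 : ‖ν * P‖ ^ 2 = ν.re ^ 2 * ‖P‖ ^ 2 := by
    rw [norm_mul, mul_pow, ← Complex.normSq_eq_norm_sq ν, Complex.normSq_apply, him0]; ring
  rw [e3, e4] at h1
  have h2 : ν.re * (2 + ε * ν.re) = 0 := by
    have : (ν.re * (2 + ε * ν.re)) * ‖P‖ ^ 2 = 0 := by linear_combination h1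
    rcases mul_eq_zero.1 this with h | h
    · exact h
    · exact absurd h hP.ne'
  have hν0 : ν = 0 := by
    rcases mul_eq_zero.1 h2 with h | h
    · exact Complex.ext h him0
    · exfalso
      have : l2 p + ε * (ν.re * l2 p) = - l2 p := by linear_combination l2 p * h
      linarith
  intro α
  rw [hν, hν0]; simp




lemma Ser_cont {d : ℕ} (κ : Fin d → ℕ) (c : (Fin d → ℕ) → ℂ) (hc : ∀ α, ‖c α‖ ≤ 1) : Continuous (Ser κ c) := by
  rw [continuous_iff_continuousAt]
  intro z
  have h1 : ContinuousOn (Ser κ c) (Metric.ball 0 (1 + ‖z‖)) := by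
    have hρ : 1 ≤ 1 + ‖z‖ := by linarith [norm_nonneg z]
    apply continuousOn_tsum (u := fun α => Bb κ (1 + ‖z‖) α) _ (Bb_summable1 κ _ hρ)
    · intro α y hy
      rw [norm_mul]
      have h2 := Phi_bound κ α y (1 + ‖z‖) hρ (fun q => by
        have := norm_le_pi_norm y q
        have h3 := mem_ball_zero_iff.1 hy
        linarith)
      calc ‖c α‖ * ‖PhiBasis κ α y‖ ≤ 1 * Bb κ (1 + ‖z‖) α := by gcongr; exact hc α
        _ = _ := one_mul _
    · intro α
      have := Phi_cont κ α
      fun_prop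
  exact h1.continuousAt (Metric.isOpen_ball.mem_nhds (by simp))

lemma Ser_tendsto {d : ℕ} (κ : Fin d → ℕ) (h : ℕ → (Fin d → ℕ) → ℂ) (c : (Fin d → ℕ) → ℂ) (hh : ∀ n α, ‖h n α‖ ≤ 1)
    (ht : ∀ α, Filter.Tendsto (fun n => h n α) Filter.atTop (nhds (c α))) (z : Fin d → ℂ) :
    Filter.Tendsto (fun n => Ser κ (h n) z) Filter.atTop (nhds (Ser κ c z)) := by
  have hρ : 1 ≤ 1 + ‖z‖ := by linarith [norm_nonneg z]
  apply tendsto_tsum_of_dominated_convergence (bound := fun α => Bb κ (1 + ‖z‖) α) (Bb_summable1 κ _ hρ)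
  · intro α
    exact (ht α).mul_const _
  · refine Filter.Eventually.of_forall (fun n α => ?_)
    rw [norm_mul]
    have h2 := Phi_bound κ α z (1 + ‖z‖) hρ (fun q => by
        have := norm_le_pi_norm z q
        linarith)
    calc ‖h n α‖ * ‖PhiBasis κ α z‖ ≤ 1 * Bb κ (1 + ‖z‖) α := by gcongr; exact hh n α
      _ = _ := one_mul _

/-- squared distance of moduli -/
noncomputable def Dd {d : ℕ} (κ : Fin d → ℕ) (p h : (Fin d → ℕ) →₀ ℂ) : ℝ :=
  ∫ z, (‖trueHermitePoly κ p z + trueHermitePoly κ h z‖ - ‖trueHermitePoly κ p z‖)^2 ∂(gam d)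

lemma Dd_nonneg {d : ℕ} (κ : Fin d → ℕ) (p h : (Fin d → ℕ) →₀ ℂ) : 0 ≤ Dd κ p h :=
  integral_nonneg (fun z => by positivity)

lemma Dd_integrable {d : ℕ} (κ : Fin d → ℕ) (p h : (Fin d → ℕ) →₀ ℂ) :
    Integrable (fun z => (‖trueHermitePoly κ p z + trueHermitePoly κ h z‖ - ‖trueHermitePoly κ p z‖)^2) (gam d) := by
  have cT := T_cont κ h
  have cP := T_cont κ p
  refine (T_integrable κ h).mono' (by fun_prop : Continuous _).aestronglyMeasurable (Filter.Eventually.of_forall ?_)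
  intro z
  rw [Real.norm_eq_abs, abs_of_nonneg (by positivity)]
  have := abs_norm_sub_norm_le (trueHermitePoly κ p z + trueHermitePoly κ h z) (trueHermitePoly κ p z)
  rw [add_sub_cancel_left] at this
  exact sq_le_sq' (by linarith [abs_le.1 this]) (abs_le.1 this).2

lemma eps_bound {d : ℕ} (κ : Fin d → ℕ) (p h : (Fin d → ℕ) →₀ ℂ) : l2 h ≤ 2 * Dd κ p h + 8 * l2 p := by
  rw [← T_norm κ h, ← T_norm κ p, Dd, ← integral_const_mul, ← integral_const_mul,
    ← integral_add ((Dd_integrable κ p h).const_mul _) ((T_integrable κ p).const_mul _)]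
  apply integral_mono (T_integrable κ h) (((Dd_integrable κ p h).const_mul _).add ((T_integrable κ p).const_mul _))
  intro z
  simp only
  set P := trueHermitePoly κ p z
  set H := trueHermitePoly κ h z
  have h1 : ‖H‖ ≤ (‖P + H‖ - ‖P‖) + 2 * ‖P‖ := by
    have := norm_sub_le (P + H) P
    rw [add_sub_cancel_left] at this
    linarith
  have h2 : ‖H‖^2 ≤ ((‖P + H‖ - ‖P‖) + 2 * ‖P‖)^2 := by gcongr
  show ‖H‖^2 ≤ 2 * (‖P + H‖ - ‖P‖)^2 + 8 * ‖P‖^2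
  nlinarith [sq_nonneg ((‖P + H‖ - ‖P‖) - 2 * ‖P‖)]

lemma Afun_bound {d : ℕ} (κ : Fin d → ℕ) (p h : (Fin d → ℕ) →₀ ℂ) (n : ℕ)
    (hD : ((n:ℝ)+2)^2 * Dd κ p h < l2 h) :
    ∫ z, |2 * (trueHermitePoly κ h z / (Real.sqrt (l2 h)) * cj (trueHermitePoly κ p z)).re
       + Real.sqrt (l2 h) * ‖trueHermitePoly κ h z / (Real.sqrt (l2 h))‖^2| ∂(gam d)
     ≤ (l2 p + 1 + Real.sqrt (l2 h)) / ((n:ℝ)+2) := by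
  set ε := Real.sqrt (l2 h) with hε
  have hD0 := Dd_nonneg κ p h
  have hl : 0 < l2 h := lt_of_le_of_lt (by positivity) hD
  have hε0 : 0 < ε := Real.sqrt_pos.2 hl
  have hεs : ε^2 = l2 h := Real.sq_sqrt hl.le
  set N : ℝ := (n:ℝ)+2 with hN
  have hN0 : 0 < N := by positivity
  have hN1 : 1 ≤ N := by rw [hN]; linarith [(Nat.cast_nonneg n : (0:ℝ) ≤ n)]
  have cT := T_cont κ h
  have cP := T_cont κ p
  have pt : ∀ z, |2 * (trueHermitePoly κ h z / ε * cj (trueHermitePoly κ p z)).re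
       + ε * ‖trueHermitePoly κ h z / ε‖^2| ≤ N⁻¹ * ‖trueHermitePoly κ p z‖^2 + (N / ε^2 + ε⁻¹) *
        (‖trueHermitePoly κ p z + trueHermitePoly κ h z‖ - ‖trueHermitePoly κ p z‖)^2 := by
    intro z
    set P := trueHermitePoly κ p z
    set H := trueHermitePoly κ h z
    have e1 : 2 * (H / ε * cj P).re + ε * ‖H / ε‖^2 = ε⁻¹ * (‖P + H‖^2 - ‖P‖^2) := by
      have : ‖P + H‖^2 = ‖P‖^2 + 2 * (H * cj P).re + ‖H‖^2 := by
        rw [← Complex.normSq_eq_norm_sq, ← Complex.normSq_eq_norm_sq, ← Complex.normSq_eq_norm_sq, Complex.normSq_add]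
        have : (P * cj H).re = (H * cj P).re := by simp; ring
        rw [this]; ring
      rw [this, norm_div, Complex.norm_real, Real.norm_eq_abs, abs_of_pos hε0, div_mul_eq_mul_div, Complex.div_ofReal_re]
      field_simp
      ring
    rw [e1, abs_mul, abs_of_pos (inv_pos.2 hε0)]
    set g := ‖P + H‖ - ‖P‖ with hg
    have e2 : ‖P + H‖^2 - ‖P‖^2 = 2 * ‖P‖ * g + g^2 := by rw [hg]; ring
    rw [e2]
    have h1 : |2 * ‖P‖ * g + g^2| ≤ 2 * ‖P‖ * |g| + g^2 := by
      refine (abs_add_le _ _).trans ?_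
      rw [abs_mul, abs_of_nonneg (by positivity : 0 ≤ 2 * ‖P‖), abs_of_nonneg (sq_nonneg g)]
    have h2 : ε⁻¹ * (2 * ‖P‖ * |g|) ≤ N⁻¹ * ‖P‖^2 + N / ε^2 * g^2 := by
      have h3 : 0 ≤ N⁻¹ * (‖P‖ - N / ε * |g|)^2 := by positivity
      have h4 : N⁻¹ * (‖P‖ - N / ε * |g|)^2 = N⁻¹ * ‖P‖^2 + N / ε^2 * g^2 - ε⁻¹ * (2 * ‖P‖ * |g|) := by
        rw [← sq_abs g]; field_simp; ring
      linarith
    calc ε⁻¹ * |2 * ‖P‖ * g + g^2| ≤ ε⁻¹ * (2 * ‖P‖ * |g| + g^2) := by gcongr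
      _ ≤ _ := by rw [mul_add]; linarith
  have hint : Integrable (fun z => N⁻¹ * ‖trueHermitePoly κ p z‖^2 + (N / ε^2 + ε⁻¹) *
        (‖trueHermitePoly κ p z + trueHermitePoly κ h z‖ - ‖trueHermitePoly κ p z‖)^2) (gam d) :=
    ((T_integrable κ p).const_mul _).add ((Dd_integrable κ p h).const_mul _)
  calc _ ≤ ∫ z, (N⁻¹ * ‖trueHermitePoly κ p z‖^2 + (N / ε^2 + ε⁻¹) *
        (‖trueHermitePoly κ p z + trueHermitePoly κ h z‖ - ‖trueHermitePoly κ p z‖)^2) ∂(gam d) := by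
        apply integral_mono_of_nonneg (Filter.Eventually.of_forall (fun z => abs_nonneg _)) hint
        exact Filter.Eventually.of_forall pt
    _ = N⁻¹ * l2 p + (N / ε^2 + ε⁻¹) * Dd κ p h := by
        rw [integral_add ((T_integrable κ p).const_mul _) ((Dd_integrable κ p h).const_mul _), integral_const_mul,
          integral_const_mul, T_norm, Dd]
    _ ≤ N⁻¹ * l2 p + (N / ε^2 + ε⁻¹) * (ε^2 / N^2) := by
        gcongr
        rw [le_div_iff₀ (by positivity), hεs]; linarith
    _ = (l2 p + 1 + ε / N) / N := by field_simp; ring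
    _ ≤ _ := by
        gcongr
        exact div_le_self hε0.le hN1




lemma Afun_integrable {d : ℕ} (κ : Fin d → ℕ) (p h : (Fin d → ℕ) →₀ ℂ) (ε : ℝ) (hε : 0 ≤ ε) :
    Integrable (fun z => 2 * (trueHermitePoly κ h z * cj (trueHermitePoly κ p z)).re
       + ε * ‖trueHermitePoly κ h z‖^2) (gam d) := by
  have cT := T_cont κ h
  have cP := T_cont κ p
  have c1 : Continuous (fun z => cj (trueHermitePoly κ p z)) := Complex.continuous_conj.comp cP
  have c2 : Continuous (fun z => (trueHermitePoly κ h z * cj (trueHermitePoly κ p z)).re) :=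
    Complex.continuous_re.comp (cT.mul c1)
  refine (((T_integrable κ h).add (T_integrable κ p)).add ((T_integrable κ h).const_mul ε)).mono'
    (by fun_prop : Continuous _).aestronglyMeasurable (Filter.Eventually.of_forall ?_)
  intro z
  have h1 : |(trueHermitePoly κ h z * cj (trueHermitePoly κ p z)).re| ≤ ‖trueHermitePoly κ h z‖ * ‖trueHermitePoly κ p z‖ := by
    refine (Complex.abs_re_le_norm _).trans ?_
    rw [norm_mul, RCLike.norm_conj]
  rw [Real.norm_eq_abs]
  refine (abs_add_le _ _).trans ?_
  rw [abs_mul, abs_of_nonneg (by positivity : 0 ≤ ε * ‖trueHermitePoly κ h z‖^2), abs_two]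
  show _ ≤ ‖trueHermitePoly κ h z‖^2 + ‖trueHermitePoly κ p z‖^2 + ε * ‖trueHermitePoly κ h z‖^2
  nlinarith [sq_nonneg (‖trueHermitePoly κ h z‖ - ‖trueHermitePoly κ p z‖)]

lemma fatou_zero {X : Type*} [MeasurableSpace X] (μ : Measure X) (f : ℕ → X → ℝ) (A : X → ℝ)
    (hf : ∀ n, Integrable (f n) μ) (hA : AEStronglyMeasurable A μ)
    (ht : ∀ x, Filter.Tendsto (fun n => f n x) Filter.atTop (nhds (A x)))
    (h0 : Filter.Tendsto (fun n => ∫ x, |f n x| ∂μ) Filter.atTop (nhds 0)) : A =ᵐ[μ] 0 := by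
  have h1 : ∫⁻ x, ‖A x‖ₑ ∂μ ≤ Filter.atTop.liminf (fun n => ∫⁻ x, ‖f n x‖ₑ ∂μ) :=
    (lintegral_congr_ae (Filter.Eventually.of_forall (fun x => (ht x).enorm.liminf_eq.symm))).trans_le
      (MeasureTheory.lintegral_liminf_le' (fun n => (hf n).1.enorm))
  have h2 : Filter.Tendsto (fun n => ∫⁻ x, ‖f n x‖ₑ ∂μ) Filter.atTop (nhds 0) := by
    have : (fun n => ∫⁻ x, ‖f n x‖ₑ ∂μ) = fun n => ENNReal.ofReal (∫ x, |f n x| ∂μ) := by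
      funext n
      exact (ofReal_integral_norm_eq_lintegral_enorm (hf n)).symm
    rw [this]
    simpa using ENNReal.tendsto_ofReal h0
  rw [h2.liminf_eq] at h1
  have h3 := (lintegral_eq_zero_iff' hA.enorm).1 (le_antisymm h1 bot_le)
  filter_upwards [h3] with x hx
  simpa using hx

lemma partE1 {d : ℕ} (κ : Fin d → ℕ) (p : (Fin d → ℕ) →₀ ℂ) (hp : p ≠ 0) (e : ℕ → (Fin d → ℕ) →₀ ℂ)
    (hD : ∀ n : ℕ, ((n:ℝ)+2)^2 * Dd κ p (e n) < l2 (e n))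
    (him : ∀ n, (∑ α ∈ p.support, e n α * cj (p α)).im = 0)
    (hpos : ∀ n, 0 ≤ l2 p + (∑ α ∈ p.support, e n α * cj (p α)).re) : False := by
  have hl : ∀ n, 0 < l2 (e n) := fun n => lt_of_le_of_lt (mul_nonneg (by positivity) (Dd_nonneg _ _ _)) (hD n)
  set ε : ℕ → ℝ := fun n => Real.sqrt (l2 (e n)) with hε
  have hε0 : ∀ n, 0 < ε n := fun n => Real.sqrt_pos.2 (hl n)
  have hεs : ∀ n, ε n^2 = l2 (e n) := fun n => Real.sq_sqrt (hl n).le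
  have hεC : ∀ n, (ε n : ℂ) ≠ 0 := fun n => by exact_mod_cast (hε0 n).ne'
  have hp0 := l2_nonneg p
  have hεb : ∀ n, ε n ≤ 4 * Real.sqrt (l2 p) := by
    intro n
    have h1 := eps_bound κ p (e n)
    have h2 := hD n
    have h3 := Dd_nonneg κ p (e n)
    have h4 : 4 * Dd κ p (e n) ≤ ((n:ℝ)+2)^2 * Dd κ p (e n) := by
      gcongr
      nlinarith [(Nat.cast_nonneg n : (0:ℝ) ≤ n)]
    have h5 : ε n ^2 ≤ (4 * Real.sqrt (l2 p))^2 := by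
      rw [hεs, mul_pow, Real.sq_sqrt hp0]; linarith
    exact le_of_sq_le_sq h5 (by positivity)
  set h : ℕ → (Fin d → ℕ) →₀ ℂ := fun n => ((ε n : ℂ)⁻¹) • e n with hh
  have hha : ∀ n α, h n α = (ε n : ℂ)⁻¹ * e n α := fun n α => rfl
  have hhn : ∀ n α, ‖h n α‖ ≤ 1 := by
    intro n α
    rw [hha, norm_mul, norm_inv, Complex.norm_real, Real.norm_eq_abs, abs_of_pos (hε0 n), inv_mul_le_iff₀ (hε0 n), mul_one]
    apply Real.le_sqrt_of_sq_le
    exact coeff_le _ _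
  have K : IsCompact ((Set.Icc (0:ℝ) (4 * Real.sqrt (l2 p))) ×ˢ
      (Set.pi Set.univ (fun _ : Fin d → ℕ => Metric.closedBall (0:ℂ) 1))) :=
    isCompact_Icc.prod (isCompact_univ_pi (fun _ => isCompact_closedBall _ _))
  obtain ⟨⟨ε', c⟩, hmem, φ, hφ, hlim⟩ := K.tendsto_subseq (x := fun n => (ε n, (h n : (Fin d → ℕ) → ℂ))) (by
    intro n
    refine ⟨⟨(hε0 n).le, hεb n⟩, ?_⟩
    intro α _
    simpa using hhn n α)
  have hε'0 : 0 ≤ ε' := hmem.1.1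
  have hc : ∀ α, ‖c α‖ ≤ 1 := fun α => by simpa using hmem.2 α trivial
  have tε : Filter.Tendsto (fun n => ε (φ n)) Filter.atTop (nhds ε') := (continuous_fst.tendsto _).comp hlim
  have th0 : Filter.Tendsto (fun n => (h (φ n) : (Fin d → ℕ) → ℂ)) Filter.atTop (nhds c) := (continuous_snd.tendsto _).comp hlim
  have th : ∀ α, Filter.Tendsto (fun n => h (φ n) α) Filter.atTop (nhds (c α)) := tendsto_pi_nhds.1 th0
  have tφ := hφ.tendsto_atTop
  have tinv : Filter.Tendsto (fun n => ((φ n : ℝ) + 2)⁻¹) Filter.atTop (nhds 0) :=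
    (Filter.tendsto_atTop_add_const_right _ _ (tendsto_natCast_atTop_atTop.comp tφ)).inv_tendsto_atTop
  -- nontrivial limit
  have hne : ¬ ∀ α, c α = 0 := by
    intro h0
    obtain ⟨C, A, hC, hCA⟩ := partD κ p
    have k1 : ∀ n : ℕ, 1 ≤ C * ((n:ℝ)+2)⁻¹^2 + C * ∑ α ∈ A, ‖h n α‖^2 := by
      intro n
      have k2 := hCA (e n)
      change l2 (e n) ≤ C * Dd κ p (e n) + _ at k2
      have k3 := hD n
      have k4 : Dd κ p (e n) ≤ ((n:ℝ)+2)⁻¹^2 * ε n ^2 := by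
        rw [hεs, inv_pow, le_inv_mul_iff₀ (by positivity)]; exact k3.le
      have k5 : ∑ α ∈ A, ‖e n α‖^2 = ε n^2 * ∑ α ∈ A, ‖h n α‖^2 := by
        rw [Finset.mul_sum]
        refine Finset.sum_congr rfl (fun α _ => ?_)
        rw [hha, norm_mul, norm_inv, Complex.norm_real, Real.norm_eq_abs, abs_of_pos (hε0 n)]
        have := (hε0 n).ne'
        field_simp
      have k6 := hε0 n
      rw [k5, ← hεs n] at k2
      have k7 : ε n^2 * 1 ≤ ε n^2 * (C * ((n:ℝ)+2)⁻¹^2 + C * ∑ α ∈ A, ‖h n α‖^2) := by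
        have := mul_le_mul_of_nonneg_left k4 hC
        linarith
      exact le_of_mul_le_mul_left k7 (by positivity)
    have k8 : Filter.Tendsto (fun n => C * ((φ n:ℝ)+2)⁻¹^2 + C * ∑ α ∈ A, ‖h (φ n) α‖^2) Filter.atTop
        (nhds (C * 0^2 + C * ∑ α ∈ A, ‖c α‖^2)) :=
      ((tinv.pow 2).const_mul C).add ((tendsto_finsetSum _ (fun α _ => ((th α).norm).pow 2)).const_mul C)
    have k9 := ge_of_tendsto' k8 (fun n => k1 (φ n))
    simp [h0] at k9
    linarith
  apply hne
  have hSer : ∀ n z, trueHermitePoly κ (h n) z = trueHermitePoly κ (e n) z / ε n := by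
    intro n z
    rw [hh]
    simp only
    rw [T_smul]
    rw [inv_mul_eq_div]
  have cS := Ser_cont κ c hc
  have cP := T_cont κ p
  have c1 : Continuous (fun z => cj (trueHermitePoly κ p z)) := Complex.continuous_conj.comp cP
  have cA : Continuous (fun z => 2 * (Ser κ c z * cj (trueHermitePoly κ p z)).re + ε' * ‖Ser κ c z‖^2) := by
    have c2 : Continuous (fun z => (Ser κ c z * cj (trueHermitePoly κ p z)).re) :=
      Complex.continuous_re.comp (cS.mul c1)
    fun_prop
  have tS : ∀ z, Filter.Tendsto (fun n => trueHermitePoly κ (h (φ n)) z) Filter.atTop (nhds (Ser κ c z)) := by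
    intro z
    have := Ser_tendsto κ (fun n => (h (φ n) : (Fin d → ℕ) → ℂ)) c (fun n α => hhn _ _) th z
    simpa only [Ser_T] using this
  have hAE := fatou_zero (gam d) (fun n z => 2 * (trueHermitePoly κ (h (φ n)) z * cj (trueHermitePoly κ p z)).re
       + ε (φ n) * ‖trueHermitePoly κ (h (φ n)) z‖^2) _ (fun n => Afun_integrable κ p _ _ (hε0 _).le)
      cA.aestronglyMeasurable (by
        intro z
        exact ((Complex.continuous_re.tendsto _).comp ((tS z).mul_const _)).const_mul 2 |>.add (tε.mul ((tS z).norm.pow 2))) (by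
        have u1 : Filter.Tendsto (fun n => (l2 p + 1 + ε (φ n)) * ((φ n : ℝ) + 2)⁻¹) Filter.atTop (nhds ((l2 p + 1 + ε') * 0)) :=
          (tε.const_add _).mul tinv
        rw [mul_zero] at u1
        refine squeeze_zero (fun n => integral_nonneg (fun z => abs_nonneg _)) (fun n => ?_) u1
        have := Afun_bound κ p (e (φ n)) (φ n) (hD _)
        simp only [hSer]
        rw [← div_eq_mul_inv]
        exact this)
  have hall := Continuous.ae_eq_iff_eq volume cA (continuous_const : Continuous (fun _ : Fin d → ℂ => (0:ℝ))) |>.1 ((ac_gam d).ae_eq hAE)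
  have tsum : Filter.Tendsto (fun n => ∑ α ∈ p.support, h (φ n) α * cj (p α)) Filter.atTop (nhds (∑ α ∈ p.support, c α * cj (p α))) :=
    tendsto_finsetSum _ (fun α _ => (th α).mul_const _)
  have hs : ∀ n, ∑ α ∈ p.support, e n α * cj (p α) = (ε n : ℂ) * ∑ α ∈ p.support, h n α * cj (p α) := by
    intro n
    rw [Finset.mul_sum]
    refine Finset.sum_congr rfl (fun α _ => ?_)
    rw [hha]
    have := hεC n
    field_simp
  refine partF κ p hp c hc ε' (fun z => congrFun hall z) ?_ ?_
  · have t1 := (Complex.continuous_im.tendsto _).comp tsum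
    refine tendsto_nhds_unique t1 ?_
    have : ∀ n, (∑ α ∈ p.support, h n α * cj (p α)).im = 0 := by
      intro n
      have := him n
      rw [hs, Complex.im_ofReal_mul] at this
      exact (mul_eq_zero.1 this).resolve_left (hε0 n).ne'
    have h2 : (Complex.im ∘ fun n => ∑ α ∈ p.support, h (φ n) α * cj (p α)) = fun _ => 0 := funext (fun n => this (φ n))
    rw [h2]
    exact tendsto_const_nhds
  · have t1 := (tε.mul ((Complex.continuous_re.tendsto _).comp tsum)).const_add (l2 p)
    refine ge_of_tendsto' t1 (fun n => ?_)
    have := hpos (φ n)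
    rw [hs, Complex.re_ofReal_mul] at this
    exact this




lemma exists_phase (w : ℂ) : ∃ θ : ℂ, ‖θ‖ = 1 ∧ cj θ * w = (‖w‖ : ℂ) := by
  by_cases hw : w = 0
  · exact ⟨1, by simp, by simp [hw]⟩
  · have h0 : ‖w‖ ≠ 0 := norm_ne_zero_iff.2 hw
    have h1 : (‖w‖ : ℂ) ≠ 0 := by exact_mod_cast h0
    refine ⟨w / ‖w‖, ?_, ?_⟩
    · rw [norm_div, Complex.norm_real, norm_norm, div_self h0]
    · rw [map_div₀, Complex.conj_ofReal, div_mul_eq_mul_div, mul_comm, Complex.mul_conj, Complex.normSq_eq_norm_sq]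
      push_cast
      field_simp

lemma partE {d : ℕ} (κ : Fin d → ℕ) (p : (Fin d → ℕ) →₀ ℂ) (hp : p ≠ 0) : ∃ M : ℝ, 0 < M ∧ ∀ G : (Fin d → ℕ) →₀ ℂ,
    ∃ θ : ℂ, ‖θ‖ = 1 ∧ Real.sqrt (∫ z, ‖trueHermitePoly κ G z - θ * trueHermitePoly κ p z‖^2 ∂(gam d))
      ≤ M * Real.sqrt (∫ z, (‖trueHermitePoly κ G z‖ - ‖trueHermitePoly κ p z‖)^2 ∂(gam d)) := by
  by_contra hcon
  push Not at hcon
  choose G hG using fun n : ℕ => hcon ((n:ℝ)+2) (by positivity)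
  choose θ hθ hθw using fun n : ℕ => exists_phase (∑ α ∈ p.support, G n α * cj (p α))
  have hs : ∀ n, ∑ α ∈ p.support, (cj (θ n) • G n - p) α * cj (p α)
      = ((‖∑ α ∈ p.support, G n α * cj (p α)‖ - l2 p : ℝ) : ℂ) := by
    intro n
    rw [Complex.ofReal_sub, ← hθw, Finset.mul_sum, l2, Complex.ofReal_sum, ← Finset.sum_sub_distrib]
    refine Finset.sum_congr rfl (fun α _ => ?_)
    rw [Finsupp.sub_apply, Finsupp.smul_apply, smul_eq_mul, sub_mul, Complex.mul_conj, Complex.normSq_eq_norm_sq]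
    ring
  have hcc : ∀ n, cj (θ n) * θ n = 1 := by
    intro n
    rw [mul_comm, Complex.mul_conj, Complex.normSq_eq_norm_sq, hθ]; simp
  refine partE1 κ p hp (fun n => cj (θ n) • G n - p) ?_ ?_ ?_
  · intro n
    have h1 := hG n (θ n) (hθ n)
    have e1 : l2 (cj (θ n) • G n - p) = ∫ z, ‖trueHermitePoly κ (G n) z - θ n * trueHermitePoly κ p z‖^2 ∂(gam d) := by
      rw [← T_norm κ]
      congr 1
      funext z
      rw [T_sub, T_smul]
      have : cj (θ n) * trueHermitePoly κ (G n) z - trueHermitePoly κ p z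
         = cj (θ n) * (trueHermitePoly κ (G n) z - θ n * trueHermitePoly κ p z) := by
        rw [mul_sub, ← mul_assoc, hcc, one_mul]
      rw [this, norm_mul, RCLike.norm_conj, hθ, one_mul]
    have e2 : Dd κ p (cj (θ n) • G n - p) = ∫ z, (‖trueHermitePoly κ (G n) z‖ - ‖trueHermitePoly κ p z‖)^2 ∂(gam d) := by
      rw [Dd]
      congr 1
      funext z
      rw [T_sub, T_smul, add_sub_cancel, norm_mul, RCLike.norm_conj, hθ, one_mul]
    rw [← e1, ← e2] at h1
    have h2 := pow_lt_pow_left₀ h1 (by positivity) two_ne_zero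
    rwa [mul_pow, Real.sq_sqrt (Dd_nonneg _ _ _), Real.sq_sqrt (l2_nonneg _)] at h2
  · intro n
    rw [hs, Complex.ofReal_im]
  · intro n
    rw [hs, Complex.ofReal_re]
    linarith [norm_nonneg (∑ α ∈ p.support, G n α * cj (p α))]

lemma N_eq {X E : Type*} [MeasurableSpace X] [NormedAddCommGroup E] (μ : Measure X) (f : X → E) (hf : MemLp f 2 μ) :
    Real.sqrt (∫ x, ‖f x‖^2 ∂μ) = (eLpNorm f 2 μ).toReal := by
  rw [hf.eLpNorm_eq_integral_rpow_norm (by norm_num) (by norm_num)]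
  rw [ENNReal.toReal_ofReal (by positivity), Real.sqrt_eq_rpow]
  norm_num

lemma N_add {X E : Type*} [MeasurableSpace X] [NormedAddCommGroup E] (μ : Measure X) (f g h : X → E)
    (hf : MemLp f 2 μ) (hg : MemLp g 2 μ) (hh : ∀ x, h x = f x + g x) :
    Real.sqrt (∫ x, ‖h x‖^2 ∂μ) ≤ Real.sqrt (∫ x, ‖f x‖^2 ∂μ) + Real.sqrt (∫ x, ‖g x‖^2 ∂μ) := by
  have : h = f + g := funext hh
  subst this
  rw [N_eq μ _ hf, N_eq μ _ hg, N_eq μ _ (hf.add hg), ← ENNReal.toReal_add hf.2.ne hg.2.ne]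
  exact ENNReal.toReal_mono (ENNReal.add_ne_top.2 ⟨hf.2.ne, hg.2.ne⟩) (eLpNorm_add_le hf.1 hg.1 (by norm_num))

lemma meas_of_diffs {X : Type*} [MeasurableSpace X] (μ : Measure X) (F P : X → ℂ) (hP : AEMeasurable P μ)
    (hP0 : ∀ᵐ x ∂μ, P x ≠ 0) (hI : ∀ θ : ℂ, ‖θ‖ = 1 → Integrable (fun x => ‖F x - θ * P x‖^2) μ) :
    AEMeasurable F μ := by
  have h1 := (hI 1 (by simp)).aemeasurable
  have h2 := (hI (-1) (by simp)).aemeasurable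
  have h3 := (hI Complex.I (by simp)).aemeasurable
  have h4 := (hI (-Complex.I) (by simp)).aemeasurable
  have hre := (h2.sub h1)
  have him := (h4.sub h3)
  have hc : AEMeasurable (fun x => ((((‖F x - (-1) * P x‖^2 - ‖F x - 1 * P x‖^2 : ℝ) : ℂ)
     + ((‖F x - (-Complex.I) * P x‖^2 - ‖F x - Complex.I * P x‖^2 : ℝ) : ℂ) * Complex.I) / 4) / cj (P x)) μ := by
    refine AEMeasurable.div (AEMeasurable.div_const (AEMeasurable.add ?_ (AEMeasurable.mul_const ?_ _)) _) ?_
    · exact Complex.measurable_ofReal.comp_aemeasurable hre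
    · exact Complex.measurable_ofReal.comp_aemeasurable him
    · exact Complex.continuous_conj.measurable.comp_aemeasurable hP
  refine hc.congr ?_
  filter_upwards [hP0] with x hx
  have hx' : cj (P x) ≠ 0 := by simpa using hx
  rw [div_eq_iff hx', div_eq_iff (by norm_num)]
  simp only [← Complex.normSq_eq_norm_sq]
  apply Complex.ext <;> simp [Complex.normSq_apply] <;> ring

lemma final {d : ℕ} (κ : Fin d → ℕ) (P₀ : (Fin d → ℕ) →₀ ℂ) :
    ∃ M : ℝ, 0 < M ∧
      ∀ F : (Fin d → ℂ) → ℂ,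
        (∀ ε : ℝ, 0 < ε → ∃ G : (Fin d → ℕ) →₀ ℂ,
            gammaNormD d (fun z => F z - trueHermitePoly κ G z) < ε) →
        (⨅ θ : Metric.sphere (0 : ℂ) 1,
            gammaNormD d (fun z => F z - θ.1 * trueHermitePoly κ P₀ z))
          ≤ M * gammaNormD d (fun z => ‖F z‖ - ‖trueHermitePoly κ P₀ z‖) := by
  have hinf : ∀ (F : (Fin d → ℂ) → ℂ) (θ : ℂ), ‖θ‖ = 1 → (⨅ θ : Metric.sphere (0 : ℂ) 1,
            gammaNormD d (fun z => F z - θ.1 * trueHermitePoly κ P₀ z)) ≤ gammaNormD d (fun z => F z - θ * trueHermitePoly κ P₀ z) := by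
    intro F θ hθ
    exact ciInf_le (f := fun θ : Metric.sphere (0 : ℂ) 1 => gammaNormD d (fun z => F z - θ.1 * trueHermitePoly κ P₀ z))
      ⟨0, by rintro _ ⟨t, rfl⟩; exact Real.sqrt_nonneg _⟩ ⟨θ, by simpa using hθ⟩
  by_cases hp : P₀ = 0
  · refine ⟨1, one_pos, fun F _ => (hinf F 1 (by simp)).trans (le_of_eq ?_)⟩
    have hT : ∀ z, trueHermitePoly κ P₀ z = 0 := fun z => by rw [hp]; simp [T_eq]
    simp only [hT, gammaNormD, norm_zero, sub_zero, mul_zero, norm_norm, one_mul]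
  obtain ⟨M, hM, hE⟩ := partE κ P₀ hp
  refine ⟨M, hM, fun F hF => ?_⟩
  by_cases hI : ∀ θ : ℂ, ‖θ‖ = 1 → Integrable (fun z => ‖F z - θ * trueHermitePoly κ P₀ z‖^2) (gam d)
  swap
  · push Not at hI
    obtain ⟨θ, hθ, hn⟩ := hI
    refine (hinf F θ hθ).trans ?_
    rw [gammaNormD_eq, integral_undef hn, Real.sqrt_zero]
    exact mul_nonneg hM.le (Real.sqrt_nonneg _)
  have cP := T_cont κ P₀
  have mP := T_memLp κ P₀
  have hmeas := (meas_of_diffs (gam d) F _ cP.measurable.aemeasurable ((gam_ac d).ae_le (T_ne_ae κ P₀ hp)) hI).aestronglyMeasurable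
  have mF : MemLp F 2 (gam d) := by
    have h1 : MemLp (fun z => F z - trueHermitePoly κ P₀ z) 2 (gam d) := by
      refine (memLp_two_iff_integrable_sq_norm (hmeas.sub cP.aestronglyMeasurable)).2 ?_
      simpa using hI 1 (by simp)
    have h2 := h1.add mP
    refine h2.congr_norm hmeas (Filter.Eventually.of_forall (fun z => ?_))
    simp
  apply le_of_forall_pos_le_add
  intro ε hε
  obtain ⟨G, hG⟩ := hF (ε / (1 + M)) (by positivity)
  obtain ⟨θ, hθ, hθG⟩ := hE G
  have mG := T_memLp κ G
  refine (hinf F θ hθ).trans ?_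
  rw [gammaNormD_eq] at hG ⊢
  rw [gammaNormD_eq]
  have t1 := N_add (gam d) (fun z => F z - trueHermitePoly κ G z) (fun z => trueHermitePoly κ G z - θ * trueHermitePoly κ P₀ z)
    (fun z => F z - θ * trueHermitePoly κ P₀ z) (mF.sub mG) (mG.sub (mP.const_mul θ)) (fun z => by ring)
  have t2 := N_add (gam d) (fun z => ‖trueHermitePoly κ G z‖ - ‖F z‖) (fun z => ‖F z‖ - ‖trueHermitePoly κ P₀ z‖)
    (fun z => ‖trueHermitePoly κ G z‖ - ‖trueHermitePoly κ P₀ z‖) (mG.norm.sub mF.norm) (mF.norm.sub mP.norm) (fun z => by ring)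
  have t3 : Real.sqrt (∫ z, ‖‖trueHermitePoly κ G z‖ - ‖F z‖‖^2 ∂(gam d)) ≤ Real.sqrt (∫ z, ‖F z - trueHermitePoly κ G z‖^2 ∂(gam d)) := by
    apply Real.sqrt_le_sqrt
    refine integral_mono_of_nonneg (Filter.Eventually.of_forall (fun z => by positivity)) ((memLp_two_iff_integrable_sq_norm (mF.sub mG).1).1 (mF.sub mG)) (Filter.Eventually.of_forall (fun z => ?_))
    simp only
    gcongr
    rw [norm_sub_rev, Real.norm_eq_abs]
    exact abs_norm_sub_norm_le _ _
  have e1 : ∀ z, ‖‖trueHermitePoly κ G z‖ - ‖trueHermitePoly κ P₀ z‖‖^2 = (‖trueHermitePoly κ G z‖ - ‖trueHermitePoly κ P₀ z‖)^2 := by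
    intro z; rw [Real.norm_eq_abs, sq_abs]
  simp only [e1] at t2
  have t4 := mul_le_mul_of_nonneg_left (t2.trans (add_le_add_left (t3.trans hG.le) _)) hM.le
  have t5 : ε / (1 + M) + M * (ε / (1 + M)) = ε := by field_simp
  linarith



end HPR

/-- **General stability for Hermite phase retrieval.** Fix `d ≥ 1` and a multi-index `κ`.
For every `P₀` in the finite span of the basis `Φ_{κ,α}` there is `M > 0` such that every
`F` in the `γ_d`-closure of that span satisfies
`inf_{|λ|=1} ‖F − λP₀‖_{γ_d} ≤ M ‖|F| − |P₀|‖_{γ_d}`. -/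
theorem stmt3 (d : ℕ) (hd : 1 ≤ d) (κ : Fin d → ℕ) (P₀ : (Fin d → ℕ) →₀ ℂ) :
    ∃ M : ℝ, 0 < M ∧
      ∀ F : (Fin d → ℂ) → ℂ,
        (∀ ε : ℝ, 0 < ε → ∃ G : (Fin d → ℕ) →₀ ℂ,
            gammaNormD d (fun z => F z - trueHermitePoly κ G z) < ε) →
        (⨅ θ : Metric.sphere (0 : ℂ) 1,
            gammaNormD d (fun z => F z - θ.1 * trueHermitePoly κ P₀ z))
          ≤ M * gammaNormD d (fun z => ‖F z‖ - ‖trueHermitePoly κ P₀ z‖) := by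
  exact HPR.final κ P₀
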